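/- Let (V,1,𝒮,Y) be a vertex F-algebra over a formal group law F over a commutative ring R. Then for all a,b ∈ V the Jacobi identity holds in V⟦z0^{±1},z1^{±1},z2^{±1}⟧: i_{z1,z0} z2^{-1}δ_F(F(z1,ι z0)/z2)·Y(Y(a,z0)b,z2) = i_{z1,z2} z0^{-1}δ_F(F(z1,ι z2)/z0)·Y(a,z1)Y(b,z2) − i_{z2,z1} z0^{-1}δ_F(F(z1,ι z2)/z0)·Y(b,z2)Y(a,z1), where i_{z1,z2} z0^{-1}δ_F(F(z1,ι z2)/z0) denotes the bilateral series obtained from z0^{-1}δ_F(w/z0) by substituting w^{±1} ↦ i_{z1,z2}F(z1,ι z2)^{±1} (expansion in R((z1))((z2))), and similarly for the other two expansions. -/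

import Mathlib

/-!
Coefficient-wise formal calculus for vertex `F`-algebras, following
M. Upmeier, "Vertex F-Algebras and Their Associated Lie Algebra".

Series in one, two or three variables are represented by their coefficient
functions `ℤ → R`, `ℤ → ℤ → R`, …; products are given by coefficient-wise
(finite) sums, expressed via `finsum` (`∑ᶠ`).
-/

open scoped BigOperators

noncomputable section

/-- Generalized binomial coefficient `C(n,k) = n(n-1)⋯(n-k+1)/k!` for `n : ℤ`, `k : ℕ`. -/
def zbinom (n : ℤ) (k : ℕ) : ℤ :=
  if 0 ≤ n then (n.toNat.choose k : ℤ)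
  else (-1 : ℤ) ^ k * (((k : ℤ) - n - 1).toNat.choose k : ℤ)

/-- `C(n,m)` for integer `m`, with `C(n,m) = 0` for `m < 0`. -/
def zbinomZ (n m : ℤ) : ℤ := if m < 0 then 0 else zbinom n m.toNat

/-- `(-1)^n` for `n : ℤ`. -/
def msign (n : ℤ) : ℤ := if Even n then 1 else -1

section Series

variable {R : Type*} [CommRing R] {M : Type*} [AddCommGroup M] [Module R M]

/-- Product of a one-variable series with `R`-coefficients with an `M`-valued one. -/
def mulS (f : ℤ → R) (g : ℤ → M) : ℤ → M := fun n => ∑ᶠ i : ℤ, f i • g (n - i)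

/-- The constant series `1` (one variable). -/
def oneS (R : Type*) [CommRing R] : ℤ → R := fun n => if n = 0 then 1 else 0

/-- Natural powers of a one-variable series. -/
def pow1 (f : ℤ → R) : ℕ → ℤ → R
  | 0 => oneS R
  | k + 1 => mulS f (pow1 f k)

/-- Product of two-variable series. -/
def mulS2 (f : ℤ → ℤ → R) (g : ℤ → ℤ → M) : ℤ → ℤ → M :=
  fun a b => ∑ᶠ p : ℤ × ℤ, f p.1 p.2 • g (a - p.1) (b - p.2)

/-- The constant series `1` (two variables). -/
def oneS2 (R : Type*) [CommRing R] : ℤ → ℤ → R := fun a b => if a = 0 ∧ b = 0 then 1 else 0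

/-- Natural powers of a two-variable series. -/
def pow2 (f : ℤ → ℤ → R) : ℕ → ℤ → ℤ → R
  | 0 => oneS2 R
  | k + 1 => mulS2 f (pow2 f k)

/-- `f ∈ M((z))`: only finitely many negative powers. -/
def IsLaurent (f : ℤ → M) : Prop := ∃ N : ℤ, ∀ n : ℤ, n < N → f n = 0

/-- `f ∈ M((z,w))`: only finitely many nonzero coefficients with some negative index. -/
def IsLaurent2 (f : ℤ → ℤ → M) : Prop :=
  {p : ℤ × ℤ | (p.1 < 0 ∨ p.2 < 0) ∧ f p.1 p.2 ≠ 0}.Finite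

/-- Formal derivative of a one-variable series. -/
def fderiv1 (f : ℤ → R) : ℤ → R := fun n => ((n + 1 : ℤ) : R) * f (n + 1)

/-- The polynomial `z - w` as a two-variable series. -/
def zmw (R : Type*) [CommRing R] : ℤ → ℤ → R :=
  fun i j => if i = 1 ∧ j = 0 then 1 else if i = 0 ∧ j = 1 then -1 else 0

/-- `∂/∂w` of a two-variable series. -/
def d01 (f : ℤ → ℤ → R) : ℤ → ℤ → R := fun i j => ((j + 1 : ℤ) : R) * f i (j + 1)

/-- `∂/∂z` of a two-variable series. -/
def d10 (f : ℤ → ℤ → R) : ℤ → ℤ → R := fun i j => ((i + 1 : ℤ) : R) * f (i + 1) j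

/-- Substitution `p(f(z,w))` of a two-variable series (zero constant term) into a
one-variable power series `p`. -/
def comp2 (p : ℤ → R) (f : ℤ → ℤ → R) : ℤ → ℤ → R :=
  fun a b => ∑ᶠ m : ℕ, p (m : ℤ) * pow2 f m a b

/-- Substitution `p(f(z))` of a one-variable series (zero constant term) into a
one-variable power series `p`. -/
def comp1 (p : ℤ → R) (f : ℤ → R) : ℤ → R :=
  fun a => ∑ᶠ m : ℕ, p (m : ℤ) * pow1 f m a

/-- `(G - z)/z` for `G ≡ z (mod w)`. -/
def hzS (G : ℤ → ℤ → R) : ℤ → ℤ → R := fun i j => G (i + 1) j - oneS2 R i j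

/-- Integer powers `i_{z,w} G^n`, for `G ≡ z (mod w)`, expanded in `R((z))⟦w⟧`:
the Newton expansion `z^n ∑_k C(n,k) ((G-z)/z)^k`. -/
def izwPow (G : ℤ → ℤ → R) (n : ℤ) : ℤ → ℤ → R :=
  fun a b => ∑ᶠ k : ℕ, (zbinom n k : R) * pow2 (hzS G) k (a - n) b

/-- `(G - w)/w` for `G ≡ w (mod z)`. -/
def hwS (G : ℤ → ℤ → R) : ℤ → ℤ → R := fun i j => G i (j + 1) - oneS2 R i j

/-- Integer powers `i_{w,z} G^n`, for `G ≡ w (mod z)`, expanded in `R((w))⟦z⟧`. -/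
def iwzPow (G : ℤ → ℤ → R) (n : ℤ) : ℤ → ℤ → R :=
  fun a b => ∑ᶠ k : ℕ, (zbinom n k : R) * pow2 (hwS G) k a (b - n)

/-- `(G + w)/(-w)` for `G ≡ ι(w) (mod z)`. -/
def hwNegS (G : ℤ → ℤ → R) : ℤ → ℤ → R := fun i j => -G i (j + 1) - oneS2 R i j

/-- Integer powers `i_{w,z} G^n`, for `G ≡ -w(1+⋯) (mod z)` (e.g. `G = F(z, ι w)`),
expanded in `R((w))⟦z⟧`. -/
def iwzPowNeg (G : ℤ → ℤ → R) (n : ℤ) : ℤ → ℤ → R :=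
  fun a b => (msign n : R) * ∑ᶠ k : ℕ, (zbinom n k : R) * pow2 (hwNegS G) k a (b - n)

/-- `(f + z)/(-z)` for a series `f = -z(1 + ⋯)` such as `ι(z)`. -/
def hS (f : ℤ → R) : ℤ → R := fun j => -f (j + 1) - oneS R j

/-- Integer powers `f(z)^n` (`n : ℤ`) for `f = -z(1+⋯)`, e.g. `f = ι(z)`. -/
def iotaPow (f : ℤ → R) (n : ℤ) : ℤ → R :=
  fun a => (msign n : R) * ∑ᶠ k : ℕ, (zbinom n k : R) * pow1 (hS f) k (a - n)

/-- `f - 1` for a power series with constant term `1`. -/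
def hOneS (f : ℤ → R) : ℤ → R := fun j => f j - oneS R j

/-- Multiplicative inverse of a power series with constant term `1`. -/
def invOne (f : ℤ → R) : ℤ → R :=
  fun a => ∑ᶠ k : ℕ, ((-1 : R) ^ k) * pow1 (hOneS f) k a

end Series

/-- A (one-dimensional, commutative) formal group law `F(z,w)` over `R`, together with
its (unique) inverse `ι`. -/
structure FormalGroupLaw (R : Type*) [CommRing R] where
  F : ℤ → ℤ → R
  F_supp : ∀ i j : ℤ, i < 0 ∨ j < 0 → F i j = 0
  /-- `F(z,0) = z`, so that `F(z,w) = z + w + O(zw)` using commutativity. -/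
  F_modw : ∀ i : ℤ, F i 0 = if i = 1 then 1 else 0
  F_comm : ∀ i j : ℤ, F i j = F j i
  /-- associativity `F(F(z,w),v) = F(z,F(w,v))`, coefficient-wise. -/
  F_assoc : ∀ a b c : ℤ,
    (∑ᶠ m : ℕ, F (m : ℤ) c * pow2 F m a b) = ∑ᶠ n : ℕ, F a (n : ℤ) * pow2 F n b c
  /-- the inverse `ι(z) = -z + O(z²)`. -/
  inv : ℤ → R
  inv_supp : ∀ n : ℤ, n < 1 → inv n = 0
  inv_one : inv 1 = -1
  /-- `F(z, ι(z)) = 0`, coefficient-wise. -/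
  inv_eq : ∀ n : ℤ, (∑ᶠ p : ℤ × ℕ, F p.1 (p.2 : ℤ) * pow1 inv p.2 (n - p.1)) = 0

namespace FormalGroupLaw

variable {R : Type*} [CommRing R] {M : Type*} [AddCommGroup M] [Module R M]

/-- The series `F(z, ι(w))`. -/
def Fzi (𝓕 : FormalGroupLaw R) : ℤ → ℤ → R :=
  fun i j => ∑ᶠ m : ℕ, 𝓕.F i (m : ℤ) * pow1 𝓕.inv m j

/-- The `F`-delta distribution `z⁻¹δ_F(w/z) = i_{z,w}F(z,ιw)⁻¹ - i_{w,z}F(z,ιw)⁻¹`. -/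
def delta (𝓕 : FormalGroupLaw R) : ℤ → ℤ → R :=
  fun a b => izwPow 𝓕.Fzi (-1) a b - iwzPowNeg 𝓕.Fzi (-1) a b

/-- `p_F(z) = F^{0,1}(z,0)⁻¹`, the coefficient series of the invariant 1-form. -/
def pF (𝓕 : FormalGroupLaw R) : ℤ → R := invOne (fun i => 𝓕.F i 1)

/-- `F`-residue: the coefficient of `z⁻¹` in `f(z)·p_F(z)`. -/
def resF (𝓕 : FormalGroupLaw R) (f : ℤ → M) : M := ∑ᶠ i : ℤ, 𝓕.pF i • f (-1 - i)

/-- The `F`-hyperderivative `𝒮^F_n f`, defined by `i_{z,w}f(F(z,w)) = ∑_n (𝒮^F_n f)(z) wⁿ`. -/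
def hyper (𝓕 : FormalGroupLaw R) (n : ℕ) (f : ℤ → R) : ℤ → R :=
  fun a => ∑ᶠ m : ℤ, f m * izwPow 𝓕.F m a (n : ℤ)

/-- `F`-binomial coefficients: `i_{z,w}F(z,w)^n = ∑_{i,j} binomF(n;i,j) z^i w^j`. -/
def binomF (𝓕 : FormalGroupLaw R) (n i j : ℤ) : R := izwPow 𝓕.F n i j

/-- `φ` is a logarithm of `F`: `φ(F(z,w)) = φ(z) + φ(w)`, `φ(0) = 0`, `φ'(0) = 1`. -/
def IsLogarithm (𝓕 : FormalGroupLaw R) (φ : ℤ → R) : Prop :=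
  (∀ n : ℤ, n < 0 → φ n = 0) ∧ φ 0 = 0 ∧ φ 1 = 1 ∧
  ∀ a b : ℤ, (∑ᶠ m : ℕ, φ (m : ℤ) * pow2 𝓕.F m a b)
    = (if b = 0 then φ a else 0) + (if a = 0 then φ b else 0)

end FormalGroupLaw

section Vertex

variable {R : Type*} [CommRing R] {V : Type*} [AddCommGroup V] [Module R V]

/-- For `c = ∑_m c_m v^m ∈ V((v))`, the substitution `v ↦ F(z,w)` (coefficient `(k,n)` of
`z^k w^n`, expanded in `V((z))⟦w⟧`). -/
def substF (𝓕 : FormalGroupLaw R) (c : ℤ → V) : ℤ → ℤ → V :=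
  fun k n => ∑ᶠ m : ℤ, izwPow 𝓕.F m k n • c m

/-- Coefficients of `i_{z,w} Y(a, F(z,w)) (Y(b,w)c)`, where `Ya v = Y(a,·)v` and
`d = Y(b,·)c`. -/
def substFProd (𝓕 : FormalGroupLaw R) (Ya : V → ℤ → V) (d : ℤ → V) : ℤ → ℤ → V :=
  fun k n => ∑ᶠ q : ℤ × ℤ, izwPow 𝓕.F q.1 k (n - q.2) • Ya (d q.2) q.1

end Vertex

/-- A vertex `F`-algebra `(V, 𝟙, 𝒮, Y)` over the formal group law `𝓕`.
`Y a b : ℤ → V` records the coefficients of `Y(a,z)b = ∑_k (Y a b k) z^k`, and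
`S n` is the component `𝒮⁽ⁿ⁾` of the `F`-shift operator `𝒮(z) = ∑_{n≥0} 𝒮⁽ⁿ⁾ zⁿ`. -/
structure VertexFAlgebra (R : Type*) [CommRing R] (𝓕 : FormalGroupLaw R)
    (V : Type*) [AddCommGroup V] [Module R V] where
  vac : V
  S : ℕ → V →ₗ[R] V
  Y : V →ₗ[R] V →ₗ[R] (ℤ → V)
  /-- `Y(a,z)b ∈ V((z))`. -/
  Y_laurent : ∀ a b : V, IsLaurent (Y a b)
  /-- `Y(a,z)𝟙` is holomorphic. -/
  vac_holo : ∀ (a : V) (k : ℤ), k < 0 → Y a vac k = 0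
  /-- `Y(a,z)𝟙|_{z=0} = a`. -/
  creation : ∀ a : V, Y a vac 0 = a
  /-- `Y(𝟙,z) = id`. -/
  Y_vac : ∀ (b : V) (k : ℤ), Y vac b k = if k = 0 then b else 0
  /-- `𝒮(0) = id`. -/
  S_zero : S 0 = LinearMap.id
  /-- `𝒮(z)𝟙 = 𝟙`. -/
  S_vac : ∀ n : ℕ, 1 ≤ n → S n vac = 0
  /-- `𝒮(z) ∘ 𝒮(w) = 𝒮(F(z,w))`, coefficient-wise. -/
  S_comp : ∀ (a : V) (i j : ℕ),
    S i (S j a) = ∑ᶠ m : ℕ, pow2 𝓕.F m (i : ℤ) (j : ℤ) • S m a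
  /-- `F`-translation covariance `Y(𝒮(w)a, z)b = i_{z,w} Y(a,F(z,w))b`. -/
  translation : ∀ (a b : V) (k : ℤ) (n : ℕ),
    Y (S n a) b k = substF 𝓕 (Y a b) k (n : ℤ)
  /-- weak `F`-associativity. -/
  weak_assoc : ∀ a b c : V, ∃ N : ℕ,
    mulS2 (pow2 𝓕.F N) (fun k l => Y (Y a b k) c l)
      = mulS2 (pow2 𝓕.F N) (substFProd 𝓕 (fun v => Y a v) (Y b c))
  /-- skew symmetry `Y(a,z)b = 𝒮(z)(Y(b,ι(z))a)`, coefficient-wise. -/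
  skew : ∀ (a b : V) (k : ℤ),
    Y a b k = ∑ᶠ q : ℕ × ℤ, iotaPow 𝓕.inv q.2 (k - (q.1 : ℤ)) • S q.1 (Y b a q.2)

end

section Conv

open Function

theorem smul_finsum_of_ne_zero {R M α : Type*} [CommRing R] [AddCommGroup M] [Module R M]
    (c : R) (f : α → M) (h : c ≠ 0 → f.HasFiniteSupport) :
    c • ∑ᶠ i, f i = ∑ᶠ i, c • f i := by
  by_cases hc : c = 0
  · simp [hc]
  · exact smul_finsum' c (h hc)

theorem finsum_smul_of_ne_zero {R M α : Type*} [CommRing R] [AddCommGroup M] [Module R M]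
    (f : α → R) (x : M) (h : x ≠ 0 → f.HasFiniteSupport) :
    (∑ᶠ i, f i) • x = ∑ᶠ i, f i • x := by
  by_cases hx : x = 0
  · simp [hx]
  · exact finsum_smul' (h hx) x

theorem finsum_finsum_eq {α β M : Type*} [AddCommMonoid M] (f : α → β → M)
    (h : {p : α × β | f p.1 p.2 ≠ 0}.Finite) :
    ∑ᶠ a, ∑ᶠ b, f a b = ∑ᶠ p : α × β, f p.1 p.2 :=
  (finsum_curry (fun p : α × β => f p.1 p.2) h).symm

theorem finsum_finsum_swap {α β M : Type*} [AddCommMonoid M] (f : α → β → M)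
    (h : {p : α × β | f p.1 p.2 ≠ 0}.Finite) :
    ∑ᶠ a, ∑ᶠ b, f a b = ∑ᶠ b, ∑ᶠ a, f a b := by
  rw [finsum_finsum_eq f h, finsum_finsum_eq (fun b a => f a b)]
  · exact (finsum_comp_equiv (Equiv.prodComm β α) (f := fun p : α × β => f p.1 p.2)).symm
  · exact (h.preimage (Equiv.prodComm β α).injective.injOn)

variable {R : Type*} [CommRing R] {M : Type*} [AddCommGroup M] [Module R M]
variable {G : Type*} [AddCommGroup G]

/-- Convolution product of bilateral series with exponents in `G`. -/
noncomputable def conv (f : G → R) (g : G → M) : G → M := fun e => ∑ᶠ p, f p • g (e - p)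

open Classical in
/-- The monomial with exponent `v`. -/
noncomputable def mono (R : Type*) [CommRing R] (v : G) : G → R := fun p => if p = v then 1 else 0

theorem mono_ne {G : Type*} (v p : G) (h : p ≠ v) : mono R v p = 0 := by simp [mono, h]

theorem conv_mono (v : G) (g : G → M) (e : G) : conv (mono R v) g e = g (e - v) := by
  unfold conv
  rw [finsum_eq_single _ v]
  · simp [mono]
  · intro x hx; simp [mono, hx]

theorem conv_comm (f g : G → R) : conv f g = conv g f := by
  funext e
  unfold conv
  rw [← finsum_comp_equiv (Equiv.subLeft e)]
  simp [mul_comm]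

theorem conv_assoc_apply (f g : G → R) (h : G → M) (e : G)
    (hfin : {q : G × G | f q.1 ≠ 0 ∧ g q.2 ≠ 0 ∧ h (e - q.1 - q.2) ≠ 0}.Finite) :
    conv f (conv g h) e = conv (conv f g) h e := by
  have h1 : conv f (conv g h) e = ∑ᶠ q : G × G, (f q.1 * g q.2) • h (e - q.1 - q.2) := by
    rw [← finsum_finsum_eq (fun a b => (f a * g b) • h (e - a - b))]
    · unfold conv
      refine finsum_congr fun p => ?_
      rw [smul_finsum_of_ne_zero]
      · simp [mul_smul]
      · intro hp
        refine (hfin.image Prod.snd).subset ?_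
        intro q hq
        refine ⟨(p, q), ⟨hp, ?_, ?_⟩, rfl⟩
        · rintro h0; simp [h0] at hq
        · rintro h0; simp [h0] at hq
    · refine hfin.subset ?_
      rintro ⟨p, q⟩ hq
      refine ⟨?_, ?_, ?_⟩ <;> · rintro h0; simp [h0] at hq
  let E : G × G ≃ G × G :=
    { toFun := fun q => (q.2, q.1 - q.2)
      invFun := fun q => (q.1 + q.2, q.1)
      left_inv := fun q => by simp
      right_inv := fun q => by simp }
  have h2 : conv (conv f g) h e =
      ∑ᶠ q : G × G, (f q.2 * g (q.1 - q.2)) • h (e - q.1) := by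
    have hE : {q : G × G | f q.2 ≠ 0 ∧ g (q.1 - q.2) ≠ 0 ∧ h (e - q.1) ≠ 0}.Finite := by
      refine (hfin.preimage (f := E) E.injective.injOn).subset ?_
      rintro ⟨r, p⟩ ⟨h1, h2, h3⟩
      refine ⟨h1, h2, ?_⟩
      change h (e - p - (r - p)) ≠ 0
      rwa [show e - p - (r - p) = e - r by abel]
    rw [← finsum_finsum_eq (fun a b => (f b * g (a - b)) • h (e - a))]
    · unfold conv
      refine finsum_congr fun r => ?_
      rw [finsum_smul_of_ne_zero]
      · simp
      · intro hr
        refine (hE.image Prod.snd).subset ?_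
        intro q hq
        refine ⟨(r, q), ⟨?_, ?_, hr⟩, rfl⟩
        · rintro h0; simp [h0] at hq
        · rintro h0; simp only [h0, smul_zero, mem_support, ne_eq, not_true] at hq
    · refine hE.subset ?_
      rintro ⟨p, q⟩ hq
      refine ⟨?_, ?_, ?_⟩ <;>
      · rintro h0; simp only [Set.mem_ofPred_eq] at h0 hq; simp [h0] at hq
  rw [h1, h2, ← finsum_comp_equiv E]
  refine finsum_congr fun q => ?_
  simp only [E, Equiv.coe_fn_mk]
  rw [show e - q.2 - (q.1 - q.2) = e - q.1 by abel]

/-- All exponents of `f` have `u`-coordinates at least `L`. -/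
def BddBy (u : G →+ (Fin 3 → ℤ)) (L : ℤ) (f : G → M) : Prop :=
  ∀ p, f p ≠ 0 → ∀ i, L ≤ u p i

variable {u : G →+ (Fin 3 → ℤ)}

theorem finite_box (hu : Injective u) (L U : ℤ) :
    {p : G | ∀ i, L ≤ u p i ∧ u p i ≤ U}.Finite := by
  have : (Set.Icc (fun _ => L : Fin 3 → ℤ) (fun _ => U)).Finite := Set.finite_Icc _ _
  refine (this.preimage hu.injOn).subset ?_
  intro p hp
  exact ⟨fun i => (hp i).1, fun i => (hp i).2⟩

theorem BddBy.conv {L L' : ℤ} {f : G → R} {g : G → M} (hf : BddBy u L f) (hg : BddBy u L' g) :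
    BddBy u (L + L') (conv f g) := by
  intro p hp i
  obtain ⟨q, hq⟩ : ∃ q, f q • g (p - q) ≠ 0 := by
    by_contra! h
    exact hp (by simp [_root_.conv, h])
  have h1 := hf q (by rintro h0; simp [h0] at hq) i
  have h2 := hg (p - q) (by rintro h0; simp [h0] at hq) i
  simp only [map_sub, Pi.sub_apply] at h2
  linarith

theorem bddBy_mono_zero : BddBy u 0 (_root_.mono R (0 : G)) := by
  intro p hp i
  by_cases h : p = 0
  · simp [h]
  · simp [_root_.mono, h] at hp

theorem BddBy.finite_conv (hu : Injective u) {L L' : ℤ} {f : G → R} {g : G → M}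
    (hf : BddBy u L f) (hg : BddBy u L' g) (e : G) :
    (fun p => f p • g (e - p)).HasFiniteSupport := by
  obtain ⟨U, hU⟩ : ∃ U, ∀ i, u e i ≤ U :=
    ⟨∑ i, |u e i|, fun i => (le_abs_self _).trans
      (Finset.single_le_sum (f := fun i => |u e i|) (fun _ _ => abs_nonneg _)
        (Finset.mem_univ i))⟩
  refine (finite_box hu L (U - L')).subset ?_
  intro p hp i
  have h1 := hf p (by rintro h0; simp [h0] at hp) i
  have h2 := hg (e - p) (by rintro h0; simp [h0] at hp) i
  simp only [map_sub, Pi.sub_apply] at h2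
  exact ⟨h1, by linarith [hU i]⟩

theorem conv_assoc_of_bddBy (hu : Injective u) {L₁ L₂ L₃ : ℤ} {f g : G → R} {h : G → M}
    (hf : BddBy u L₁ f) (hg : BddBy u L₂ g) (hh : BddBy u L₃ h) :
    conv f (conv g h) = conv (conv f g) h := by
  funext e
  refine conv_assoc_apply f g h e ?_
  obtain ⟨U, hU⟩ : ∃ U, ∀ i, u e i ≤ U :=
    ⟨∑ i, |u e i|, fun i => (le_abs_self _).trans
      (Finset.single_le_sum (f := fun i => |u e i|) (fun _ _ => abs_nonneg _)
        (Finset.mem_univ i))⟩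
  refine ((finite_box hu L₁ (U - L₂ - L₃)).prod (finite_box hu L₂ (U - L₁ - L₃))).subset ?_
  rintro ⟨p, q⟩ ⟨h1, h2, h3⟩
  have h1 := hf _ h1
  have h2 := hg _ h2
  have h3 := hh _ h3
  simp only [map_sub, Pi.sub_apply] at h1 h2 h3
  constructor <;> intro i <;> have := hU i <;> have := h1 i <;> have := h2 i <;>
    have := h3 i <;> constructor <;> linarith

theorem conv_add_left_apply {f f' : G → R} {g : G → M} {e : G}
    (hf : (fun p => f p • g (e - p)).HasFiniteSupport)
    (hf' : (fun p => f' p • g (e - p)).HasFiniteSupport) :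
    conv (f + f') g e = conv f g e + conv f' g e := by
  unfold conv
  rw [← finsum_add_distrib hf hf']
  simp [add_smul]

theorem conv_sub_left_apply {f f' : G → R} {g : G → M} {e : G}
    (hf : (fun p => f p • g (e - p)).HasFiniteSupport)
    (hf' : (fun p => f' p • g (e - p)).HasFiniteSupport) :
    conv (f - f') g e = conv f g e - conv f' g e := by
  unfold conv
  rw [← finsum_sub_distrib hf hf']
  simp [sub_smul]

theorem conv_sub_right_apply {f : G → R} {g g' : G → M} {e : G}
    (hg : (fun p => f p • g (e - p)).HasFiniteSupport)
    (hg' : (fun p => f p • g' (e - p)).HasFiniteSupport) :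
    conv f (g - g') e = conv f g e - conv f g' e := by
  unfold conv
  rw [← finsum_sub_distrib hg hg']
  simp [smul_sub]

/-- Natural powers for the convolution product. -/
noncomputable def cpow (f : G → R) : ℕ → G → R
  | 0 => mono R 0
  | k + 1 => conv f (cpow f k)

theorem pow1_eq_cpow (f : ℤ → R) (k : ℕ) : pow1 f k = cpow f k := by
  induction k with
  | zero => funext n; by_cases h : n = 0 <;> simp [pow1, oneS, cpow, mono, h]
  | succ k ih => funext n; simp [pow1, cpow, mulS, conv, ih]

theorem pow2_eq_cpow (f : ℤ → ℤ → R) (k : ℕ) (a b : ℤ) :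
    pow2 f k a b = cpow (uncurry f) k (a, b) := by
  induction k generalizing a b with
  | zero => by_cases h : a = 0 ∧ b = 0 <;> simp [pow2, oneS2, cpow, mono, h]
  | succ k ih => simp [pow2, cpow, mulS2, conv, ih, uncurry]; rfl

theorem BddBy.cpow {f : G → R} (hf : BddBy u 0 f) (k : ℕ) : BddBy u 0 (cpow f k) := by
  induction k with
  | zero => exact bddBy_mono_zero
  | succ k ih => exact hf.conv ih

end Conv

section Newton

open Function

theorem zbinom_zero_right (n : ℤ) : zbinom n 0 = 1 := by
  unfold zbinom; split_ifs <;> simp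

theorem zbinom_zero_succ (k : ℕ) : zbinom 0 (k + 1) = 0 := by
  simp [zbinom]

theorem zbinom_succ_succ (n : ℤ) (k : ℕ) :
    zbinom (n + 1) (k + 1) = zbinom n (k + 1) + zbinom n k := by
  unfold zbinom
  by_cases h : 0 ≤ n
  · obtain ⟨m, rfl⟩ := Int.eq_ofNat_of_zero_le h
    rw [if_pos h, if_pos h, if_pos (by omega)]
    have : ((m : ℤ) + 1).toNat = m + 1 := by omega
    simp only [this, Int.toNat_natCast, Nat.choose_succ_succ]
    push_cast; ring
  · obtain ⟨m, rfl⟩ : ∃ m : ℕ, n = -(m : ℤ) - 1 := ⟨(-n - 1).toNat, by omega⟩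
    rw [if_neg h, if_neg h]
    have e1 : (((k + 1 : ℕ) : ℤ) - (-(m : ℤ) - 1) - 1).toNat = k + m + 1 := by omega
    have e2 : ((k : ℤ) - (-(m : ℤ) - 1) - 1).toNat = k + m := by omega
    rw [e1, e2]
    by_cases hm : m = 0
    · subst hm
      simp [pow_succ]
    · have e3 : (((k + 1 : ℕ) : ℤ) - (-(m : ℤ) - 1 + 1) - 1).toNat = k + m := by omega
      rw [if_neg (by omega), e3]
      have := Nat.choose_succ_succ (k + m) k
      rw [show (k + m + 1).choose (k + 1) = _ from this]
      push_cast; ring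

theorem msign_zero : msign 0 = 1 := by simp [msign]

theorem msign_one : msign 1 = -1 := by simp [msign]

theorem msign_add_one (n : ℤ) : msign (n + 1) = msign 1 * msign n := by
  unfold msign
  by_cases h : Even n
  · simp [h]
  · simp [h]

theorem finsum_eq_zero_add {M : Type*} [AddCommMonoid M] (f : ℕ → M) (K : ℕ)
    (h : ∀ k, K ≤ k → f k = 0) : ∑ᶠ k, f k = f 0 + ∑ᶠ k, f (k + 1) := by
  rw [finsum_eq_sum_of_support_subset (s := Finset.range (K + 1)),
    finsum_eq_sum_of_support_subset (s := Finset.range K), Finset.sum_range_succ', add_comm]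
  · intro k hk
    by_contra hk'
    exact hk (h _ (by simp at hk'; omega))
  · intro k hk
    by_contra hk'
    exact hk (h _ (by simp at hk'; omega))

variable {R : Type*} [CommRing R]
variable {G : Type*} [AddCommGroup G] {u : G →+ (Fin 3 → ℤ)}

theorem conv_ne_zero {M : Type*} [AddCommGroup M] [Module R M] {f : G → R} {g : G → M} {p : G}
    (hp : conv f g p ≠ 0) : ∃ q, f q ≠ 0 ∧ g (p - q) ≠ 0 := by
  by_contra! h
  refine hp ?_
  unfold conv
  rw [finsum_eq_zero_of_forall_eq_zero]
  intro q
  by_cases h1 : f q = 0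
  · simp [h1]
  · simp [h q h1]

/-- The series `h` lies in the cone `u ≥ 0` and has no constant term. -/
def SmallIn (u : G →+ (Fin 3 → ℤ)) (h : G → R) : Prop :=
  BddBy u 0 h ∧ ∀ p, h p ≠ 0 → 1 ≤ ∑ i, u p i

theorem SmallIn.cpow_size {h : G → R} (hh : SmallIn u h) (k : ℕ) (p : G) (hp : cpow h k p ≠ 0) :
    (k : ℤ) ≤ ∑ i, u p i := by
  induction k generalizing p with
  | zero =>
    by_cases h0 : p = 0
    · simp [h0]
    · simp [cpow, mono, h0] at hp
  | succ k ih =>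
    obtain ⟨q, hq1, hq2⟩ := conv_ne_zero hp
    have h1 := hh.2 q hq1
    have h2 := ih _ hq2
    simp only [map_sub, Pi.sub_apply, Finset.sum_sub_distrib] at h2
    push_cast
    linarith

/-- The Newton expansion of `(1 + h) ^ n`. -/
noncomputable def newt (h : G → R) (n : ℤ) : G → R :=
  fun p => ∑ᶠ k : ℕ, (zbinom n k : R) * cpow h k p

theorem SmallIn.bddBy_newt {h : G → R} (hh : SmallIn u h) (n : ℤ) : BddBy u 0 (newt h n) := by
  intro p hp i
  by_contra hc
  refine hp ?_
  unfold newt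
  rw [finsum_eq_zero_of_forall_eq_zero]
  intro k
  have : cpow h k p = 0 := by
    by_contra h0
    exact hc (hh.1.cpow k p h0 i)
  simp [this]

theorem SmallIn.newt_zero (h : G → R) : newt h 0 = mono R 0 := by
  funext p
  unfold newt
  rw [finsum_eq_single _ 0]
  · simp [zbinom_zero_right, cpow]
  · intro k hk
    obtain ⟨k, rfl⟩ := Nat.exists_eq_succ_of_ne_zero hk
    simp [zbinom_zero_succ]

theorem SmallIn.newt_succ (hu : Injective u) {h : G → R} (hh : SmallIn u h) (n : ℤ) :
    newt h (n + 1) = newt h n + conv h (newt h n) := by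
  funext p
  have hz : ∀ k : ℕ, (∑ i, u p i).toNat + 1 ≤ k → cpow h k p = 0 := by
    intro k hk
    by_contra h0
    have := hh.cpow_size k p h0
    omega
  have h2 : conv h (newt h n) p = ∑ᶠ k : ℕ, (zbinom n k : R) * cpow h (k + 1) p := by
    have h3 : ∀ q, h q • newt h n (p - q) =
        ∑ᶠ k : ℕ, (zbinom n k : R) * (h q * cpow h k (p - q)) := by
      intro q
      unfold newt
      rw [smul_finsum_of_ne_zero]
      · refine finsum_congr fun k => ?_
        simp only [smul_eq_mul]; ring
      · intro _
        refine (Set.finite_Iio ((∑ i, u (p - q) i).toNat + 1)).subset ?_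
        intro k hk
        have : cpow h k (p - q) ≠ 0 := by
          rintro h0; simp [h0] at hk
        have := hh.cpow_size k _ this
        simp only [Set.mem_Iio]; omega
    unfold conv
    rw [finsum_congr h3, finsum_finsum_swap]
    · refine finsum_congr fun k => ?_
      rw [cpow, conv, ← smul_eq_mul, smul_finsum_of_ne_zero]
      · simp
      · intro _
        exact hh.1.finite_conv hu (hh.1.cpow k) p
    · have hb : Set.Finite {q : G | ∃ k, h q ≠ 0 ∧ cpow h k (p - q) ≠ 0} := by
        obtain ⟨U, hU⟩ : ∃ U, ∀ i, u p i ≤ U :=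
          ⟨∑ i, |u p i|, fun i => (le_abs_self _).trans
            (Finset.single_le_sum (f := fun i => |u p i|) (fun _ _ => abs_nonneg _)
              (Finset.mem_univ i))⟩
        refine (finite_box hu 0 U).subset ?_
        rintro q ⟨k, h1, h2⟩ i
        have h1 := hh.1 q h1 i
        have h2 := hh.1.cpow k _ h2 i
        simp only [map_sub, Pi.sub_apply] at h2
        exact ⟨h1, by linarith [hU i]⟩
      refine (hb.prod (Set.finite_Iio ((∑ i, u p i).toNat + 1))).subset ?_
      rintro ⟨q, k⟩ hqk
      have h1 : h q ≠ 0 := by rintro h0; simp [h0] at hqk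
      have h2 : cpow h k (p - q) ≠ 0 := by rintro h0; simp [h0] at hqk
      refine ⟨⟨k, h1, h2⟩, ?_⟩
      have h3 := hh.cpow_size k _ h2
      have h4 := hh.2 q h1
      simp only [map_sub, Pi.sub_apply, Finset.sum_sub_distrib] at h3
      simp only [Set.mem_Iio]; omega
  have hfin : ∀ (g : ℕ → R), (fun k : ℕ => g k * cpow h (k + 1) p).HasFiniteSupport := by
    intro g
    refine (Set.finite_Iio ((∑ i, u p i).toNat + 1)).subset ?_
    intro k hk
    by_contra hc
    simp only [Set.mem_Iio, not_lt] at hc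
    simp [hz (k + 1) (by omega)] at hk
  rw [Pi.add_apply, h2]
  unfold newt
  rw [finsum_eq_zero_add _ ((∑ i, u p i).toNat + 1) (fun k hk => by simp [hz k hk]),
    finsum_eq_zero_add (fun k => (zbinom n k : R) * cpow h k p) ((∑ i, u p i).toNat + 1)
      (fun k hk => by simp [hz k hk]), add_assoc, ← finsum_add_distrib (hfin _) (hfin _)]
  simp only [zbinom_zero_right, zbinom_succ_succ, ← add_mul, Int.cast_add]

/-- The Newton expansion of `(ε 1 x^v (1 + h)) ^ n`. -/
noncomputable def newtPow (ε : ℤ → R) (v : G) (h : G → R) (n : ℤ) : G → R :=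
  fun p => ε n * newt h n (p - n • v)

variable {ε : ℤ → R} {v : G} {h : G → R}

theorem SmallIn.newtPow_size (hh : SmallIn u h) (n : ℤ) (p : G)
    (hp : newtPow ε v h n p ≠ 0) (i : Fin 3) :
    n * u v i ≤ u p i := by
  have := hh.bddBy_newt n (p - n • v) (by rintro h0; simp [newtPow, h0] at hp) i
  simp only [map_sub, map_zsmul, Pi.sub_apply, Pi.smul_apply, smul_eq_mul] at this
  linarith

theorem SmallIn.bddBy_newtPow (hh : SmallIn u h) (n : ℤ) :
    ∃ L, BddBy u L (newtPow ε v h n) := by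
  refine ⟨-∑ i, |n * u v i|, fun p hp i => ?_⟩
  have h1 := hh.newtPow_size n p hp i
  have h2 := Finset.single_le_sum (f := fun i => |n * u v i|) (fun _ _ => abs_nonneg _)
    (Finset.mem_univ i)
  have h3 := neg_abs_le (n * u v i)
  linarith

theorem newtPow_zero (hε : ε 0 = 1) : newtPow ε v h 0 = mono R 0 := by
  funext p
  simp only [newtPow, hε, zero_smul, sub_zero, one_mul]
  rw [SmallIn.newt_zero]

theorem newtPow_one (hu : Injective u) (hh : SmallIn u h) (p : G) :
    newtPow ε v h 1 p = ε 1 * (mono R 0 (p - v) + h (p - v)) := by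
  have := hh.newt_succ hu 0
  simp only [zero_add, SmallIn.newt_zero] at this
  simp only [newtPow, this, conv_comm h, one_smul, Pi.add_apply]
  rw [conv_mono, sub_zero]

theorem newtPow_succ (hu : Injective u) (hh : SmallIn u h) (hε : ∀ n, ε (n + 1) = ε 1 * ε n)
    (n : ℤ) :
    newtPow ε v h (n + 1) = conv (newtPow ε v h 1) (newtPow ε v h n) := by
  funext p
  have h1 : conv (newtPow ε v h 1) (newtPow ε v h n) p =
      ∑ᶠ q, ε (n + 1) * ((mono R 0 q + h q) * newt h n (p - (n + 1) • v - q)) := by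
    unfold conv
    rw [← finsum_comp_equiv (Equiv.addRight v)]
    refine finsum_congr fun q => ?_
    rw [newtPow_one hu hh, hε]
    simp only [Equiv.coe_addRight, add_sub_cancel_right, newtPow, smul_eq_mul]
    rw [show p - (q + v) - n • v = p - (n + 1) • v - q by rw [add_smul, one_smul]; abel]
    ring
  have h0 := bddBy_mono_zero (R := R) (u := u)
  rw [h1, newtPow, hh.newt_succ hu, Pi.add_apply]
  have f1 := h0.finite_conv hu (hh.bddBy_newt n) (p - (n + 1) • v)
  have f2 := hh.1.finite_conv hu (hh.bddBy_newt n) (p - (n + 1) • v)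
  have h2 : newt h n (p - (n + 1) • v) = conv (mono R 0) (newt h n) (p - (n + 1) • v) := by
    rw [conv_mono, sub_zero]
  rw [h2, ← conv_add_left_apply f1 f2]
  rw [conv, ← smul_eq_mul, smul_finsum_of_ne_zero]
  · simp
  · intro _
    have := f1.add f2
    simp only [Function.HasFiniteSupport, Pi.add_def, ← add_smul] at this ⊢
    exact this

theorem newtPow_natCast_add (hu : Injective u) (hh : SmallIn u h)
    (hε : ∀ n, ε (n + 1) = ε 1 * ε n) (m : ℕ) (n : ℤ) :
    newtPow ε v h (m + n) = conv (cpow (newtPow ε v h 1) m) (newtPow ε v h n) := by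
  induction m with
  | zero => funext p; simp [cpow, conv_mono]
  | succ m ih =>
    obtain ⟨L1, h1⟩ := hh.bddBy_newtPow (ε := ε) (v := v) 1
    obtain ⟨L2, h2⟩ := hh.bddBy_newtPow (ε := ε) (v := v) n
    have h3 : ∀ m, ∃ L, BddBy u L (cpow (newtPow ε v h 1) m) := by
      intro m
      induction m with
      | zero => exact ⟨0, bddBy_mono_zero⟩
      | succ m ih => obtain ⟨L, hL⟩ := ih; exact ⟨_, h1.conv hL⟩
    obtain ⟨L3, h3⟩ := h3 m
    rw [show ((m + 1 : ℕ) : ℤ) + n = (m + n) + 1 by push_cast; ring, newtPow_succ hu hh hε, ih,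
      cpow,
      conv_assoc_of_bddBy hu h1 h3 h2]

theorem newtPow_natCast (hu : Injective u) (hh : SmallIn u h) (hε0 : ε 0 = 1)
    (hε : ∀ n, ε (n + 1) = ε 1 * ε n) (m : ℕ) :
    newtPow ε v h m = cpow (newtPow ε v h 1) m := by
  have := newtPow_natCast_add hu hh (v := v) hε m 0
  rw [newtPow_zero hε0, add_zero] at this
  rw [this, conv_comm]
  funext p
  rw [conv_mono, sub_zero]

/-- The monoid homomorphism into `ℤ³` with the given components. -/
def triple (x y z : G →+ ℤ) : G →+ (Fin 3 → ℤ) where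
  toFun p := ![x p, y p, z p]
  map_zero' := by simp
  map_add' p q := by simp

theorem bddBy_triple {M : Type*} [AddCommGroup M] {x y z : G →+ ℤ} {L : ℤ} {f : G → M} :
    BddBy (triple x y z) L f ↔ ∀ p, f p ≠ 0 → L ≤ x p ∧ L ≤ y p ∧ L ≤ z p := by
  simp [BddBy, triple, Fin.forall_fin_succ]

theorem injective_triple {x y z : G →+ ℤ}
    (h : ∀ p q, x p = x q → y p = y q → z p = z q → p = q) : Injective (triple x y z) := by
  intro p q hpq
  have h0 := congrFun hpq 0
  have h1 := congrFun hpq 1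
  have h2 := congrFun hpq 2
  exact h p q (by simpa [triple] using h0) (by simpa [triple] using h1)
    (by simpa [triple] using h2)

theorem triple_sum {x y z : G →+ ℤ} (p : G) : ∑ i, triple x y z p i = x p + y p + z p := by
  simp [triple, Fin.sum_univ_three]

/-- The first coordinate and the total degree on `ℤ²`. -/
def cone₁ : ℤ × ℤ →+ (Fin 3 → ℤ) :=
  triple (.fst ℤ ℤ) (.fst ℤ ℤ + .snd ℤ ℤ) (.fst ℤ ℤ + .snd ℤ ℤ)

/-- The second coordinate and the total degree on `ℤ²`. -/
def cone₂ : ℤ × ℤ →+ (Fin 3 → ℤ) :=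
  triple (.snd ℤ ℤ) (.fst ℤ ℤ + .snd ℤ ℤ) (.fst ℤ ℤ + .snd ℤ ℤ)

/-- The degree on `ℤ`. -/
def cone : ℤ →+ (Fin 3 → ℤ) := triple (.id ℤ) (.id ℤ) (.id ℤ)

theorem cone₁_injective : Injective cone₁ :=
  injective_triple fun p q h1 h2 _ => by
    ext <;> simp at h1 h2 ⊢ <;> omega

theorem cone₂_injective : Injective cone₂ :=
  injective_triple fun p q h1 h2 _ => by
    ext <;> simp at h1 h2 ⊢ <;> omega

theorem cone_injective : Injective cone :=
  injective_triple fun _ _ h1 _ _ => h1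

/-- A two-variable power series congruent to the first variable modulo the second. -/
def IsUnitFst (G : ℤ → ℤ → R) : Prop :=
  (∀ i j, G i j ≠ 0 → 0 ≤ i ∧ 0 ≤ j) ∧ ∀ i, G i 0 = if i = 1 then 1 else 0

/-- A two-variable power series congruent to `-w(1 + ⋯)` modulo the first variable. -/
def IsNegUnitSnd (G : ℤ → ℤ → R) : Prop :=
  (∀ i j, G i j ≠ 0 → 0 ≤ i ∧ 0 ≤ j) ∧ G 0 0 = 0 ∧ G 0 1 = -1

section izw

variable {G : ℤ → ℤ → R}

theorem IsUnitFst.small (hG : IsUnitFst G) : SmallIn cone₂ (uncurry (hzS G)) := by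
  have key : ∀ p : ℤ × ℤ, uncurry (hzS G) p ≠ 0 → 0 ≤ p.2 ∧ 0 ≤ p.1 + p.2 ∧ p ≠ 0 := by
    rintro ⟨i, j⟩ hp
    by_cases h : (i, j) = (0 : ℤ × ℤ)
    · obtain ⟨rfl, rfl⟩ := Prod.mk.inj h
      simp [hzS, oneS2, hG.2] at hp
    · have hne : ¬ (i = 0 ∧ j = 0) := fun h' => h (by rw [h'.1, h'.2]; rfl)
      have h' : G (i + 1) j ≠ 0 := by simpa [hzS, oneS2, hne] using hp
      have h2 := hG.1 _ _ h'
      refine ⟨h2.2, ?_, h⟩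
      by_cases hj : j = 0
      · subst hj
        rw [hG.2] at h'
        have : i = 0 := by by_contra h0; simp [h0] at h'
        exact absurd ⟨this, rfl⟩ hne
      · simp; omega
  refine ⟨bddBy_triple.2 fun p hp => ?_, fun p hp => ?_⟩
  · have := key p hp
    simp; omega
  · obtain ⟨h1, h2, h3⟩ := key p hp
    rw [cone₂, triple_sum]
    simp only [AddMonoidHom.coe_snd, AddMonoidHom.add_apply, AddMonoidHom.coe_fst]
    by_contra hc
    exact h3 (by ext <;> simp <;> omega)

theorem izwPow_eq (G : ℤ → ℤ → R) (n : ℤ) (p : ℤ × ℤ) :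
    izwPow G n p.1 p.2 = newtPow 1 ((1, 0) : ℤ × ℤ) (uncurry (hzS G)) n p := by
  obtain ⟨a, b⟩ := p
  simp [izwPow, newtPow, newt, pow2_eq_cpow]

theorem IsUnitFst.newtPow_one (hG : IsUnitFst G) :
    newtPow 1 ((1, 0) : ℤ × ℤ) (uncurry (hzS G)) 1 = uncurry G := by
  funext p
  rw [_root_.newtPow_one cone₂_injective hG.small]
  obtain ⟨i, j⟩ := p
  by_cases h : i = 1 ∧ j = 0
  · simp [mono, uncurry, hzS, oneS2, h]
  · simp [mono, uncurry, hzS, oneS2, sub_eq_zero, h]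

theorem IsUnitFst.izwPow_supp (hG : IsUnitFst G) {n a b : ℤ} (h : izwPow G n a b ≠ 0) :
    0 ≤ b ∧ n ≤ a + b := by
  rw [izwPow_eq G n (a, b)] at h
  have h1 := hG.small.newtPow_size _ _ h 0
  have h2 := hG.small.newtPow_size _ _ h 1
  simp [cone₂, triple] at h1 h2
  exact ⟨h1, h2⟩

theorem IsUnitFst.izwPow_zero (_hG : IsUnitFst G) (a b : ℤ) :
    izwPow G 0 a b = if a = 0 ∧ b = 0 then 1 else 0 := by
  rw [izwPow_eq G 0 (a, b), newtPow_zero rfl]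
  simp [mono]

theorem IsUnitFst.izwPow_natCast (hG : IsUnitFst G) (m : ℕ) (a b : ℤ) :
    izwPow G m a b = pow2 G m a b := by
  rw [izwPow_eq G m (a, b), newtPow_natCast cone₂_injective hG.small rfl (by simp),
    hG.newtPow_one, pow2_eq_cpow]

theorem IsUnitFst.izwPow_add (hG : IsUnitFst G) (m : ℕ) (n a b : ℤ) :
    izwPow G (m + n) a b = mulS2 (pow2 G m) (izwPow G n) a b := by
  rw [izwPow_eq G _ (a, b), newtPow_natCast_add cone₂_injective hG.small (by simp),
    hG.newtPow_one]
  simp only [mulS2, pow2_eq_cpow, conv]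
  refine finsum_congr fun p => ?_
  rw [izwPow_eq G n (a - p.1, b - p.2)]
  rfl

end izw

section iwz

variable {G : ℤ → ℤ → R}

theorem IsNegUnitSnd.small (hG : IsNegUnitSnd G) : SmallIn cone₁ (uncurry (hwNegS G)) := by
  have key : ∀ p : ℤ × ℤ, uncurry (hwNegS G) p ≠ 0 → 0 ≤ p.1 ∧ 0 ≤ p.1 + p.2 ∧ p ≠ 0 := by
    rintro ⟨i, j⟩ hp
    by_cases h : (i, j) = (0 : ℤ × ℤ)
    · obtain ⟨rfl, rfl⟩ := Prod.mk.inj h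
      simp [hwNegS, oneS2, hG.2] at hp
    · have hne : ¬ (i = 0 ∧ j = 0) := fun h' => h (by rw [h'.1, h'.2]; rfl)
      have h' : G i (j + 1) ≠ 0 := by simpa [hwNegS, oneS2, hne] using hp
      have h2 := hG.1 _ _ h'
      refine ⟨h2.1, ?_, h⟩
      by_cases hj : i = 0 ∧ j = -1
      · exfalso
        apply h'
        rw [hj.1, hj.2]; exact hG.2.1
      · simp; omega
  refine ⟨bddBy_triple.2 fun p hp => ?_, fun p hp => ?_⟩
  · have := key p hp
    simp; omega
  · obtain ⟨h1, h2, h3⟩ := key p hp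
    rw [cone₁, triple_sum]
    simp only [AddMonoidHom.coe_snd, AddMonoidHom.add_apply, AddMonoidHom.coe_fst]
    by_contra hc
    exact h3 (by ext <;> simp <;> omega)

theorem msign_cast_add_one (R : Type*) [CommRing R] (n : ℤ) :
    ((msign (n + 1) : ℤ) : R) = (msign 1 : ℤ) * (msign n : ℤ) := by
  rw [msign_add_one, Int.cast_mul]

theorem iwzPowNeg_eq (G : ℤ → ℤ → R) (n : ℤ) (p : ℤ × ℤ) :
    iwzPowNeg G n p.1 p.2 =
      newtPow (fun n => (msign n : R)) ((0, 1) : ℤ × ℤ) (uncurry (hwNegS G)) n p := by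
  obtain ⟨a, b⟩ := p
  simp [iwzPowNeg, newtPow, newt, pow2_eq_cpow]

theorem IsNegUnitSnd.newtPow_one (hG : IsNegUnitSnd G) :
    newtPow (fun n => (msign n : R)) ((0, 1) : ℤ × ℤ) (uncurry (hwNegS G)) 1 = uncurry G := by
  funext p
  rw [_root_.newtPow_one cone₁_injective hG.small]
  obtain ⟨i, j⟩ := p
  by_cases h : i = 0 ∧ j = 1
  · simp [mono, uncurry, hwNegS, oneS2, h, msign_one]
  · simp [mono, uncurry, hwNegS, oneS2, sub_eq_zero, h, msign_one]

theorem IsNegUnitSnd.iwzPowNeg_supp (hG : IsNegUnitSnd G) {n a b : ℤ}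
    (h : iwzPowNeg G n a b ≠ 0) : 0 ≤ a ∧ n ≤ a + b := by
  rw [iwzPowNeg_eq G n (a, b)] at h
  have h1 := hG.small.newtPow_size _ _ h 0
  have h2 := hG.small.newtPow_size _ _ h 1
  simp [cone₁, triple] at h1 h2
  exact ⟨h1, h2⟩

theorem IsNegUnitSnd.iwzPowNeg_natCast (hG : IsNegUnitSnd G) (m : ℕ) (a b : ℤ) :
    iwzPowNeg G m a b = pow2 G m a b := by
  rw [iwzPowNeg_eq G m (a, b), newtPow_natCast cone₁_injective hG.small (by simp [msign_zero])
    (msign_cast_add_one R), hG.newtPow_one, pow2_eq_cpow]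

theorem IsNegUnitSnd.iwzPowNeg_add (hG : IsNegUnitSnd G) (m : ℕ) (n a b : ℤ) :
    iwzPowNeg G (m + n) a b = mulS2 (pow2 G m) (iwzPowNeg G n) a b := by
  rw [iwzPowNeg_eq G _ (a, b), newtPow_natCast_add cone₁_injective hG.small
    (msign_cast_add_one R), hG.newtPow_one]
  simp only [mulS2, pow2_eq_cpow, conv]
  refine finsum_congr fun p => ?_
  rw [iwzPowNeg_eq G n (a - p.1, b - p.2)]
  rfl

end iwz

section iota

variable {f : ℤ → R}

theorem iotaPow_eq (f : ℤ → R) (n a : ℤ) :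
    iotaPow f n a = newtPow (fun n => (msign n : R)) 1 (hS f) n a := by
  simp [iotaPow, newtPow, newt, pow1_eq_cpow]

theorem smallIn_hS (hf : ∀ n, n < 1 → f n = 0) (hf1 : f 1 = -1) : SmallIn cone (hS f) := by
  have key : ∀ p, hS f p ≠ 0 → 1 ≤ p := by
    intro p hp
    by_contra hc
    by_cases h0 : p = 0
    · simp [hS, h0, oneS, hf1] at hp
    · simp [hS, h0, oneS, hf (p + 1) (by omega)] at hp
  refine ⟨bddBy_triple.2 fun p hp => ?_, fun p hp => ?_⟩
  · have := key p hp
    simp; omega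
  · rw [cone, triple_sum]
    have := key p hp
    simp; omega

theorem newtPow_hS_one (hf : ∀ n, n < 1 → f n = 0) (hf1 : f 1 = -1) :
    newtPow (fun n => (msign n : R)) (1 : ℤ) (hS f) 1 = f := by
  funext p
  rw [newtPow_one cone_injective (smallIn_hS hf hf1)]
  by_cases h : p = 1
  · simp [mono, hS, oneS, h, msign_one]
  · simp [mono, hS, oneS, sub_eq_zero, h, msign_one]

theorem iotaPow_supp (hf : ∀ n, n < 1 → f n = 0) (hf1 : f 1 = -1) {n a : ℤ}
    (h : iotaPow f n a ≠ 0) : n ≤ a := by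
  rw [iotaPow_eq] at h
  have h1 := (smallIn_hS hf hf1).newtPow_size _ _ h 0
  simp [cone, triple] at h1
  exact h1

theorem iotaPow_zero (f : ℤ → R) (a : ℤ) : iotaPow f 0 a = if a = 0 then 1 else 0 := by
  rw [iotaPow_eq, newtPow_zero (by simp [msign_zero])]
  simp [mono]

theorem iotaPow_natCast (hf : ∀ n, n < 1 → f n = 0) (hf1 : f 1 = -1) (m : ℕ) (a : ℤ) :
    iotaPow f m a = pow1 f m a := by
  rw [iotaPow_eq, newtPow_natCast cone_injective (smallIn_hS hf hf1) (by simp [msign_zero])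
    (msign_cast_add_one R), newtPow_hS_one hf hf1, pow1_eq_cpow]

theorem iotaPow_add (hf : ∀ n, n < 1 → f n = 0) (hf1 : f 1 = -1) (m : ℕ) (n a : ℤ) :
    iotaPow f (m + n) a = mulS (pow1 f m) (iotaPow f n) a := by
  rw [iotaPow_eq, newtPow_natCast_add cone_injective (smallIn_hS hf hf1)
    (msign_cast_add_one R), newtPow_hS_one hf hf1]
  simp only [mulS, pow1_eq_cpow, conv, iotaPow_eq]

end iota

end Newton

section FGL

open Function

variable {R : Type*} [CommRing R] (𝓕 : FormalGroupLaw R)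

namespace FormalGroupLaw

theorem F_supp_ne {i j : ℤ} (h : 𝓕.F i j ≠ 0) : 0 ≤ i ∧ 0 ≤ j := by
  by_contra hc
  exact h (𝓕.F_supp i j (by omega))

theorem pow1_inv_supp {m : ℕ} {j : ℤ} (h : pow1 𝓕.inv m j ≠ 0) : (m : ℤ) ≤ j := by
  rw [← iotaPow_natCast 𝓕.inv_supp 𝓕.inv_one] at h
  exact iotaPow_supp 𝓕.inv_supp 𝓕.inv_one h

theorem pow1_inv_one : pow1 𝓕.inv 1 = 𝓕.inv := by
  funext j
  have := newtPow_hS_one 𝓕.inv_supp 𝓕.inv_one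
  rw [← iotaPow_natCast 𝓕.inv_supp 𝓕.inv_one, iotaPow_eq]
  exact congrFun this j

theorem isUnitFst_F : IsUnitFst 𝓕.F := ⟨fun _ _ h => 𝓕.F_supp_ne h, 𝓕.F_modw⟩

theorem Fzi_supp {i j : ℤ} (h : 𝓕.Fzi i j ≠ 0) : 0 ≤ i ∧ 0 ≤ j := by
  by_contra hc
  refine h (finsum_eq_zero_of_forall_eq_zero fun m => ?_)
  by_cases h1 : 𝓕.F i m = 0
  · simp [h1]
  · by_cases h2 : pow1 𝓕.inv m j = 0
    · simp [h2]
    · have := 𝓕.F_supp_ne h1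
      have := 𝓕.pow1_inv_supp h2
      omega

theorem Fzi_zero_right (i : ℤ) : 𝓕.Fzi i 0 = if i = 1 then 1 else 0 := by
  unfold Fzi
  rw [finsum_eq_single _ 0]
  · simp [pow1, oneS, 𝓕.F_modw]
  · intro m hm
    by_cases h2 : pow1 𝓕.inv m 0 = 0
    · simp [h2]
    · have := 𝓕.pow1_inv_supp h2
      omega

theorem Fzi_zero_left (j : ℤ) : 𝓕.Fzi 0 j = 𝓕.inv j := by
  unfold Fzi
  rw [finsum_eq_single _ 1]
  · rw [𝓕.F_comm, 𝓕.pow1_inv_one]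
    simp [𝓕.F_modw]
  · intro m hm
    rw [𝓕.F_comm, 𝓕.F_modw]
    simp [hm]

theorem isUnitFst_Fzi : IsUnitFst 𝓕.Fzi := ⟨fun _ _ h => 𝓕.Fzi_supp h, 𝓕.Fzi_zero_right⟩

theorem isNegUnitSnd_Fzi : IsNegUnitSnd 𝓕.Fzi := by
  refine ⟨fun _ _ h => 𝓕.Fzi_supp h, ?_, ?_⟩
  · simp [𝓕.Fzi_zero_right]
  · simp [𝓕.Fzi_zero_left, 𝓕.inv_one]

end FormalGroupLaw

end FGL

section Embedding

open Function MvPowerSeries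

variable {R : Type*} [CommRing R] {G : Type*} [AddCommGroup G] {σ : Type*}

theorem finsum_eq_of_range {α β M : Type*} [AddCommMonoid M] {g : β → α} (hg : Injective g)
    (f : α → M) (h : ∀ x, f x ≠ 0 → x ∈ Set.range g) : ∑ᶠ x, f x = ∑ᶠ y, f (g y) := by
  rw [← finsum_mem_range hg, finsum_mem_def]
  refine finsum_congr fun x => ?_
  by_cases hx : x ∈ Set.range g
  · rw [Set.indicator_of_mem hx]
  · rw [Set.indicator_of_notMem hx]
    by_contra hc
    exact hx (h x hc)

theorem finsum_prod_eq_of_fst {α β M : Type*} [AddCommMonoid M] (a : α) (f : α × β → M)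
    (h : ∀ x y, x ≠ a → f (x, y) = 0) : ∑ᶠ p, f p = ∑ᶠ y, f (a, y) := by
  refine finsum_eq_of_range (Prod.mk_right_injective a) f ?_
  rintro ⟨x, y⟩ hxy
  by_cases hx : x = a
  · exact ⟨y, by rw [hx]⟩
  · exact absurd (h x y hx) hxy

theorem finsum_int_eq_nat {M : Type*} [AddCommMonoid M] (f : ℤ → M) (h : ∀ n, n < 0 → f n = 0) :
    ∑ᶠ n, f n = ∑ᶠ n : ℕ, f n := by
  refine finsum_eq_of_range Nat.cast_injective f ?_
  intro x hx
  refine ⟨x.toNat, ?_⟩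
  have : ¬ x < 0 := fun h' => hx (h x h')
  omega

/-- The bilateral series of a power series, along an embedding of the exponents. -/
noncomputable def emb (j : (σ →₀ ℕ) →+ G) (f : MvPowerSeries σ R) : G → R :=
  extend j (fun d => coeff d f) 0

variable {j : (σ →₀ ℕ) →+ G}

theorem emb_apply (hj : Injective j) (f : MvPowerSeries σ R) (d : σ →₀ ℕ) :
    emb j f (j d) = coeff d f := hj.extend_apply _ _ _

theorem emb_ne_zero {f : MvPowerSeries σ R} {p : G} (h : emb j f p ≠ 0) : ∃ d, j d = p := by
  by_contra hc
  exact h (by rw [emb, extend_apply' _ _ _ hc]; rfl)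

theorem emb_mul (hj : Injective j) (f g : MvPowerSeries σ R) :
    emb j (f * g) = conv (emb j f) (emb j g) := by
  classical
  funext e
  by_cases he : ∃ d, j d = e
  · obtain ⟨d, rfl⟩ := he
    rw [emb_apply hj, coeff_mul, conv]
    rw [finsum_eq_sum_of_support_subset
      (s := (Finset.HasAntidiagonal.antidiagonal d).image (fun q => j q.1)),
      Finset.sum_image]
    · refine Finset.sum_congr rfl fun q hq => ?_
      rw [Finset.HasAntidiagonal.mem_antidiagonal] at hq
      rw [← hq, map_add, add_sub_cancel_left, emb_apply hj, emb_apply hj, smul_eq_mul]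
    · rintro ⟨a, b⟩ hab ⟨a', b'⟩ hab' h
      simp only [Finset.mem_coe, Finset.HasAntidiagonal.mem_antidiagonal] at hab hab' h
      obtain rfl := hj h
      rw [← hab'] at hab
      simpa using hab
    · intro p hp
      have h1 : emb j f p ≠ 0 := by rintro h0; simp [h0] at hp
      have h2 : emb j g (j d - p) ≠ 0 := by rintro h0; simp [h0] at hp
      obtain ⟨a, rfl⟩ := emb_ne_zero h1
      obtain ⟨b, hb⟩ := emb_ne_zero h2
      simp only [Finset.coe_image, Set.mem_image, Finset.mem_coe]
      refine ⟨(a, b), ?_, rfl⟩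
      rw [Finset.HasAntidiagonal.mem_antidiagonal]
      refine hj ?_
      simp [hb]
  · rw [not_exists] at he
    have h0 : emb j (f * g) e = 0 := by
      by_contra hc
      obtain ⟨d, hd⟩ := emb_ne_zero hc
      exact he d hd
    rw [h0]
    by_contra hc
    obtain ⟨q, h1, h2⟩ := conv_ne_zero (Ne.symm hc)
    obtain ⟨a, ha⟩ := emb_ne_zero h1
    obtain ⟨b, hb⟩ := emb_ne_zero h2
    exact he (a + b) (by rw [map_add, ha, hb]; abel)

theorem emb_one (hj : Injective j) : emb j (1 : MvPowerSeries σ R) = mono R 0 := by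
  classical
  funext e
  by_cases he : ∃ d, j d = e
  · obtain ⟨d, rfl⟩ := he
    rw [emb_apply hj, coeff_one, mono]
    simp [map_eq_zero_iff j hj]
  · rw [mono_ne]
    · by_contra hc
      exact he (emb_ne_zero hc)
    · rintro rfl
      exact he ⟨0, map_zero j⟩

theorem emb_pow (hj : Injective j) (f : MvPowerSeries σ R) (n : ℕ) :
    emb j (f ^ n) = cpow (emb j f) n := by
  induction n with
  | zero => rw [pow_zero, emb_one hj, cpow]
  | succ n ih => rw [pow_succ', emb_mul hj, ih, cpow]

theorem emb_sub (hj : Injective j) (f g : MvPowerSeries σ R) :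
    emb j (f - g) = emb j f - emb j g := by
  funext e
  by_cases he : ∃ d, j d = e
  · obtain ⟨d, rfl⟩ := he
    simp [emb_apply hj]
  · have : ∀ f : MvPowerSeries σ R, emb j f e = 0 := fun f => by
      by_contra hc
      exact he (emb_ne_zero hc)
    simp [this]

/-- Exponents of power series in two variables. -/
def exps₂ : (Fin 2 →₀ ℕ) →+ ℤ × ℤ where
  toFun d := (d 0, d 1)
  map_zero' := by simp
  map_add' p q := by simp

/-- Exponents of power series in one variable. -/
def exps₁ : (Unit →₀ ℕ) →+ ℤ where
  toFun d := d ()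
  map_zero' := by simp
  map_add' p q := by simp

/-- Exponents of power series in three variables. -/
def exps₃ : (Fin 3 →₀ ℕ) →+ ℤ × ℤ × ℤ where
  toFun d := (d 0, d 1, d 2)
  map_zero' := by simp
  map_add' p q := by simp

theorem exps₂_injective : Injective exps₂ := by
  intro p q h
  simp only [exps₂, AddMonoidHom.coe_mk, ZeroHom.coe_mk, Prod.mk.injEq, Nat.cast_inj] at h
  ext i; fin_cases i
  exacts [h.1, h.2]

theorem exps₁_injective : Injective exps₁ := by
  intro p q h
  simp only [exps₁, AddMonoidHom.coe_mk, ZeroHom.coe_mk, Nat.cast_inj] at h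
  ext; exact h

theorem exps₃_injective : Injective exps₃ := by
  intro p q h
  simp only [exps₃, AddMonoidHom.coe_mk, ZeroHom.coe_mk, Prod.mk.injEq, Nat.cast_inj] at h
  ext i; fin_cases i
  exacts [h.1, h.2.1, h.2.2]

/-- The power series of a bilateral series in two variables. -/
def ps₂ (f : ℤ → ℤ → R) : MvPowerSeries (Fin 2) R := fun d => f (d 0) (d 1)

/-- The power series of a bilateral series in one variable. -/
def ps₁ (f : ℤ → R) : PowerSeries R := fun d => f (d ())

theorem emb_ps₂ {f : ℤ → ℤ → R} (hf : ∀ i j, f i j ≠ 0 → 0 ≤ i ∧ 0 ≤ j) :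
    emb exps₂ (ps₂ f) = uncurry f := by
  funext p
  by_cases hp : ∃ d, exps₂ d = p
  · obtain ⟨d, rfl⟩ := hp
    rw [emb_apply exps₂_injective]
    rfl
  · have h0 : emb exps₂ (ps₂ f) p = 0 := by
      by_contra hc
      exact hp (emb_ne_zero hc)
    rw [h0]
    by_contra hc
    obtain ⟨h1, h2⟩ := hf p.1 p.2 (Ne.symm hc)
    refine hp ⟨Finsupp.equivFunOnFinite.symm ![p.1.toNat, p.2.toNat], ?_⟩
    ext <;> simp [exps₂, h1, h2]

theorem emb_ps₁ {f : ℤ → R} (hf : ∀ i, f i ≠ 0 → 0 ≤ i) :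
    emb exps₁ (ps₁ f) = f := by
  funext p
  by_cases hp : ∃ d, exps₁ d = p
  · obtain ⟨d, rfl⟩ := hp
    rw [emb_apply exps₁_injective]
    rfl
  · have h0 : emb exps₁ (ps₁ f) p = 0 := by
      by_contra hc
      exact hp (emb_ne_zero hc)
    rw [h0]
    by_contra hc
    have h1 := hf p (Ne.symm hc)
    refine hp ⟨Finsupp.single () p.toNat, ?_⟩
    simp [exps₁, h1]

theorem coeff_ps₂_pow {f : ℤ → ℤ → R} (hf : ∀ i j, f i j ≠ 0 → 0 ≤ i ∧ 0 ≤ j) (n : ℕ)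
    (d : Fin 2 →₀ ℕ) : coeff d (ps₂ f ^ n) = pow2 f n (d 0) (d 1) := by
  rw [← emb_apply exps₂_injective, emb_pow exps₂_injective, emb_ps₂ hf, pow2_eq_cpow]
  rfl

theorem coeff_ps₁_pow {f : ℤ → R} (hf : ∀ i, f i ≠ 0 → 0 ≤ i) (n m : ℕ) :
    PowerSeries.coeff m (ps₁ f ^ n) = pow1 f n m := by
  have := emb_apply exps₁_injective (ps₁ f ^ n) (Finsupp.single () m)
  rw [emb_pow exps₁_injective, emb_ps₁ hf, ← pow1_eq_cpow] at this
  rw [PowerSeries.coeff, ← this]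
  simp [exps₁]

/-- Pairs of natural numbers as exponents of a power series in two variables. -/
noncomputable def pairExp : ℕ × ℕ ≃ (Fin 2 →₀ ℕ) :=
  (finTwoArrowEquiv ℕ).symm.trans Finsupp.equivFunOnFinite.symm

variable {τ : Type*}

theorem coeff_subst_pair {A B : MvPowerSeries τ R} (h : HasSubst ![A, B])
    (f : MvPowerSeries (Fin 2) R) (e : τ →₀ ℕ) :
    coeff e (subst ![A, B] f) =
      ∑ᶠ p : ℕ × ℕ, coeff (pairExp p) f * coeff e (A ^ p.1 * B ^ p.2) := by
  rw [coeff_subst h, ← finsum_comp_equiv pairExp]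
  refine finsum_congr fun p => ?_
  rw [Finsupp.prod_fintype _ _ (by simp)]
  simp [pairExp]

theorem coeff_X_pow_mul_X_pow (i k : τ) (e : τ →₀ ℕ) (m n : ℕ) [DecidableEq τ] :
    coeff e (X i ^ m * X k ^ n : MvPowerSeries τ R) =
      if e = Finsupp.single i m + Finsupp.single k n then 1 else 0 := by
  rw [X_pow_eq, X_pow_eq, monomial_mul_monomial, coeff_monomial, mul_one]

theorem HasSubst.pair {A B : MvPowerSeries τ R} (hA : A.constantCoeff = 0)
    (hB : B.constantCoeff = 0) : HasSubst ![A, B] :=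
  hasSubst_of_constantCoeff_zero fun s => by fin_cases s <;> simpa

theorem constantCoeff_subst_pair {A B : MvPowerSeries τ R} (hA : A.constantCoeff = 0)
    (hB : B.constantCoeff = 0) {f : MvPowerSeries (Fin 2) R} (hf : f.constantCoeff = 0) :
    (subst ![A, B] f).constantCoeff = 0 :=
  constantCoeff_subst_eq_zero (HasSubst.pair hA hB) (fun s => by fin_cases s <;> simpa) hf

theorem coeff_subst_X_X {i k : τ} (hik : i ≠ k) (f : MvPowerSeries (Fin 2) R) (e : τ →₀ ℕ)
    (he : ∀ s, s ≠ i → s ≠ k → e s = 0) :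
    coeff e (subst ![(X i : MvPowerSeries τ R), X k] f) = coeff (pairExp (e i, e k)) f := by
  classical
  rw [coeff_subst_pair (HasSubst.pair (by simp) (by simp)), finsum_eq_single _ (e i, e k)]
  · rw [coeff_X_pow_mul_X_pow i k, if_pos, mul_one]
    ext s
    by_cases h1 : s = i
    · subst h1; simp [hik]
    · by_cases h2 : s = k
      · subst h2; simp [h1]
      · simp [he s h1 h2, Ne.symm h1, Ne.symm h2]
  · rintro ⟨m, n⟩ hne
    rw [coeff_X_pow_mul_X_pow i k, if_neg, mul_zero]
    rintro h0
    refine hne ?_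
    rw [h0]
    simp [hik, Ne.symm hik]

theorem coeff_subst_X_X_eq_zero {i k : τ} (f : MvPowerSeries (Fin 2) R)
    (e : τ →₀ ℕ) {s : τ} (hi : s ≠ i) (hk : s ≠ k) (he : e s ≠ 0) :
    coeff e (subst ![(X i : MvPowerSeries τ R), X k] f) = 0 := by
  classical
  rw [coeff_subst_pair (HasSubst.pair (by simp) (by simp)), finsum_eq_zero_of_forall_eq_zero]
  rintro ⟨m, n⟩
  rw [coeff_X_pow_mul_X_pow i k, if_neg, mul_zero]
  rintro h0
  refine he ?_
  rw [h0]
  simp [Ne.symm hi, Ne.symm hk]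

theorem coeff_subst_X_subst {i k l : Fin 3} (hik : i ≠ k) (hil : i ≠ l) (hkl : k ≠ l)
    (f g : MvPowerSeries (Fin 2) R) (hg : g.constantCoeff = 0) (e : Fin 3 →₀ ℕ) :
    coeff e (subst ![(X i : MvPowerSeries (Fin 3) R), subst ![X k, X l] g] f) =
      ∑ᶠ n : ℕ, coeff (pairExp (e i, n)) f * coeff (pairExp (e k, e l)) (g ^ n) := by
  classical
  have hs : HasSubst ![(X k : MvPowerSeries (Fin 3) R), X l] := HasSubst.pair (by simp) (by simp)
  have key : ∀ m n : ℕ, coeff e ((X i : MvPowerSeries (Fin 3) R) ^ m *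
      subst ![X k, X l] g ^ n) = if e i = m then coeff (pairExp (e k, e l)) (g ^ n) else 0 := by
    intro m n
    rw [← subst_pow hs, X_pow_eq, coeff_monomial_mul, one_mul]
    by_cases h1 : e i = m
    · rw [if_pos h1, if_pos (by simp [h1]), coeff_subst_X_X hkl]
      · simp [hik, hil]
      · intro s h2 h3
        have : s = i := by omega
        subst this
        simp [h1]
    · rw [if_neg h1]
      split_ifs with h2
      · refine coeff_subst_X_X_eq_zero _ _ hik hil ?_
        have := h2 i
        simp at this ⊢
        omega
      · rfl
  rw [coeff_subst_pair (HasSubst.pair (by simp)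
    (constantCoeff_subst_pair (by simp) (by simp) hg))]
  simp only [key]
  rw [finsum_prod_eq_of_fst (e i)]
  · simp
  · rintro m n h; simp [Ne.symm h]

end Embedding

section GroupLaw

open Function MvPowerSeries

variable {R : Type*} [CommRing R]

theorem coeff_pairExp_ps₂ (f : ℤ → ℤ → R) (a b : ℕ) : coeff (pairExp (a, b)) (ps₂ f) = f a b := by
  change f _ _ = _
  simp [pairExp]

theorem coeff_pairExp_ps₂_pow {f : ℤ → ℤ → R} (hf : ∀ i j, f i j ≠ 0 → 0 ≤ i ∧ 0 ≤ j) (n a b : ℕ) :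
    coeff (pairExp (a, b)) (ps₂ f ^ n) = pow2 f n a b := by
  rw [coeff_ps₂_pow hf]
  simp [pairExp]

namespace FormalGroupLaw

variable (𝓕 : FormalGroupLaw R)

theorem constantCoeff_ps₂_F : (ps₂ 𝓕.F).constantCoeff = 0 := by
  change 𝓕.F _ _ = 0
  simp [𝓕.F_modw]

theorem F_supp' (i j : ℤ) (h : 𝓕.F i j ≠ 0) : 0 ≤ i ∧ 0 ≤ j := 𝓕.F_supp_ne h

theorem F_zero_left (j : ℤ) : 𝓕.F 0 j = if j = 1 then 1 else 0 := by
  rw [𝓕.F_comm, 𝓕.F_modw]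

theorem subst_comm {τ : Type*} {A B : MvPowerSeries τ R} (hA : A.constantCoeff = 0)
    (hB : B.constantCoeff = 0) :
    subst ![A, B] (ps₂ 𝓕.F) = subst ![B, A] (ps₂ 𝓕.F) := by
  ext e
  rw [coeff_subst_pair (HasSubst.pair hA hB), coeff_subst_pair (HasSubst.pair hB hA),
    ← finsum_comp_equiv (Equiv.prodComm ℕ ℕ)]
  refine finsum_congr fun p => ?_
  obtain ⟨m, n⟩ := p
  simp only [Equiv.prodComm_apply, Prod.swap_prod_mk, coeff_pairExp_ps₂, 𝓕.F_comm n, mul_comm]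

/-- The formal group attached to a formal group law given by its coefficients. -/
noncomputable def formalGroup : FormalGroup R where
  toPowerSeries := ps₂ 𝓕.F
  zero_constantCoeff := 𝓕.constantCoeff_ps₂_F
  lin_coeff_X := by
    change 𝓕.F _ _ = 1
    simp [𝓕.F_modw]
  lin_coeff_Y := by
    change 𝓕.F _ _ = 1
    simp [𝓕.F_zero_left]
  assoc := by
    rw [𝓕.subst_comm (constantCoeff_subst_pair (by simp) (by simp) 𝓕.constantCoeff_ps₂_F) (by simp)]
    ext e
    rw [coeff_subst_X_subst (by decide) (by decide) (by decide) _ _ 𝓕.constantCoeff_ps₂_F,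
      coeff_subst_X_subst (by decide) (by decide) (by decide) _ _ 𝓕.constantCoeff_ps₂_F]
    simp only [coeff_pairExp_ps₂, coeff_pairExp_ps₂_pow 𝓕.F_supp', ← 𝓕.F_assoc, 𝓕.F_comm (e 2)]

instance : 𝓕.formalGroup.IsComm where
  comm := by
    have h := 𝓕.subst_comm (A := X (0 : Fin 2)) (B := X 1) (by simp) (by simp)
    have h2 : (![X 0, X 1] : Fin 2 → MvPowerSeries (Fin 2) R) = X := by
      funext s; fin_cases s <;> rfl
    rw [h2, subst_self] at h
    exact h

theorem inv_supp' (i : ℤ) (h : 𝓕.inv i ≠ 0) : 0 ≤ i := by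
  by_contra hc
  exact h (𝓕.inv_supp i (by omega))

theorem constantCoeff_ps₁_inv : PowerSeries.constantCoeff (ps₁ 𝓕.inv) = 0 := by
  change 𝓕.inv _ = 0
  simp [𝓕.inv_supp]

theorem subst_inv : subst ![PowerSeries.X, ps₁ 𝓕.inv] (ps₂ 𝓕.F) = (0 : PowerSeries R) := by
  ext n
  have h1 : HasSubst ![PowerSeries.X, ps₁ 𝓕.inv] :=
    HasSubst.pair (by exact PowerSeries.constantCoeff_X) 𝓕.constantCoeff_ps₁_inv
  rw [PowerSeries.coeff, coeff_subst_pair h1]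
  have h2 : ∀ p : ℕ × ℕ, coeff (pairExp p) (ps₂ 𝓕.F) *
      coeff (Finsupp.single () n) ((PowerSeries.X : PowerSeries R) ^ p.1 * ps₁ 𝓕.inv ^ p.2) =
      𝓕.F p.1 p.2 * pow1 𝓕.inv p.2 (n - p.1) := by
    rintro ⟨a, b⟩
    rw [coeff_pairExp_ps₂]
    congr 1
    change PowerSeries.coeff n ((PowerSeries.X : PowerSeries R) ^ a * ps₁ 𝓕.inv ^ b) = _
    rw [PowerSeries.coeff_X_pow_mul']
    split_ifs with h
    · rw [coeff_ps₁_pow 𝓕.inv_supp', Nat.cast_sub h]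
    · by_contra hc
      have := 𝓕.pow1_inv_supp (Ne.symm hc)
      simp only at this
      omega
  rw [finsum_congr h2, map_zero]
  have h3 := 𝓕.inv_eq n
  rw [finsum_eq_of_range (g := Prod.map (fun m : ℕ => (m : ℤ)) (id : ℕ → ℕ))] at h3
  · exact h3
  · exact Nat.cast_injective.prodMap injective_id
  · rintro ⟨a, b⟩ h
    have : 𝓕.F a b ≠ 0 := by rintro h0; simp [h0] at h
    have := 𝓕.F_supp_ne this
    refine ⟨(a.toNat, b), ?_⟩
    simp [this.1]

/-- The negation of points of the formal group. -/
noncomputable def negPoint {σ : Type*} (x : 𝓕.formalGroup.Point σ) : 𝓕.formalGroup.Point σ :=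
  ⟨PowerSeries.subst x.val (ps₁ 𝓕.inv), by
    have := IsNilpotent_subst x.2.const (f := ps₁ 𝓕.inv)
      (by
        have := 𝓕.constantCoeff_ps₁_inv
        rw [PowerSeries.constantCoeff] at this
        rw [this]; exact IsNilpotent.zero)
    exact this⟩

theorem subst_subst_inv {σ : Type*} {f : MvPowerSeries σ R} (hf : PowerSeries.HasSubst f) :
    subst ![f, PowerSeries.subst f (ps₁ 𝓕.inv)] (ps₂ 𝓕.F) = 0 := by
  have h : PowerSeries.subst f (subst ![PowerSeries.X, ps₁ 𝓕.inv] (ps₂ 𝓕.F)) = 0 := by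
    rw [𝓕.subst_inv, ← PowerSeries.coe_substAlgHom hf, map_zero]
  rw [← h, PowerSeries.subst, PowerSeries.subst, subst_comp_subst_apply _ hf.const]
  · congr! 2 with s
    fin_cases s
    · simp [PowerSeries.X, subst_X hf.const]
    · rfl
  · exact HasSubst.pair (by exact PowerSeries.constantCoeff_X) 𝓕.constantCoeff_ps₁_inv

theorem add_negPoint {σ : Type*} (x : 𝓕.formalGroup.Point σ) : x + 𝓕.negPoint x = 0 :=
  Subtype.ext (𝓕.subst_subst_inv x.2)

noncomputable instance {σ : Type*} : Neg (𝓕.formalGroup.Point σ) := ⟨𝓕.negPoint⟩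

noncomputable instance {σ : Type*} : AddCommGroup (𝓕.formalGroup.Point σ) where
  zsmul := zsmulRec
  neg_add_cancel x := by
    rw [add_comm]
    exact 𝓕.add_negPoint x

theorem dvd_add_val_sub {σ : Type*} (x y : 𝓕.formalGroup.Point σ) :
    x.val ∣ (x + y).val - y.val := by
  have hs : HasSubst ![x.val, y.val] :=
    hasSubst_of_constantCoeff_nilpotent fun s => by
      fin_cases s
      exacts [x.2, y.2]
  have h : ps₂ 𝓕.F = X 1 + X 0 * ps₂ (fun i j => 𝓕.F (i + 1) j) := by
    ext d
    rw [map_add, mul_comm, show (X 0 : MvPowerSeries (Fin 2) R) = X 0 ^ 1 by rw [pow_one],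
      X_pow_eq, coeff_mul_monomial]
    by_cases hd : d 0 = 0
    · rw [if_neg (by intro h; have := h 0; simp [hd] at this), add_zero, coeff_X]
      change 𝓕.F _ _ = _
      rw [hd, Nat.cast_zero, F_zero_left]
      congr 1
      rw [eq_iff_iff]
      refine ⟨fun h => ?_, fun h => by simp [h]⟩
      ext s; fin_cases s
      · simpa using hd
      · simp; exact_mod_cast h
    · rw [if_pos, coeff_X, if_neg, zero_add, mul_one]
      · change 𝓕.F _ _ = 𝓕.F _ _
        congr 1
        · simp; omega
        · simp
      · rintro rfl; simp at hd
      · intro s; fin_cases s <;> simp; omega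
  refine ⟨subst ![x.val, y.val] (ps₂ (fun i j => 𝓕.F (i + 1) j)), ?_⟩
  change subst ![x.val, y.val] (ps₂ 𝓕.F) - _ = _
  conv_lhs => rw [h]
  rw [subst_add hs, subst_mul hs, subst_X hs, subst_X hs]
  simp

theorem dvd_neg_val {σ : Type*} (x : 𝓕.formalGroup.Point σ) : x.val ∣ (-x).val := by
  obtain ⟨g, hg⟩ := PowerSeries.X_dvd_iff.2 𝓕.constantCoeff_ps₁_inv
  refine ⟨PowerSeries.subst x.val g, ?_⟩
  change PowerSeries.subst x.val (ps₁ 𝓕.inv) = _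
  rw [hg, PowerSeries.subst_mul x.2, PowerSeries.subst_X x.2]

/-- The coordinate points. -/
noncomputable def coordPoint {σ : Type*} (s : σ) : 𝓕.formalGroup.Point σ :=
  ⟨X s, by simp [PowerSeries.HasSubst]⟩

theorem coeff_subst_X_inv :
    subst ![X 0, PowerSeries.subst (X 1) (ps₁ 𝓕.inv)] (ps₂ 𝓕.F) = ps₂ 𝓕.Fzi := by
  classical
  ext e
  have hX : PowerSeries.HasSubst (X 1 : MvPowerSeries (Fin 2) R) := by
    simp [PowerSeries.HasSubst]
  have h0 : constantCoeff (PowerSeries.subst (X 1 : MvPowerSeries (Fin 2) R) (ps₁ 𝓕.inv)) = 0 :=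
    constantCoeff_subst_eq_zero hX.const (by simp) 𝓕.constantCoeff_ps₁_inv
  have key : ∀ m n : ℕ, coeff e ((X 0 : MvPowerSeries (Fin 2) R) ^ m *
      PowerSeries.subst (X 1) (ps₁ 𝓕.inv) ^ n) = if e 0 = m then pow1 𝓕.inv n (e 1) else 0 := by
    intro m n
    rw [← PowerSeries.subst_pow hX, X_pow_eq, coeff_monomial_mul, one_mul]
    have h1 : ∀ d : Fin 2 →₀ ℕ, coeff d (PowerSeries.subst (X 1 : MvPowerSeries (Fin 2) R)
        (ps₁ 𝓕.inv ^ n)) = if d 0 = 0 then pow1 𝓕.inv n (d 1) else 0 := by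
      intro d
      rw [PowerSeries.coeff_subst hX, finsum_eq_single _ (d 1)]
      · rw [coeff_ps₁_pow 𝓕.inv_supp', X_pow_eq, coeff_monomial, smul_eq_mul]
        split_ifs with h1 h2 h2
        · simp
        · rw [h1] at h2; simp at h2
        · refine absurd ?_ h1
          ext s; fin_cases s
          · simpa using h2
          · simp
        · simp
      · intro k hk
        rw [X_pow_eq, coeff_monomial, if_neg, smul_zero]
        rintro rfl
        simp at hk
    rw [h1]
    by_cases h2 : e 0 = m
    · rw [if_pos h2, if_pos, if_pos]
      · simp
      · simp [h2]
      · intro s; fin_cases s <;> simp [h2]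
    · rw [if_neg h2]
      split_ifs with h3 h4
      · have := h3 0
        simp at h4 this
        omega
      · rfl
      · rfl
  rw [coeff_subst_pair (HasSubst.pair (by simp) h0)]
  simp only [key]
  rw [finsum_prod_eq_of_fst (e 0)]
  · simp only [coeff_pairExp_ps₂, if_true]
    rfl
  · rintro m n h; simp [Ne.symm h]

theorem subst_Fzi {σ : Type*} {f g : MvPowerSeries σ R} (hf : PowerSeries.HasSubst f)
    (hg : PowerSeries.HasSubst g) :
    subst ![f, g] (ps₂ 𝓕.Fzi) = subst ![f, PowerSeries.subst g (ps₁ 𝓕.inv)] (ps₂ 𝓕.F) := by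
  have hs : HasSubst ![f, g] :=
    hasSubst_of_constantCoeff_nilpotent fun s => by
      fin_cases s
      exacts [hf, hg]
  have hX : PowerSeries.HasSubst (X 1 : MvPowerSeries (Fin 2) R) := by
    simp [PowerSeries.HasSubst]
  have h0 : constantCoeff (PowerSeries.subst (X 1 : MvPowerSeries (Fin 2) R) (ps₁ 𝓕.inv)) = 0 :=
    constantCoeff_subst_eq_zero hX.const (by simp) 𝓕.constantCoeff_ps₁_inv
  rw [← coeff_subst_X_inv, subst_comp_subst_apply (HasSubst.pair (by simp) h0) hs]
  congr! 2 with s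
  fin_cases s
  · simp [subst_X hs]
  · simp only [PowerSeries.subst]
    change subst ![f, g] (subst (fun _ => X 1) (ps₁ 𝓕.inv)) = subst (fun _ => g) (ps₁ 𝓕.inv)
    rw [subst_comp_subst_apply hX.const hs]
    simp [subst_X hs]

theorem sub_val {σ : Type*} (x y : 𝓕.formalGroup.Point σ) :
    (x - y).val = subst ![x.val, y.val] (ps₂ 𝓕.Fzi) := by
  rw [sub_eq_add_neg]
  exact (𝓕.subst_Fzi x.2 y.2).symm

end FormalGroupLaw

end GroupLaw

section GroupLawSeries

open Function MvPowerSeries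

variable {R : Type*} [CommRing R]

theorem exists_ne_zero_of_finsum {α M : Type*} [AddCommMonoid M] {f : α → M}
    (h : ∑ᶠ x, f x ≠ 0) : ∃ x, f x ≠ 0 := by
  by_contra! hc
  exact h (finsum_eq_zero_of_forall_eq_zero hc)

/-- The series `∑_m g(a,m) P_m(b,c)`, i.e. `g(z₀, w)` with `w^m` replaced by `P_m(z₁,z₂)`. -/
noncomputable def sub3 (g : ℤ → ℤ → R) (P : ℤ → ℤ → ℤ → R) : ℤ × ℤ × ℤ → R :=
  fun e => ∑ᶠ m : ℤ, g e.1 m * P m e.2.1 e.2.2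

/-- Exchange of the outer two variables. -/
def swap02 (e : ℤ × ℤ × ℤ) : ℤ × ℤ × ℤ := (e.2.2, e.2.1, e.1)

theorem emb_eq {f : MvPowerSeries (Fin 3) R} {φ : ℤ × ℤ × ℤ → R}
    (hφ : ∀ e, φ e ≠ 0 → 0 ≤ e.1 ∧ 0 ≤ e.2.1 ∧ 0 ≤ e.2.2)
    (h : ∀ d : Fin 3 →₀ ℕ, coeff d f = φ (d 0, d 1, d 2)) : emb exps₃ f = φ := by
  funext p
  by_cases hp : ∃ d, exps₃ d = p
  · obtain ⟨d, rfl⟩ := hp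
    rw [emb_apply exps₃_injective, h]
    rfl
  · have h1 : emb exps₃ f p = 0 := by
      by_contra hc
      exact hp (emb_ne_zero hc)
    rw [h1]
    by_contra hc
    obtain ⟨h0, h1, h2⟩ := hφ p (Ne.symm hc)
    refine hp ⟨Finsupp.equivFunOnFinite.symm ![p.1.toNat, p.2.1.toNat, p.2.2.toNat], ?_⟩
    simp [exps₃, h0, h1, h2]

theorem emb_X (i : Fin 3) : emb exps₃ (X i : MvPowerSeries (Fin 3) R) =
    mono R (exps₃ (Finsupp.single i 1)) := by
  classical
  funext p
  by_cases hp : ∃ d, exps₃ d = p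
  · obtain ⟨d, rfl⟩ := hp
    rw [emb_apply exps₃_injective, coeff_X, mono]
    simp [exps₃_injective.eq_iff]
  · rw [mono_ne]
    · by_contra hc
      exact hp (emb_ne_zero hc)
    · rintro rfl
      exact hp ⟨_, rfl⟩

namespace FormalGroupLaw

variable (𝓕 : FormalGroupLaw R)

theorem pow2_Fzi_supp {m : ℕ} {a b : ℤ} (h : pow2 𝓕.Fzi m a b ≠ 0) : 0 ≤ a ∧ 0 ≤ b := by
  refine ⟨?_, ?_⟩
  · rw [← 𝓕.isNegUnitSnd_Fzi.iwzPowNeg_natCast] at h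
    exact (𝓕.isNegUnitSnd_Fzi.iwzPowNeg_supp h).1
  · rw [← 𝓕.isUnitFst_Fzi.izwPow_natCast] at h
    exact (𝓕.isUnitFst_Fzi.izwPow_supp h).1

theorem Fzi_ne {i j : ℤ} (h : 𝓕.Fzi i j ≠ 0) : 0 ≤ i ∧ 0 ≤ j := 𝓕.Fzi_supp h

/-- The series `F(z₀, ι F(z₁, ι z₂))`. -/
noncomputable def phi : ℤ × ℤ × ℤ → R :=
  fun e => ∑ᶠ m : ℕ, 𝓕.Fzi e.1 m * pow2 𝓕.Fzi m e.2.1 e.2.2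

theorem phi_supp {e : ℤ × ℤ × ℤ} (h : 𝓕.phi e ≠ 0) : 0 ≤ e.1 ∧ 0 ≤ e.2.1 ∧ 0 ≤ e.2.2 := by
  obtain ⟨m, hm⟩ := exists_ne_zero_of_finsum h
  exact ⟨(𝓕.Fzi_supp (left_ne_zero_of_mul hm)).1, 𝓕.pow2_Fzi_supp (right_ne_zero_of_mul hm)⟩

/-- `F(z₀, ι F(z₁, ι z₂))` as a power series. -/
noncomputable def phiPS : MvPowerSeries (Fin 3) R :=
  (𝓕.coordPoint (0 : Fin 3) - (𝓕.coordPoint 1 - 𝓕.coordPoint 2)).val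

theorem constantCoeff_ps₂_Fzi : (ps₂ 𝓕.Fzi).constantCoeff = 0 := by
  change 𝓕.Fzi _ _ = 0
  simp [𝓕.Fzi_zero_right]

theorem coeff_coordPoint_sub_sub {i k l : Fin 3} (h1 : i ≠ k) (h2 : i ≠ l) (h3 : k ≠ l)
    (e : Fin 3 →₀ ℕ) :
    coeff e (𝓕.coordPoint i - (𝓕.coordPoint k - 𝓕.coordPoint l)).val = 𝓕.phi (e i, e k, e l) := by
  have h : (𝓕.coordPoint i - (𝓕.coordPoint k - 𝓕.coordPoint l)).val =
      subst ![X i, subst ![X k, X l] (ps₂ 𝓕.Fzi)] (ps₂ 𝓕.Fzi) := by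
    rw [sub_val, sub_val]
    rfl
  rw [h, coeff_subst_X_subst h1 h2 h3 _ _ 𝓕.constantCoeff_ps₂_Fzi]
  simp only [coeff_pairExp_ps₂, coeff_pairExp_ps₂_pow @𝓕.Fzi_ne]
  rfl

theorem emb_phiPS : emb exps₃ 𝓕.phiPS = 𝓕.phi :=
  emb_eq (fun _ => 𝓕.phi_supp) (𝓕.coeff_coordPoint_sub_sub (by decide) (by decide) (by decide))

theorem phi_swap02 : 𝓕.phi ∘ swap02 = 𝓕.phi := by
  rw [← emb_phiPS]
  symm
  refine emb_eq (fun e h => ?_) fun d => ?_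
  · rw [emb_phiPS] at h
    have := 𝓕.phi_supp h
    exact ⟨this.2.2, this.2.1, this.1⟩
  · rw [emb_phiPS]
    have : 𝓕.phiPS = (𝓕.coordPoint (2 : Fin 3) - (𝓕.coordPoint 1 - 𝓕.coordPoint 0)).val := by
      rw [phiPS]
      congr 1
      abel
    rw [this, 𝓕.coeff_coordPoint_sub_sub (by decide) (by decide) (by decide)]
    rfl

/-- The series `F(z₀, z₂)` in three variables. -/
def F02 : ℤ × ℤ × ℤ → R := fun e => if e.2.1 = 0 then 𝓕.F e.1 e.2.2 else 0

/-- The series `F(z₁, ι z₀)` in three variables. -/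
noncomputable def Fzi10 : ℤ × ℤ × ℤ → R := fun e => if e.2.2 = 0 then 𝓕.Fzi e.2.1 e.1 else 0

theorem emb_F02 : emb exps₃ (𝓕.coordPoint (0 : Fin 3) + 𝓕.coordPoint 2).val = 𝓕.F02 := by
  refine emb_eq (fun e h => ?_) fun d => ?_
  · simp only [F02] at h
    split_ifs at h with h0
    · have := 𝓕.F_supp_ne h
      exact ⟨this.1, h0.ge, this.2⟩
    · exact absurd rfl h
  · change coeff d (subst ![X 0, X 2] (ps₂ 𝓕.F)) = _
    by_cases h : d 1 = 0
    · rw [coeff_subst_X_X (by decide) _ _ (fun s h0 h2 => by fin_cases s <;> simp_all),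
        coeff_pairExp_ps₂]
      simp [F02, h]
    · rw [coeff_subst_X_X_eq_zero (s := 1)]
      all_goals simp_all [F02]

theorem emb_Fzi10 : emb exps₃ (𝓕.coordPoint (1 : Fin 3) - 𝓕.coordPoint 0).val = 𝓕.Fzi10 := by
  refine emb_eq (fun e h => ?_) fun d => ?_
  · simp only [Fzi10] at h
    split_ifs at h with h0
    · have := 𝓕.Fzi_supp h
      exact ⟨this.2, this.1, h0.ge⟩
    · exact absurd rfl h
  · have : (𝓕.coordPoint (1 : Fin 3) - 𝓕.coordPoint 0).val = subst ![X 1, X 0] (ps₂ 𝓕.Fzi) := by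
      rw [sub_val]
      rfl
    rw [this]
    by_cases h : d 2 = 0
    · rw [coeff_subst_X_X (by decide) _ _ (fun s h0 h2 => by fin_cases s <;> simp_all),
        coeff_pairExp_ps₂]
      simp [Fzi10, h]
    · rw [coeff_subst_X_X_eq_zero (s := 2)]
      all_goals simp_all [Fzi10]

theorem exists_mono_sub_F02 : ∃ v : ℤ × ℤ × ℤ → R,
    (∀ e, v e ≠ 0 → 0 ≤ e.1 ∧ 0 ≤ e.2.1 ∧ 0 ≤ e.2.2) ∧
    mono R (0, 1, 0) - 𝓕.F02 = conv v 𝓕.phi := by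
  obtain ⟨v, hv⟩ : 𝓕.phiPS ∣ (𝓕.coordPoint (1 : Fin 3)).val -
      (𝓕.coordPoint (0 : Fin 3) + 𝓕.coordPoint 2).val := by
    refine (𝓕.dvd_neg_val _).trans ?_
    have := 𝓕.dvd_add_val_sub (-(𝓕.coordPoint (0 : Fin 3) - (𝓕.coordPoint 1 - 𝓕.coordPoint 2)))
      (𝓕.coordPoint (0 : Fin 3) + 𝓕.coordPoint 2)
    rwa [show -(𝓕.coordPoint (0 : Fin 3) - (𝓕.coordPoint 1 - 𝓕.coordPoint 2)) +
      (𝓕.coordPoint (0 : Fin 3) + 𝓕.coordPoint 2) = 𝓕.coordPoint 1 by abel] at this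
  refine ⟨emb exps₃ v, fun e h => ?_, ?_⟩
  · obtain ⟨d, rfl⟩ := emb_ne_zero h
    simp [exps₃]
  · rw [conv_comm, ← emb_phiPS, ← emb_mul exps₃_injective, ← hv, emb_sub exps₃_injective, emb_F02]
    congr 1
    exact (by simp [exps₃] : ((0, 1, 0) : ℤ × ℤ × ℤ) = exps₃ (Finsupp.single 1 1)) ▸
      (emb_X (R := R) 1).symm

theorem exists_mono_sub_Fzi10 : ∃ v : ℤ × ℤ × ℤ → R,
    (∀ e, v e ≠ 0 → 0 ≤ e.1 ∧ 0 ≤ e.2.1 ∧ 0 ≤ e.2.2) ∧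
    mono R (0, 0, 1) - 𝓕.Fzi10 = conv v 𝓕.phi := by
  obtain ⟨v, hv⟩ : 𝓕.phiPS ∣ (𝓕.coordPoint (2 : Fin 3)).val -
      (𝓕.coordPoint (1 : Fin 3) - 𝓕.coordPoint 0).val := by
    have := 𝓕.dvd_add_val_sub (𝓕.coordPoint (0 : Fin 3) - (𝓕.coordPoint 1 - 𝓕.coordPoint 2))
      (𝓕.coordPoint (1 : Fin 3) - 𝓕.coordPoint 0)
    rwa [show 𝓕.coordPoint (0 : Fin 3) - (𝓕.coordPoint 1 - 𝓕.coordPoint 2) +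
      (𝓕.coordPoint (1 : Fin 3) - 𝓕.coordPoint 0) = 𝓕.coordPoint 2 by abel] at this
  refine ⟨emb exps₃ v, fun e h => ?_, ?_⟩
  · obtain ⟨d, rfl⟩ := emb_ne_zero h
    simp [exps₃]
  · rw [conv_comm, ← emb_phiPS, ← emb_mul exps₃_injective, ← hv, emb_sub exps₃_injective, emb_Fzi10]
    congr 1
    exact (by simp [exps₃] : ((0, 0, 1) : ℤ × ℤ × ℤ) = exps₃ (Finsupp.single 2 1)) ▸
      (emb_X (R := R) 2).symm

end FormalGroupLaw

end GroupLawSeries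

section Inverses

open Function

variable {R : Type*} [CommRing R] (𝓕 : FormalGroupLaw R)

/-- `P` is the family of integer powers of `F(z, ι w)`, in some expansion. -/
structure FormalGroupLaw.IsPowFamily (P : ℤ → ℤ → ℤ → R) : Prop where
  supp : ∀ {m a b : ℤ}, P m a b ≠ 0 → m ≤ a + b
  natCast : ∀ (m : ℕ) (a b : ℤ), P m a b = pow2 𝓕.Fzi m a b
  add : ∀ (m : ℕ) (n a b : ℤ), P (m + n) a b = mulS2 (pow2 𝓕.Fzi m) (P n) a b

theorem FormalGroupLaw.isPowFamily_izwPow : 𝓕.IsPowFamily (izwPow 𝓕.Fzi) where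
  supp h := (𝓕.isUnitFst_Fzi.izwPow_supp h).2
  natCast := 𝓕.isUnitFst_Fzi.izwPow_natCast
  add := 𝓕.isUnitFst_Fzi.izwPow_add

theorem FormalGroupLaw.isPowFamily_iwzPowNeg : 𝓕.IsPowFamily (iwzPowNeg 𝓕.Fzi) where
  supp h := (𝓕.isNegUnitSnd_Fzi.iwzPowNeg_supp h).2
  natCast := 𝓕.isNegUnitSnd_Fzi.iwzPowNeg_natCast
  add := 𝓕.isNegUnitSnd_Fzi.iwzPowNeg_add

namespace FormalGroupLaw

variable {𝓕} {P P' : ℤ → ℤ → ℤ → R}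

theorem pow2_one (f : ℤ → ℤ → R) : pow2 f 1 = f := by
  funext a b
  rw [pow2, pow2, mulS2, finsum_eq_single _ (a, b)]
  · simp [oneS2]
  · rintro ⟨x, y⟩ h
    have : ¬ (a - x = 0 ∧ b - y = 0) := by
      rintro ⟨h1, h2⟩
      exact h (Prod.ext (by simp; omega) (by simp; omega))
    simp [oneS2, this]

theorem IsPowFamily.mulS2_neg_one (hP : 𝓕.IsPowFamily P) : mulS2 𝓕.Fzi (P (-1)) = oneS2 R := by
  funext a b
  have := hP.add 1 (-1) a b
  rw [pow2_one] at this
  rw [← this]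
  exact hP.natCast 0 a b

theorem phi_eq_sub3 (hP : 𝓕.IsPowFamily P) : 𝓕.phi = sub3 𝓕.Fzi P := by
  funext e
  rw [phi, sub3, finsum_int_eq_nat]
  · simp [hP.natCast]
  · intro n hn
    have : 𝓕.Fzi e.1 n = 0 := by
      by_contra h
      have := (𝓕.Fzi_supp h).2
      omega
    simp [this]

theorem finsum_mul_finsum {α β : Type*} {f : α → R} {g : β → R} (hf : f.HasFiniteSupport)
    (hg : g.HasFiniteSupport) : (∑ᶠ a, f a) * ∑ᶠ b, g b = ∑ᶠ p : α × β, f p.1 * g p.2 := by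
  rw [finsum_mul' _ _ hf, ← finsum_finsum_eq (fun a b => f a * g b)]
  · exact finsum_congr fun a => mul_finsum' _ _ hg
  · refine (hf.prod hg).subset ?_
    rintro ⟨a, b⟩ h
    exact ⟨left_ne_zero_of_mul h, right_ne_zero_of_mul h⟩

theorem conv_phi_sub3 (hP : 𝓕.IsPowFamily P) {g : ℤ → ℤ → R}
    (hg : ∀ {a m}, g a m ≠ 0 → -1 ≤ a + m) :
    conv 𝓕.phi (sub3 g P) = sub3 (mulS2 𝓕.Fzi g) P := by
  funext ⟨e0, e1, e2⟩
  set T : (ℤ × ℤ × ℤ) × (ℤ × ℤ) → R := fun y =>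
    (𝓕.Fzi y.1.1 y.2.1 * P y.2.1 y.1.2.1 y.1.2.2) *
      (g (e0 - y.1.1) y.2.2 * P y.2.2 (e1 - y.1.2.1) (e2 - y.1.2.2)) with hT
  have hPq : ∀ {k p q : ℤ}, 0 ≤ k → P k p q ≠ 0 → 0 ≤ p ∧ 0 ≤ q := by
    intro k p q hk h
    obtain ⟨k, rfl⟩ := Int.eq_ofNat_of_zero_le hk
    rw [hP.natCast] at h
    exact 𝓕.pow2_Fzi_supp h
  have hTne : ∀ a p q k l : ℤ, T ((a, p, q), (k, l)) ≠ 0 → 0 ≤ a ∧ 0 ≤ k ∧ 0 ≤ p ∧ 0 ≤ q ∧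
      k ≤ p + q ∧ -1 ≤ e0 - a + l ∧ l ≤ e1 - p + (e2 - q) := by
    intro a p q k l h
    have h1 := left_ne_zero_of_mul h
    have h2 := right_ne_zero_of_mul h
    have h3 := 𝓕.Fzi_supp (left_ne_zero_of_mul h1)
    have h4 := hPq h3.2 (right_ne_zero_of_mul h1)
    exact ⟨h3.1, h3.2, h4.1, h4.2, hP.supp (right_ne_zero_of_mul h1),
      hg (left_ne_zero_of_mul h2), hP.supp (right_ne_zero_of_mul h2)⟩
  have hfin : {y | T y ≠ 0}.Finite := by
    refine (((Set.finite_Icc 0 (e0 + e1 + e2 + 1)).prod ((Set.finite_Icc 0 (e0 + e1 + e2 + 1)).prod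
      (Set.finite_Icc 0 (e0 + e1 + e2 + 1)))).prod ((Set.finite_Icc 0 (e0 + e1 + e2 + 1)).prod
      (Set.finite_Icc (-1 - e0) (e1 + e2)))).subset ?_
    rintro ⟨⟨a, p, q⟩, k, l⟩ h
    have := hTne a p q k l h
    simp only [Set.mem_prod, Set.mem_Icc]
    omega
  have hL : conv 𝓕.phi (sub3 g P) (e0, e1, e2) = ∑ᶠ y, T y := by
    rw [← finsum_finsum_eq (fun x y => T (x, y)) hfin, phi_eq_sub3 hP]
    refine finsum_congr fun ⟨a, p, q⟩ => ?_
    simp only [sub3, smul_eq_mul, Prod.mk_sub_mk]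
    rw [finsum_mul_finsum]
    · refine (Set.finite_Icc 0 (p + q)).subset fun k hk => ?_
      exact ⟨(𝓕.Fzi_supp (left_ne_zero_of_mul hk)).2, hP.supp (right_ne_zero_of_mul hk)⟩
    · refine (Set.finite_Icc (-1 - (e0 - a)) (e1 - p + (e2 - q))).subset fun l hl => ?_
      have := hg (left_ne_zero_of_mul hl)
      exact ⟨by omega, hP.supp (right_ne_zero_of_mul hl)⟩
  let σ : ℤ × ((ℤ × ℤ) × (ℤ × ℤ)) ≃ (ℤ × ℤ × ℤ) × (ℤ × ℤ) :=
    { toFun := fun y => ((y.2.1.1, y.2.2.1, y.2.2.2), (y.2.1.2, y.1 - y.2.1.2))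
      invFun := fun x => (x.2.1 + x.2.2, ((x.1.1, x.2.1), (x.1.2.1, x.1.2.2)))
      left_inv := fun y => by simp
      right_inv := fun x => by simp }
  rw [hL, ← finsum_comp_equiv σ, ← finsum_finsum_eq (fun m y => T (σ (m, y)))]
  swap
  · exact hfin.preimage σ.injective.injOn
  rw [sub3]
  refine finsum_congr fun m => ?_
  rw [← finsum_finsum_eq (fun x y => T (σ (m, (x, y))))]
  swap
  · exact hfin.preimage (σ.injective.comp (Prod.mk_right_injective m)).injOn
  simp only [mulS2]
  rw [← smul_eq_mul, finsum_smul_of_ne_zero]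
  swap
  · intro _
    refine ((Set.finite_Icc 0 (e0 + m + 1)).prod (Set.finite_Icc 0 (e0 + m + 1))).subset ?_
    rintro ⟨a, k⟩ h
    have h1 := 𝓕.Fzi_supp (left_ne_zero_of_mul h)
    have h2 := hg (right_ne_zero_of_mul h)
    simp only at h1 h2
    simp only [Set.mem_prod, Set.mem_Icc]
    omega
  refine finsum_congr fun ⟨a, k⟩ => ?_
  by_cases hk : 𝓕.Fzi a k = 0
  · simp [hT, σ, hk]
  have hk0 := (𝓕.Fzi_supp hk).2
  have hP' : P m e1 e2 = ∑ᶠ y : ℤ × ℤ, P k y.1 y.2 * P (m - k) (e1 - y.1) (e2 - y.2) := by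
    obtain ⟨k, rfl⟩ := Int.eq_ofNat_of_zero_le hk0
    have := hP.add k (m - k) e1 e2
    rw [add_sub_cancel] at this
    rw [this, mulS2]
    simp only [hP.natCast, smul_eq_mul]
  rw [smul_eq_mul, hP', mul_finsum']
  · refine finsum_congr fun y => ?_
    simp only [hT, σ, Equiv.coe_fn_mk, smul_eq_mul]
    ring
  · refine ((Set.finite_Icc 0 (e1 + e2 - m + k)).prod
      (Set.finite_Icc 0 (e1 + e2 - m + k))).subset ?_
    rintro ⟨p, q⟩ h
    have h1 := hPq hk0 (left_ne_zero_of_mul h)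
    have h2 := hP.supp (right_ne_zero_of_mul h)
    simp only at h1 h2
    simp only [Set.mem_prod, Set.mem_Icc]
    omega

theorem conv_phi_sub3_neg_one (hP : 𝓕.IsPowFamily P) (hP' : 𝓕.IsPowFamily P') :
    conv 𝓕.phi (sub3 (P' (-1)) P) = mono R 0 := by
  rw [conv_phi_sub3 hP hP'.supp, hP'.mulS2_neg_one]
  funext ⟨a, b, c⟩
  rw [sub3, finsum_eq_single _ 0]
  · have : P 0 b c = oneS2 R b c := hP.natCast 0 b c
    simp only [this]
    by_cases ha : a = 0 <;> by_cases hb : b = 0 <;> by_cases hc : c = 0 <;>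
      simp [oneS2, mono, ha, hb, hc]
  · intro m hm
    simp [oneS2, hm]

theorem sub3_supp (hP : 𝓕.IsPowFamily P) (hP' : 𝓕.IsPowFamily P') {e : ℤ × ℤ × ℤ}
    (h : sub3 (P' (-1)) P e ≠ 0) : -1 ≤ e.1 + e.2.1 + e.2.2 := by
  obtain ⟨m, hm⟩ := exists_ne_zero_of_finsum h
  have h1 := hP'.supp (left_ne_zero_of_mul hm)
  have h2 := hP.supp (right_ne_zero_of_mul hm)
  omega

/-- The inclusion of exponents as an additive map: total degree. -/
def deg3 : ℤ × ℤ × ℤ →+ ℤ where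
  toFun e := e.1 + e.2.1 + e.2.2
  map_zero' := by simp
  map_add' p q := by simp; ring

/-- The exponent of `z₀`. -/
def ex0 : ℤ × ℤ × ℤ →+ ℤ := .fst ℤ (ℤ × ℤ)

/-- The exponent of `z₁`. -/
def ex1 : ℤ × ℤ × ℤ →+ ℤ := (AddMonoidHom.fst ℤ ℤ).comp (.snd ℤ (ℤ × ℤ))

/-- The exponent of `z₂`. -/
def ex2 : ℤ × ℤ × ℤ →+ ℤ := (AddMonoidHom.snd ℤ ℤ).comp (.snd ℤ (ℤ × ℤ))

/-- Series with lower bounds on the exponents of `z₀`, `z₁` and on the degree. -/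
def cone01 : ℤ × ℤ × ℤ →+ (Fin 3 → ℤ) := triple ex0 ex1 deg3

/-- Series with lower bounds on the exponents of `z₀`, `z₂` and on the degree. -/
def cone02 : ℤ × ℤ × ℤ →+ (Fin 3 → ℤ) := triple ex0 ex2 deg3

/-- Series with lower bounds on the exponents of `z₁`, `z₂` and on the degree. -/
def cone12 : ℤ × ℤ × ℤ →+ (Fin 3 → ℤ) := triple ex1 ex2 deg3

theorem cone01_injective : Injective cone01 := injective_triple fun p q h1 h2 h3 => by
  simp only [ex0, ex1, deg3, AddMonoidHom.coe_fst, AddMonoidHom.coe_snd, AddMonoidHom.coe_comp,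
    comp_apply,
    AddMonoidHom.coe_mk, ZeroHom.coe_mk] at h1 h2 h3
  exact Prod.ext h1 (Prod.ext h2 (by omega))

theorem cone02_injective : Injective cone02 := injective_triple fun p q h1 h2 h3 => by
  simp only [ex0, ex2, deg3, AddMonoidHom.coe_fst, AddMonoidHom.coe_snd, AddMonoidHom.coe_comp,
    comp_apply,
    AddMonoidHom.coe_mk, ZeroHom.coe_mk] at h1 h2 h3
  exact Prod.ext h1 (Prod.ext (by omega) h2)

theorem cone12_injective : Injective cone12 := injective_triple fun p q h1 h2 h3 => by
  simp only [ex2, ex1, deg3, AddMonoidHom.coe_fst, AddMonoidHom.coe_snd, AddMonoidHom.coe_comp,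
    comp_apply,
    AddMonoidHom.coe_mk, ZeroHom.coe_mk] at h1 h2 h3
  exact Prod.ext (by omega) (Prod.ext h1 h2)

theorem bddBy_cone01 {M : Type*} [AddCommGroup M] {L : ℤ} {f : ℤ × ℤ × ℤ → M} :
    BddBy cone01 L f ↔ ∀ e, f e ≠ 0 → L ≤ e.1 ∧ L ≤ e.2.1 ∧ L ≤ e.1 + e.2.1 + e.2.2 :=
  bddBy_triple

theorem bddBy_cone02 {M : Type*} [AddCommGroup M] {L : ℤ} {f : ℤ × ℤ × ℤ → M} :
    BddBy cone02 L f ↔ ∀ e, f e ≠ 0 → L ≤ e.1 ∧ L ≤ e.2.2 ∧ L ≤ e.1 + e.2.1 + e.2.2 :=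
  bddBy_triple

theorem bddBy_cone12 {M : Type*} [AddCommGroup M] {L : ℤ} {f : ℤ × ℤ × ℤ → M} :
    BddBy cone12 L f ↔ ∀ e, f e ≠ 0 → L ≤ e.2.1 ∧ L ≤ e.2.2 ∧ L ≤ e.1 + e.2.1 + e.2.2 :=
  bddBy_triple

/-- A cone of exponents that contains those of all power series. -/
structure IsCone (u : ℤ × ℤ × ℤ →+ (Fin 3 → ℤ)) : Prop where
  inj : Injective u
  bddBy : ∀ {f : ℤ × ℤ × ℤ → R}, (∀ e, f e ≠ 0 → 0 ≤ e.1 ∧ 0 ≤ e.2.1 ∧ 0 ≤ e.2.2) → BddBy u 0 f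

theorem isCone_cone01 : IsCone (R := R) cone01 :=
  ⟨cone01_injective, fun h => bddBy_cone01.2 fun e he => by have := h e he; omega⟩

theorem isCone_cone02 : IsCone (R := R) cone02 :=
  ⟨cone02_injective, fun h => bddBy_cone02.2 fun e he => by have := h e he; omega⟩

theorem isCone_cone12 : IsCone (R := R) cone12 :=
  ⟨cone12_injective, fun h => bddBy_cone12.2 fun e he => by have := h e he; omega⟩

variable (𝓕) in
/-- `E` is the expansion of `1/φ` in the cone `u`. -/
structure IsInv (u : ℤ × ℤ × ℤ →+ (Fin 3 → ℤ)) (E : ℤ × ℤ × ℤ → R) : Prop where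
  isCone : IsCone (R := R) u
  bddBy : BddBy u (-1) E
  conv_eq : conv 𝓕.phi E = mono R 0

variable {u u' : ℤ × ℤ × ℤ →+ (Fin 3 → ℤ)} {E E' : ℤ × ℤ × ℤ → R}

theorem IsInv.bddBy_phi (h : 𝓕.IsInv u E) : BddBy u 0 𝓕.phi :=
  h.isCone.bddBy fun _ => 𝓕.phi_supp

theorem IsInv.conv_phi {M : Type*} [AddCommGroup M] [Module R M] (h : 𝓕.IsInv u E) {L : ℤ}
    {g : ℤ × ℤ × ℤ → M} (hg : BddBy u L g) :
    conv 𝓕.phi (conv E g) = g := by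
  rw [conv_assoc_of_bddBy h.isCone.inj h.bddBy_phi h.bddBy hg, h.conv_eq]
  funext e
  rw [conv_mono, sub_zero]

theorem IsInv.conv_conv_phi {M : Type*} [AddCommGroup M] [Module R M] (h : 𝓕.IsInv u E) {L : ℤ}
    {g : ℤ × ℤ × ℤ → M} (hg : BddBy u L g) :
    conv E (conv 𝓕.phi g) = g := by
  rw [conv_assoc_of_bddBy h.isCone.inj h.bddBy h.bddBy_phi hg, conv_comm, h.conv_eq]
  funext e
  rw [conv_mono, sub_zero]

theorem IsInv.unique (h : 𝓕.IsInv u E) (h' : 𝓕.IsInv u E') : E = E' := by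
  rw [← h.conv_conv_phi h'.bddBy, h'.conv_eq, conv_comm]
  funext e
  rw [conv_mono, sub_zero]

theorem IsInv.conv_conv (h : 𝓕.IsInv u E) {L : ℤ} {v : ℤ × ℤ × ℤ → R} (hv : BddBy u L v) :
    conv (conv v 𝓕.phi) E = v := by
  rw [← conv_assoc_of_bddBy h.isCone.inj hv h.bddBy_phi h.bddBy, h.conv_eq, conv_comm]
  funext e
  rw [conv_mono, sub_zero]

/-- Multiplication of a difference of two expansions of `1/φ` by a series congruent to a monomial
modulo `φ`. -/
theorem IsInv.conv_sub (h : 𝓕.IsInv u E) (h' : 𝓕.IsInv u' E') {f : ℤ × ℤ × ℤ → R}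
    (hf : ∀ e, f e ≠ 0 → 0 ≤ e.1 ∧ 0 ≤ e.2.1 ∧ 0 ≤ e.2.2) {w : ℤ × ℤ × ℤ}
    (hw : 0 ≤ w.1 ∧ 0 ≤ w.2.1 ∧ 0 ≤ w.2.2)
    (hv : ∃ v : ℤ × ℤ × ℤ → R, (∀ e, v e ≠ 0 → 0 ≤ e.1 ∧ 0 ≤ e.2.1 ∧ 0 ≤ e.2.2) ∧
      mono R w - f = conv v 𝓕.phi) (e : ℤ × ℤ × ℤ) :
    conv f (E - E') e = (E - E') (e - w) := by
  obtain ⟨v, hv, hvf⟩ := hv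
  have hm : ∀ e, mono R w e ≠ 0 → 0 ≤ e.1 ∧ 0 ≤ e.2.1 ∧ 0 ≤ e.2.2 := by
    intro e he
    by_cases h : e = w
    · rwa [h]
    · exact absurd (mono_ne _ _ h) he
  have key : ∀ {u : ℤ × ℤ × ℤ →+ (Fin 3 → ℤ)} {E : ℤ × ℤ × ℤ → R}, 𝓕.IsInv u E →
      E (e - w) - conv f E e = v e := by
    intro u E h
    rw [← congrFun (h.conv_conv (h.isCone.bddBy hv)) e, ← hvf, conv_sub_left_apply, conv_mono]
    · exact (h.isCone.bddBy hm).finite_conv h.isCone.inj h.bddBy e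
    · exact (h.isCone.bddBy hf).finite_conv h.isCone.inj h.bddBy e
  rw [conv_sub_right_apply, Pi.sub_apply, ← sub_eq_zero]
  · linear_combination key h' - key h
  · exact (h.isCone.bddBy hf).finite_conv h.isCone.inj h.bddBy e
  · exact (h'.isCone.bddBy hf).finite_conv h'.isCone.inj h'.bddBy e

theorem conv_comp_swap02 {M : Type*} [AddCommGroup M] [Module R M] (f : ℤ × ℤ × ℤ → R)
    (g : ℤ × ℤ × ℤ → M) : conv f (g ∘ swap02) = conv (f ∘ swap02) g ∘ swap02 := by
  funext e
  let σ : ℤ × ℤ × ℤ ≃ ℤ × ℤ × ℤ := ⟨swap02, swap02, fun _ => rfl, fun _ => rfl⟩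
  unfold conv
  rw [← finsum_comp_equiv σ]
  rfl

theorem isInv_izw (hP : 𝓕.IsPowFamily P) : 𝓕.IsInv cone12 (sub3 (izwPow 𝓕.Fzi (-1)) P) where
  isCone := isCone_cone12
  bddBy := bddBy_cone12.2 fun e he => by
    have h1 := sub3_supp hP 𝓕.isPowFamily_izwPow he
    obtain ⟨m, hm⟩ := exists_ne_zero_of_finsum he
    have h2 := 𝓕.isUnitFst_Fzi.izwPow_supp (left_ne_zero_of_mul hm)
    have h3 := right_ne_zero_of_mul hm
    obtain ⟨k, rfl⟩ := Int.eq_ofNat_of_zero_le h2.1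
    rw [hP.natCast] at h3
    have := 𝓕.pow2_Fzi_supp h3
    omega
  conv_eq := conv_phi_sub3_neg_one hP 𝓕.isPowFamily_izwPow

theorem isInv_iwz_izw :
    𝓕.IsInv cone02 (sub3 (iwzPowNeg 𝓕.Fzi (-1)) (izwPow 𝓕.Fzi)) where
  isCone := isCone_cone02
  bddBy := bddBy_cone02.2 fun e he => by
    have h1 := sub3_supp 𝓕.isPowFamily_izwPow 𝓕.isPowFamily_iwzPowNeg he
    obtain ⟨m, hm⟩ := exists_ne_zero_of_finsum he
    have h2 := 𝓕.isNegUnitSnd_Fzi.iwzPowNeg_supp (left_ne_zero_of_mul hm)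
    have h3 := 𝓕.isUnitFst_Fzi.izwPow_supp (right_ne_zero_of_mul hm)
    omega
  conv_eq := conv_phi_sub3_neg_one 𝓕.isPowFamily_izwPow 𝓕.isPowFamily_iwzPowNeg

theorem isInv_iwz_iwz :
    𝓕.IsInv cone01 (sub3 (iwzPowNeg 𝓕.Fzi (-1)) (iwzPowNeg 𝓕.Fzi)) where
  isCone := isCone_cone01
  bddBy := bddBy_cone01.2 fun e he => by
    have h1 := sub3_supp 𝓕.isPowFamily_iwzPowNeg 𝓕.isPowFamily_iwzPowNeg he
    obtain ⟨m, hm⟩ := exists_ne_zero_of_finsum he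
    have h2 := 𝓕.isNegUnitSnd_Fzi.iwzPowNeg_supp (left_ne_zero_of_mul hm)
    have h3 := 𝓕.isNegUnitSnd_Fzi.iwzPowNeg_supp (right_ne_zero_of_mul hm)
    omega
  conv_eq := conv_phi_sub3_neg_one 𝓕.isPowFamily_iwzPowNeg 𝓕.isPowFamily_iwzPowNeg

theorem IsInv.conv_phi_swap02 (h : 𝓕.IsInv u E) : conv 𝓕.phi (E ∘ swap02) = mono R 0 := by
  rw [conv_comp_swap02, phi_swap02, h.conv_eq]
  funext ⟨a, b, c⟩
  simp only [mono, swap02, comp_apply, Prod.mk_eq_zero]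
  exact if_congr (by tauto) rfl rfl

theorem IsInv.swap02_cone12 (h : 𝓕.IsInv cone12 E) : 𝓕.IsInv cone01 (E ∘ swap02) where
  isCone := isCone_cone01
  bddBy := bddBy_cone01.2 fun e he => by
    have := bddBy_cone12.1 h.bddBy (swap02 e) he
    simp only [swap02] at this
    omega
  conv_eq := h.conv_phi_swap02

theorem IsInv.swap02_cone02 (h : 𝓕.IsInv cone02 E) : 𝓕.IsInv cone02 (E ∘ swap02) where
  isCone := isCone_cone02
  bddBy := bddBy_cone02.2 fun e he => by
    have := bddBy_cone02.1 h.bddBy (swap02 e) he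
    simp only [swap02] at this
    omega
  conv_eq := h.conv_phi_swap02

variable (𝓕)

/-- The expansion of `1/φ` with nonnegative exponents of `z₁`, `z₂`. -/
noncomputable def E0 : ℤ × ℤ × ℤ → R := sub3 (izwPow 𝓕.Fzi (-1)) (izwPow 𝓕.Fzi)

/-- The expansion of `1/φ` with nonnegative exponents of `z₀`, `z₂`. -/
noncomputable def E1 : ℤ × ℤ × ℤ → R := sub3 (iwzPowNeg 𝓕.Fzi (-1)) (izwPow 𝓕.Fzi)

/-- The expansion of `1/φ` with nonnegative exponents of `z₀`, `z₁`. -/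
noncomputable def E2 : ℤ × ℤ × ℤ → R := sub3 (iwzPowNeg 𝓕.Fzi (-1)) (iwzPowNeg 𝓕.Fzi)

theorem isInv_E0 : 𝓕.IsInv cone12 𝓕.E0 := isInv_izw 𝓕.isPowFamily_izwPow

theorem isInv_E1 : 𝓕.IsInv cone02 𝓕.E1 := isInv_iwz_izw

theorem isInv_E2 : 𝓕.IsInv cone01 𝓕.E2 := isInv_iwz_iwz

theorem E0_swap02 : 𝓕.E0 ∘ swap02 = 𝓕.E2 := 𝓕.isInv_E0.swap02_cone12.unique 𝓕.isInv_E2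

theorem E1_swap02 : 𝓕.E1 ∘ swap02 = 𝓕.E1 := 𝓕.isInv_E1.swap02_cone02.unique 𝓕.isInv_E1

theorem sub3_izw_iwz : sub3 (izwPow 𝓕.Fzi (-1)) (iwzPowNeg 𝓕.Fzi) = 𝓕.E0 :=
  (isInv_izw 𝓕.isPowFamily_iwzPowNeg).unique 𝓕.isInv_E0

theorem sub3_delta {P : ℤ → ℤ → ℤ → R} (hP : 𝓕.IsPowFamily P) (a b c : ℤ) :
    (∑ᶠ m : ℤ, 𝓕.delta a m * P m b c) =
      sub3 (izwPow 𝓕.Fzi (-1)) P (a, b, c) - sub3 (iwzPowNeg 𝓕.Fzi (-1)) P (a, b, c) := by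
  have key : ∀ {P' : ℤ → ℤ → ℤ → R}, 𝓕.IsPowFamily P' →
      (fun m => P' (-1) a m * P m b c).HasFiniteSupport := by
    intro P' hP'
    refine (Set.finite_Icc (-1 - a) (b + c)).subset fun m hm => ?_
    have := hP'.supp (left_ne_zero_of_mul hm)
    exact ⟨by omega, hP.supp (right_ne_zero_of_mul hm)⟩
  simp only [delta, sub_mul]
  rw [finsum_sub_distrib (key 𝓕.isPowFamily_izwPow) (key 𝓕.isPowFamily_iwzPowNeg)]
  rfl

theorem delta_izw (e0 e1 e2 : ℤ) : (∑ᶠ m : ℤ, 𝓕.delta e0 m * izwPow 𝓕.Fzi m e1 e2) =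
    (𝓕.E0 - 𝓕.E1) (e0, e1, e2) :=
  𝓕.sub3_delta 𝓕.isPowFamily_izwPow e0 e1 e2

theorem delta_iwz (e0 e1 e2 : ℤ) : (∑ᶠ m : ℤ, 𝓕.delta e0 m * iwzPowNeg 𝓕.Fzi m e1 e2) =
    (𝓕.E0 - 𝓕.E2) (e0, e1, e2) := by
  rw [𝓕.sub3_delta 𝓕.isPowFamily_iwzPowNeg, sub3_izw_iwz]
  rfl

theorem delta_izw_swap (e0 e1 e2 : ℤ) : (∑ᶠ m : ℤ, 𝓕.delta e2 m * izwPow 𝓕.Fzi m e1 e0) =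
    (𝓕.E2 - 𝓕.E1) (e0, e1, e2) := by
  rw [𝓕.delta_izw, Pi.sub_apply, Pi.sub_apply, ← congrFun 𝓕.E0_swap02, ← congrFun 𝓕.E1_swap02]
  rfl

theorem F02_conv_sub (h : 𝓕.IsInv u E) (h' : 𝓕.IsInv u' E') (e : ℤ × ℤ × ℤ) :
    conv 𝓕.F02 (E - E') e = (E - E') (e - (0, 1, 0)) := by
  refine h.conv_sub h' (fun e he => ?_) (by simp) 𝓕.exists_mono_sub_F02 e
  simp only [F02] at he
  split_ifs at he with h0
  · have := 𝓕.F_supp_ne he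
    exact ⟨this.1, h0.ge, this.2⟩
  · exact absurd rfl he

theorem Fzi10_conv_sub (h : 𝓕.IsInv u E) (h' : 𝓕.IsInv u' E') (e : ℤ × ℤ × ℤ) :
    conv 𝓕.Fzi10 (E - E') e = (E - E') (e - (0, 0, 1)) := by
  refine h.conv_sub h' (fun e he => ?_) (by simp) 𝓕.exists_mono_sub_Fzi10 e
  simp only [Fzi10] at he
  split_ifs at he with h0
  · have := 𝓕.Fzi_supp he
    exact ⟨this.2, this.1, h0.ge⟩
  · exact absurd rfl he

/-- A series bounded below that is annihilated by `E₂ - E₁` is annihilated by `E₀ - E₂`. -/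
theorem conv_E0_sub_E2_eq_zero {M : Type*} [AddCommGroup M] [Module R M] {L : ℤ}
    {Θ : ℤ × ℤ × ℤ → M} (hΘ : ∀ e, Θ e ≠ 0 → L ≤ e.1 ∧ L ≤ e.2.1 ∧ L ≤ e.2.2)
    (h : conv (𝓕.E2 - 𝓕.E1) Θ = 0) : conv (𝓕.E0 - 𝓕.E2) Θ = 0 := by
  obtain ⟨K, hK, hKL⟩ : ∃ K : ℤ, K ≤ L ∧ K ≤ 3 * L :=
    ⟨min L (3 * L), min_le_left _ _, min_le_right _ _⟩
  have h01 : BddBy cone01 K Θ := bddBy_cone01.2 fun e he => by have := hΘ e he; omega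
  have h02 : BddBy cone02 K Θ := bddBy_cone02.2 fun e he => by have := hΘ e he; omega
  have h12 : BddBy cone12 K Θ := bddBy_cone12.2 fun e he => by have := hΘ e he; omega
  have hΨ : conv 𝓕.E2 Θ = conv 𝓕.E1 Θ := by
    funext e
    rw [← sub_eq_zero, ← conv_sub_left_apply, h]
    · rfl
    · exact 𝓕.isInv_E2.bddBy.finite_conv cone01_injective h01 e
    · exact 𝓕.isInv_E1.bddBy.finite_conv cone02_injective h02 e
  have hb : BddBy cone12 (-1 + K) (conv 𝓕.E2 Θ) := by
    refine bddBy_cone12.2 fun e he => ?_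
    have h1 := bddBy_cone01.1 (𝓕.isInv_E2.bddBy.conv h01) e he
    rw [hΨ] at he
    have h2 := bddBy_cone02.1 (𝓕.isInv_E1.bddBy.conv h02) e he
    omega
  have h0 : conv 𝓕.E0 Θ = conv 𝓕.E2 Θ := by
    conv_lhs => rw [← 𝓕.isInv_E2.conv_phi h01]
    exact 𝓕.isInv_E0.conv_conv_phi hb
  funext e
  rw [conv_sub_left_apply, h0, sub_self]
  · rfl
  · exact 𝓕.isInv_E0.bddBy.finite_conv cone12_injective h12 e
  · exact 𝓕.isInv_E2.bddBy.finite_conv cone01_injective h01 e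

end FormalGroupLaw

end Inverses

section Relations

open Function

variable {R : Type*} [CommRing R] {M : Type*} [AddCommGroup M] [Module R M]

theorem exists_forall_neg_le (l : List ℤ) : ∃ Z : ℤ, 0 ≤ Z ∧ ∀ x ∈ l, -Z ≤ x := by
  induction l with
  | nil => exact ⟨0, le_rfl, by simp⟩
  | cons a l ih =>
    obtain ⟨Z, hZ, h⟩ := ih
    refine ⟨Z + |a|, by positivity, fun x hx => ?_⟩
    rcases List.mem_cons.1 hx with rfl | hx
    · have := neg_abs_le x; omega
    · have := h x hx
      have := abs_nonneg a
      omega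

/-- Iterated Laurent series: `∑ f n m wⁿ zᵐ ∈ M((z))((w))`. -/
def IsIterLaurent (f : ℤ → ℤ → M) : Prop :=
  (∃ B : ℤ, ∀ n, n < B → f n = 0) ∧ ∀ n, IsLaurent (f n)

theorem IsIterLaurent.exists_bound {f : ℤ → ℤ → M} (hf : IsIterLaurent f) :
    ∃ B : ℤ, (∀ n m, f n m ≠ 0 → B ≤ n) ∧ ∀ U : ℤ, ∃ K : ℤ, ∀ n m, f n m ≠ 0 → n ≤ U → K ≤ m := by
  obtain ⟨⟨B, hB⟩, hL⟩ := hf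
  have h1 : ∀ n m, f n m ≠ 0 → B ≤ n := by
    intro n m h
    by_contra hc
    exact h (by rw [hB n (by omega)]; rfl)
  refine ⟨B, h1, fun U => ?_⟩
  choose N hN using hL
  obtain ⟨K, hK⟩ := ((Set.finite_Icc B U).image N).bddBelow
  refine ⟨K, fun n m h hn => ?_⟩
  have h2 : N n ≤ m := by
    by_contra hc
    exact h (hN n m (by omega))
  exact (hK ⟨n, ⟨h1 n m h, hn⟩, rfl⟩).trans h2

/-- Series that are bounded below in the coordinate `u`, and in degree once `u` is bounded. -/
def IsSemi (u : ℤ × ℤ → ℤ) (S : ℤ × ℤ → M) : Prop :=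
  (∃ B : ℤ, ∀ p, S p ≠ 0 → B ≤ u p) ∧
    ∀ U : ℤ, ∃ K : ℤ, ∀ p, S p ≠ 0 → u p ≤ U → K ≤ p.1 + p.2

theorem IsIterLaurent.isSemi_fst {f : ℤ → ℤ → M} (hf : IsIterLaurent f) :
    IsSemi Prod.fst (uncurry f) := by
  obtain ⟨B, hB, h⟩ := hf.exists_bound
  refine ⟨⟨B, fun p hp => hB _ _ hp⟩, fun U => ?_⟩
  obtain ⟨K, hK⟩ := h U
  refine ⟨B + K, fun p hp hU => ?_⟩
  have := hB _ _ hp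
  have := hK _ _ hp hU
  omega

theorem IsSemi.exists_bound_conv {u : ℤ × ℤ → ℤ} (hu : u = Prod.fst ∨ u = Prod.snd) {S : ℤ × ℤ → M}
    (hS : IsSemi u S) {f : ℤ × ℤ → R} (hf : ∀ p, f p ≠ 0 → 0 ≤ p.1 ∧ 0 ≤ p.2) :
    ∃ B : ℤ, ∀ p, conv f S p ≠ 0 → B ≤ u p := by
  obtain ⟨⟨B, hB⟩, -⟩ := hS
  refine ⟨B, fun p hp => ?_⟩
  obtain ⟨q, hq⟩ := exists_ne_zero_of_finsum hp
  have h1 := hf q (by rintro h; simp [h] at hq)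
  have h2 := hB (p - q) (by rintro h; simp [h] at hq)
  rcases hu with rfl | rfl <;> simp at h2 <;> omega

variable (𝓕 : FormalGroupLaw R)

theorem FormalGroupLaw.pow2_F_supp {N : ℕ} (p : ℤ × ℤ) (h : uncurry (pow2 𝓕.F N) p ≠ 0) :
    0 ≤ p.1 ∧ 0 ≤ p.2 := by
  have h1 : BddBy (triple (.fst ℤ ℤ) (.snd ℤ ℤ) (.snd ℤ ℤ)) 0 (uncurry 𝓕.F) :=
    bddBy_triple.2 fun p hp => by
      have := 𝓕.F_supp_ne hp
      exact ⟨this.1, this.2, this.2⟩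
  have h2 := bddBy_triple.1 (h1.cpow N) p (by rwa [← pow2_eq_cpow])
  exact ⟨h2.1, h2.2.1⟩

/-- A family of series `g m` with `g (m + 1) = F ⋆ g m`, with degrees bounded below. -/
structure FormalGroupLaw.IsRel (g : ℤ → ℤ × ℤ → R) : Prop where
  rel : ∀ m, g (m + 1) = conv (uncurry 𝓕.F) (g m)
  deg : ∃ D : ℤ, ∀ m p, g m p ≠ 0 → m ≤ p.1 + p.2 + D

namespace FormalGroupLaw.IsRel

variable {𝓕} {g : ℤ → ℤ × ℤ → R}

theorem pow (hg : 𝓕.IsRel g) (m : ℤ) (N : ℕ) :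
    g (m + N) = conv (uncurry (pow2 𝓕.F N)) (g m) := by
  induction N with
  | zero =>
    have : uncurry (pow2 𝓕.F 0) = mono R 0 := by
      funext p
      exact pow2_eq_cpow _ _ _ _
    rw [this]
    funext e
    rw [conv_mono, sub_zero]
    simp
  | succ N ih =>
    have h1 : ∀ N, uncurry (pow2 𝓕.F N) = cpow (uncurry 𝓕.F) N := fun N => by
      funext p
      exact pow2_eq_cpow _ _ _ _
    rw [Nat.cast_succ, ← add_assoc, hg.rel, ih, h1, h1, cpow]
    funext e
    refine conv_assoc_apply _ _ _ _ ?_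
    obtain ⟨D, hD⟩ := hg.deg
    have hI := Set.finite_Icc 0 (e.1 + e.2 + D - m)
    refine ((hI.prod hI).prod (hI.prod hI)).subset ?_
    rintro ⟨p, q⟩ ⟨hp, hq, h⟩
    rw [← h1] at hq
    have h2 : 0 ≤ p.1 ∧ 0 ≤ p.2 := 𝓕.F_supp_ne hp
    have h3 := 𝓕.pow2_F_supp q hq
    have h4 := hD _ _ h
    simp only [Prod.fst_sub, Prod.snd_sub] at h4
    simp only [Set.mem_prod, Set.mem_Icc]
    omega

theorem zpow (hg : 𝓕.IsRel g) (hB : ∃ B : ℤ, ∀ m p, g m p ≠ 0 → B ≤ p.2) (m l : ℤ) :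
    g (m + l) = conv (uncurry (izwPow 𝓕.F l)) (g m) := by
  have hnat : ∀ N : ℕ, uncurry (izwPow 𝓕.F N) = uncurry (pow2 𝓕.F N) := fun N => by
    funext p
    exact 𝓕.isUnitFst_F.izwPow_natCast N _ _
  obtain ⟨N, rfl | rfl⟩ := l.eq_nat_or_neg
  · rw [hg.pow, hnat]
  · have h1 := hg.pow (m + -N) N
    rw [neg_add_cancel_right] at h1
    rw [h1]
    obtain ⟨D, hD⟩ := hg.deg
    obtain ⟨B, hB⟩ := hB
    obtain ⟨Z, hZ, h⟩ := exists_forall_neg_le [B, m + -N - D, -N]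
    simp only [List.mem_cons, List.not_mem_nil, or_false, forall_eq_or_imp, forall_eq] at h
    have hP : ∀ l : ℤ, -Z ≤ l → BddBy cone₂ (-Z) (uncurry (izwPow 𝓕.F l)) := fun l hl =>
      bddBy_triple.2 fun p hp => by
        have := 𝓕.isUnitFst_F.izwPow_supp hp
        simp only [AddMonoidHom.coe_snd, AddMonoidHom.add_apply, AddMonoidHom.coe_fst]
        omega
    have hgb : BddBy cone₂ (-Z) (g (m + -N)) := bddBy_triple.2 fun p hp => by
      have := hD _ _ hp
      have := hB _ _ hp
      simp only [AddMonoidHom.coe_snd, AddMonoidHom.add_apply, AddMonoidHom.coe_fst]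
      omega
    have hone : conv (uncurry (pow2 𝓕.F N)) (uncurry (izwPow 𝓕.F (-N))) = mono R 0 := by
      funext p
      have h2 := 𝓕.isUnitFst_F.izwPow_add N (-N) p.1 p.2
      rw [add_neg_cancel, 𝓕.isUnitFst_F.izwPow_zero] at h2
      refine h2.symm.trans ?_
      simp [mono, Prod.ext_iff]
    rw [← hnat, conv_assoc_of_bddBy cone₂_injective (hP _ h.2.2) (hP _ (by omega)) hgb, hnat,
      conv_comm (uncurry (izwPow 𝓕.F (-N))), hone]
    funext e
    rw [conv_mono, sub_zero]

theorem swap (hg : 𝓕.IsRel g) : 𝓕.IsRel fun m p => g m p.swap where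
  rel m := by
    funext e
    rw [hg.rel, conv, conv, ← finsum_comp_equiv (Equiv.prodComm ℤ ℤ)]
    refine finsum_congr fun p => ?_
    simp only [uncurry, Equiv.prodComm_apply, Prod.fst_swap, Prod.snd_swap, 𝓕.F_comm p.2,
      Prod.swap_sub]
  deg := by
    obtain ⟨D, hD⟩ := hg.deg
    refine ⟨D, fun m p hp => ?_⟩
    have := hD _ _ hp
    simp only [Prod.fst_swap, Prod.snd_swap] at this
    omega

theorem zpow_swap (hg : 𝓕.IsRel g) (hB : ∃ B : ℤ, ∀ m p, g m p ≠ 0 → B ≤ p.1) (m l x y : ℤ) :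
    g (m + l) (x, y) = ∑ᶠ p : ℤ × ℤ, izwPow 𝓕.F l p.1 p.2 * g m (x - p.2, y - p.1) := by
  obtain ⟨B, hB⟩ := hB
  exact congrFun (hg.swap.zpow ⟨B, fun m p hp => hB _ _ hp⟩ m l) (y, x)

theorem conv_eq (hg : 𝓕.IsRel g) {u : ℤ × ℤ → ℤ} (hu : u = Prod.fst ∨ u = Prod.snd)
    (hB : ∃ B : ℤ, ∀ m p, g m p ≠ 0 → B ≤ u p) {S : ℤ × ℤ → M} (hS : IsSemi u S) (N : ℕ) :
    conv (g N) S 0 = conv (g 0) (conv (uncurry (pow2 𝓕.F N)) S) 0 := by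
  have h1 := hg.pow 0 N
  rw [zero_add] at h1
  rw [h1, conv_comm, conv_assoc_apply]
  obtain ⟨D, hD⟩ := hg.deg
  obtain ⟨B, hB⟩ := hB
  obtain ⟨⟨B', hB'⟩, hK⟩ := hS
  obtain ⟨K, hK⟩ := hK (-B)
  obtain ⟨Z, hZ, h⟩ := exists_forall_neg_le [B, B', K, -D]
  simp only [List.mem_cons, List.not_mem_nil, or_false, forall_eq_or_imp, forall_eq] at h
  have hI := Set.finite_Icc (-(2 * Z)) (2 * Z)
  refine ((hI.prod hI).prod (hI.prod hI)).subset ?_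
  rintro ⟨p, q⟩ ⟨hp, hq, hr⟩
  have h2 := hD _ _ hp
  have h3 := hB _ _ hp
  have h4 := 𝓕.pow2_F_supp q hq
  have h5 := hB' _ hr
  have h6 := hK _ hr
  simp only [Set.mem_prod, Set.mem_Icc]
  rcases hu with rfl | rfl <;> simp at * <;> omega

end FormalGroupLaw.IsRel

theorem IsIterLaurent.isSemi_substFProd {Ya : M → ℤ → M} {d : ℤ → M}
    (h : IsIterLaurent fun n => Ya (d n)) : IsSemi Prod.snd (uncurry (substFProd 𝓕 Ya d)) := by
  obtain ⟨B, hB, hK⟩ := h.exists_bound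
  have key : ∀ p, uncurry (substFProd 𝓕 Ya d) p ≠ 0 → ∃ q : ℤ × ℤ, Ya (d q.2) q.1 ≠ 0 ∧
      0 ≤ p.2 - q.2 ∧ q.1 ≤ p.1 + (p.2 - q.2) := by
    intro p hp
    obtain ⟨q, hq⟩ := exists_ne_zero_of_finsum hp
    refine ⟨q, by rintro h; simp [h] at hq, ?_⟩
    exact 𝓕.isUnitFst_F.izwPow_supp (by rintro h; simp [h] at hq)
  refine ⟨⟨B, fun p hp => ?_⟩, fun U => ?_⟩
  · obtain ⟨q, h1, h2, h3⟩ := key p hp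
    have := hB _ _ h1
    omega
  · obtain ⟨K, hK⟩ := hK U
    refine ⟨B + K, fun p hp hU => ?_⟩
    obtain ⟨q, h1, h2, h3⟩ := key p hp
    have := hB _ _ h1
    have := hK _ _ h1 (by omega)
    omega

theorem FormalGroupLaw.IsRel.conv_substFProd {𝓕 : FormalGroupLaw R} {g : ℤ → ℤ × ℤ → R}
    (hg : 𝓕.IsRel g)
    (hb : ∃ B : ℤ, ∀ m p, g m p ≠ 0 → B ≤ p.2) {Ya : M → ℤ → M} {d : ℤ → M}
    (h : IsIterLaurent fun n => Ya (d n)) (m : ℤ) :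
    conv (g m) (uncurry (substFProd 𝓕 Ya d)) 0 =
      ∑ᶠ q : ℤ × ℤ, g (m + q.1) (0, -q.2) • Ya (d q.2) q.1 := by
  obtain ⟨D, hD⟩ := hg.deg
  obtain ⟨C, hC⟩ := id hb
  obtain ⟨B, hB, hK⟩ := h.exists_bound
  obtain ⟨K, hK⟩ := hK (-C)
  let T : (ℤ × ℤ) × (ℤ × ℤ) → M := fun y =>
    (g m y.1 * izwPow 𝓕.F y.2.1 (-y.1.1) (-y.1.2 - y.2.2)) • Ya (d y.2.2) y.2.1
  have hT : ∀ x y p q, T ((x, y), (p, q)) ≠ 0 → m ≤ x + y + D ∧ C ≤ y ∧ 0 ≤ -y - q ∧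
      p ≤ -x + (-y - q) ∧ B ≤ q ∧ K ≤ p := by
    intro x y p q h
    have h1 : Ya (d q) p ≠ 0 := by
      intro h'
      simp [T, h'] at h
    have h2 : g m (x, y) * izwPow 𝓕.F p (-x) (-y - q) ≠ 0 := by
      intro h'
      simp [T, h'] at h
    have h3 := hD _ _ (left_ne_zero_of_mul h2)
    have h4 := hC _ _ (left_ne_zero_of_mul h2)
    have h5 := 𝓕.isUnitFst_F.izwPow_supp (right_ne_zero_of_mul h2)
    have h6 := hB _ _ h1
    simp only at h3 h4
    exact ⟨h3, h4, h5.1, h5.2, h6, hK _ _ h1 (by omega)⟩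
  have hfin : {y | T y ≠ 0}.Finite := by
    obtain ⟨Z, hZ, hl⟩ := exists_forall_neg_le [C, B, K, -D, m]
    simp only [List.mem_cons, List.not_mem_nil, or_false, forall_eq_or_imp, forall_eq] at hl
    have hI := Set.finite_Icc (-(4 * Z)) (4 * Z)
    refine ((hI.prod hI).prod (hI.prod hI)).subset ?_
    rintro ⟨⟨x, y⟩, p, q⟩ h
    have := hT x y p q h
    simp only [Set.mem_prod, Set.mem_Icc]
    omega
  calc _ = ∑ᶠ x, ∑ᶠ y, T (x, y) := by
        refine finsum_congr fun x => ?_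
        simp only [uncurry, substFProd]
        rw [smul_finsum_of_ne_zero]
        · refine finsum_congr fun q => ?_
          simp [T, mul_smul]
        · intro _
          obtain ⟨K', hK'⟩ := h.exists_bound.choose_spec.2 (-x.2)
          refine ((Set.finite_Icc K' (-x.1 + -x.2 - B)).prod (Set.finite_Icc B (-x.2))).subset ?_
          rintro ⟨p, q⟩ hpq
          have h1 : Ya (d q) p ≠ 0 := by
            intro h'
            simp [h'] at hpq
          have h2 := 𝓕.isUnitFst_F.izwPow_supp
            (show izwPow 𝓕.F p (0 - x).1 ((0 - x).2 - q) ≠ 0 by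
              intro h'
              simp only [mem_support, h', zero_smul, ne_eq, not_true] at hpq)
          have h3 := hB _ _ h1
          simp only [Prod.fst_sub, Prod.snd_sub, Prod.fst_zero, Prod.snd_zero] at h2
          have h4 := hK' _ _ h1 (by omega)
          simp only [Set.mem_prod, Set.mem_Icc]
          omega
    _ = ∑ᶠ y, ∑ᶠ x, T (x, y) := finsum_finsum_swap _ hfin
    _ = _ := by
        refine finsum_congr fun q => ?_
        rw [hg.zpow hb, conv_comm, conv, finsum_smul_of_ne_zero]
        · refine finsum_congr fun x => ?_
          have h1 : (0, -q.2) - x = (-x.1, -x.2 - q.2) := by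
            ext <;> simp only [Prod.fst_sub, Prod.snd_sub] <;> ring
          rw [h1]
          rfl
        · intro _
          refine ((Set.finite_Icc (m + q.2 - D) (-q.1 - q.2 - C)).prod
            (Set.finite_Icc C (-q.2))).subset ?_
          rintro ⟨x, y⟩ hxy
          have h1 := hD _ _ (left_ne_zero_of_mul hxy)
          have h2 := hC _ _ (left_ne_zero_of_mul hxy)
          have h3 := 𝓕.isUnitFst_F.izwPow_supp (right_ne_zero_of_mul hxy)
          simp only [Prod.fst_sub, Prod.snd_sub] at h1 h2 h3
          simp only [Set.mem_prod, Set.mem_Icc]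
          omega

end Relations

section Slices

open Function

variable {R : Type*} [CommRing R] {M : Type*} [AddCommGroup M] [Module R M]
variable (𝓕 : FormalGroupLaw R)

theorem finsum_finsum_finsum_eq {α β γ δ N : Type*} [AddCommMonoid N] (σ : (α × β) × γ ≃ δ)
    (T : δ → N) (h : {t | T t ≠ 0}.Finite) :
    ∑ᶠ a, ∑ᶠ b, ∑ᶠ c, T (σ ((a, b), c)) = ∑ᶠ t, T t := by
  have h3 : {p : (α × β) × γ | T (σ (p.1, p.2)) ≠ 0}.Finite := h.preimage σ.injective.injOn
  have h2 : {p : α × β | ∑ᶠ c, T (σ (p, c)) ≠ 0}.Finite := by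
    refine (h3.image Prod.fst).subset fun p hp => ?_
    obtain ⟨c, hc⟩ := exists_ne_zero_of_finsum hp
    exact ⟨(p, c), hc, rfl⟩
  rw [finsum_finsum_eq (fun a b => ∑ᶠ c, T (σ ((a, b), c))) h2,
    finsum_finsum_eq (fun p c => T (σ (p, c))) h3]
  exact finsum_comp_equiv σ (f := T)

namespace FormalGroupLaw

theorem Fzi_eq (i l : ℤ) :
    𝓕.Fzi i l = ∑ᶠ k : ℤ, 𝓕.F i k * pow1 𝓕.inv k.toNat l := by
  rw [finsum_int_eq_nat]
  · rfl
  · intro k hk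
    rw [𝓕.F_supp i k (Or.inr hk), zero_mul]

/-- `Δ` behaves like a delta distribution supported on `z₁ = F(z₀, z₂)`, i.e. `z₂ = F(z₁, ι z₀)`. -/
structure IsDelta (Δ : ℤ × ℤ × ℤ → R) : Prop where
  deg : ∀ e, Δ e ≠ 0 → -1 ≤ e.1 + e.2.1 + e.2.2
  F02_conv : ∀ e, conv 𝓕.F02 Δ e = Δ (e - (0, 1, 0))
  Fzi10_conv : ∀ e, conv 𝓕.Fzi10 Δ e = Δ (e - (0, 0, 1))

theorem IsInv.isDelta {u u' : ℤ × ℤ × ℤ →+ (Fin 3 → ℤ)} {E E' : ℤ × ℤ × ℤ → R}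
    (h : 𝓕.IsInv u E) (hh : 𝓕.IsInv u' E') (hE : ∀ e, E e ≠ 0 → -1 ≤ e.1 + e.2.1 + e.2.2)
    (hE' : ∀ e, E' e ≠ 0 → -1 ≤ e.1 + e.2.1 + e.2.2) : 𝓕.IsDelta (E - E') where
  deg e he := by
    by_contra hc
    have h1 : E e = 0 := by
      by_contra h0
      exact hc (hE e h0)
    have h2 : E' e = 0 := by
      by_contra h0
      exact hc (hE' e h0)
    exact he (by simp [h1, h2])
  F02_conv := 𝓕.F02_conv_sub h hh
  Fzi10_conv := 𝓕.Fzi10_conv_sub h hh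

/-- The coefficients of `Δ` around the exponent `e`, as a family of series in `z₀`, `z₂`. -/
def slice1 (Δ : ℤ × ℤ × ℤ → R) (e : ℤ × ℤ × ℤ) (m : ℤ) (p : ℤ × ℤ) : R :=
  Δ (e.1 + p.1, e.2.1 - m, e.2.2 + p.2)

/-- The coefficients of `Δ` around the exponent `e`, as a family of series in `ι z₀`, `z₁`. -/
noncomputable def slice2 (Δ : ℤ × ℤ × ℤ → R) (e : ℤ × ℤ × ℤ) (m : ℤ) (p : ℤ × ℤ) : R :=
  ∑ᶠ j : ℤ, iotaPow 𝓕.inv (-p.1) j * Δ (e.1 - j, e.2.1 + p.2, e.2.2 - m)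

variable {𝓕} {Δ : ℤ × ℤ × ℤ → R}

theorem IsDelta.isRel_slice1 (h : 𝓕.IsDelta Δ) (e : ℤ × ℤ × ℤ) : 𝓕.IsRel (slice1 Δ e) where
  rel m := by
    funext ⟨x, y⟩
    have h1 := h.F02_conv (e.1 + x, e.2.1 - m, e.2.2 + y)
    rw [conv, finsum_eq_of_range (g := fun p : ℤ × ℤ => (p.1, (0 : ℤ), p.2))] at h1
    · rw [slice1, conv]
      simp only [Prod.mk_sub_mk, sub_zero] at h1
      rw [← sub_sub, ← h1]
      refine finsum_congr fun p => ?_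
      simp [F02, slice1, uncurry, add_sub_assoc]
    · rintro ⟨a, b⟩ ⟨c, d⟩ h
      simpa using h
    · rintro ⟨a, b, c⟩ hx
      by_cases hb : b = 0
      · exact ⟨(a, c), by rw [hb]⟩
      · simp [F02, hb] at hx
  deg := ⟨e.1 + e.2.1 + e.2.2 + 1, fun m p hp => by
    have := h.deg _ hp
    simp only at this
    omega⟩

theorem slice2_supp (h : 𝓕.IsDelta Δ) {e : ℤ × ℤ × ℤ} {m : ℤ} {p : ℤ × ℤ} {j : ℤ}
    (hj : iotaPow 𝓕.inv (-p.1) j * Δ (e.1 - j, e.2.1 + p.2, e.2.2 - m) ≠ 0) :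
    -p.1 ≤ j ∧ m ≤ p.2 - j + (e.1 + e.2.1 + e.2.2 + 1) := by
  have h1 := iotaPow_supp 𝓕.inv_supp 𝓕.inv_one (left_ne_zero_of_mul hj)
  have h2 := h.deg _ (right_ne_zero_of_mul hj)
  simp only at h2
  omega

theorem IsDelta.isRel_slice2 (h : 𝓕.IsDelta Δ) (e : ℤ × ℤ × ℤ) : 𝓕.IsRel (𝓕.slice2 Δ e) where
  rel m := by
    funext ⟨x, y⟩
    let T : ((ℤ × ℤ) × ℤ) × ℤ → R := fun t => 𝓕.F t.1.1.2 t.1.1.1 * pow1 𝓕.inv t.1.1.1.toNat t.1.2 *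
      (iotaPow 𝓕.inv (-x) t.2 * Δ (e.1 - t.2 - t.1.2, e.2.1 + y - t.1.1.2, e.2.2 - m))
    have hT : ∀ i k l j, T (((k, i), l), j) ≠ 0 → 0 ≤ i ∧ 0 ≤ k ∧ k ≤ l ∧ -x ≤ j ∧
        -1 ≤ e.1 - j - l + (e.2.1 + y - i) + (e.2.2 - m) := by
      intro i k l j hT
      have h1 := left_ne_zero_of_mul hT
      have h2 := right_ne_zero_of_mul hT
      have h3 : 0 ≤ i ∧ 0 ≤ k := 𝓕.F_supp_ne (left_ne_zero_of_mul h1)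
      have h4 := 𝓕.pow1_inv_supp (right_ne_zero_of_mul h1)
      have h5 := iotaPow_supp 𝓕.inv_supp 𝓕.inv_one (left_ne_zero_of_mul h2)
      have h6 := h.deg _ (right_ne_zero_of_mul h2)
      simp only at h4 h6
      omega
    have hfin : {t | T t ≠ 0}.Finite := by
      obtain ⟨Z, hZ, hl⟩ := exists_forall_neg_le [-x, -(e.1 + (e.2.1 + y) + (e.2.2 - m) + 1)]
      simp only [List.mem_cons, List.not_mem_nil, or_false, forall_eq_or_imp, forall_eq] at hl
      have hI := Set.finite_Icc (-(2 * Z)) (2 * Z)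
      refine (((hI.prod hI).prod hI).prod hI).subset ?_
      rintro ⟨⟨⟨k, i⟩, l⟩, j⟩ ht
      have := hT i k l j ht
      simp only [Set.mem_prod, Set.mem_Icc]
      omega
    have h1 : 𝓕.slice2 Δ e (m + 1) (x, y) = ∑ᶠ t, T t := by
      let σ : (ℤ × (ℤ × ℤ)) × ℤ ≃ ((ℤ × ℤ) × ℤ) × ℤ :=
        { toFun := fun t => (((t.2, t.1.2.1), t.1.2.2), t.1.1)
          invFun := fun t => ((t.2, (t.1.1.2, t.1.2)), t.1.1.1)
          left_inv := fun _ => rfl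
          right_inv := fun _ => rfl }
      rw [← finsum_finsum_finsum_eq σ T hfin, slice2]
      refine finsum_congr fun j => ?_
      have h1 := h.Fzi10_conv (e.1 - j, e.2.1 + y, e.2.2 - m)
      rw [conv, finsum_eq_of_range (g := fun p : ℤ × ℤ => (p.2, p.1, (0 : ℤ)))] at h1
      · simp only [Prod.mk_sub_mk, sub_zero, Fzi10, if_true] at h1
        rw [← sub_sub, ← h1, mul_finsum']
        · refine finsum_congr fun p => ?_
          rw [Fzi_eq, smul_eq_mul, mul_left_comm, finsum_mul']
          · rfl
          · refine (Set.finite_Icc 0 p.2).subset fun k hk => ?_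
            have h3 : 0 ≤ p.1 ∧ 0 ≤ k := 𝓕.F_supp_ne (left_ne_zero_of_mul hk)
            have h4 := 𝓕.pow1_inv_supp (right_ne_zero_of_mul hk)
            simp only [Set.mem_Icc]
            omega
        · have hI := Set.finite_Icc 0 (1 + e.1 - j + e.2.1 + y + e.2.2 - m)
          refine (hI.prod hI).subset fun p hp => ?_
          have h3 := 𝓕.Fzi_supp (left_ne_zero_of_mul hp)
          have h4 := h.deg _ (right_ne_zero_of_mul hp)
          simp only at h4
          simp only [Set.mem_prod, Set.mem_Icc]
          omega
      · rintro ⟨a, b⟩ ⟨c, d⟩ h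
        simpa [and_comm] using h
      · rintro ⟨a, b, c⟩ hx
        by_cases hc : c = 0
        · exact ⟨(b, a), by rw [hc]⟩
        · simp [Fzi10, hc] at hx
    have h2 : conv (uncurry 𝓕.F) (𝓕.slice2 Δ e m) (x, y) = ∑ᶠ t, T t := by
      let σ : ((ℤ × ℤ) × ℤ) × ℤ ≃ ((ℤ × ℤ) × ℤ) × ℤ :=
        { toFun := fun t => ((t.1.1, t.2), t.1.2 - t.2)
          invFun := fun t => ((t.1.1, t.2 + t.1.2), t.1.2)
          left_inv := fun t => by simp
          right_inv := fun t => by simp }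
      rw [← finsum_finsum_finsum_eq σ T hfin, conv]
      refine finsum_congr fun p => ?_
      have hp : uncurry 𝓕.F p = 𝓕.F p.2 p.1 := 𝓕.F_comm _ _
      rw [hp, slice2, smul_finsum_of_ne_zero]
      · refine finsum_congr fun j => ?_
        by_cases hF : 𝓕.F p.2 p.1 = 0
        · simp [T, σ, hF]
        · have h3 : 0 ≤ p.2 ∧ 0 ≤ p.1 := 𝓕.F_supp_ne hF
          have h4 : -((x, y) - p).1 = (p.1.toNat : ℤ) + -x := by
            rw [Int.toNat_of_nonneg h3.2, Prod.fst_sub]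
            ring
          rw [h4, iotaPow_add 𝓕.inv_supp 𝓕.inv_one, mulS, finsum_mul', smul_eq_mul, mul_finsum']
          · refine finsum_congr fun l => ?_
            simp only [T, σ, Equiv.coe_fn_mk, Prod.snd_sub, smul_eq_mul,
              add_sub_assoc]
            rw [show e.1 - (j - l) - l = e.1 - j by ring]
            ring
          · refine (Set.finite_Icc 0 (j + x)).subset fun l hl => ?_
            have h5 := left_ne_zero_of_mul hl
            have h6 := 𝓕.pow1_inv_supp (left_ne_zero_of_mul h5)
            have h7 := iotaPow_supp 𝓕.inv_supp 𝓕.inv_one (right_ne_zero_of_mul h5)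
            simp only [Set.mem_Icc]
            omega
          · refine (Set.finite_Icc 0 (j + x)).subset fun l hl => ?_
            have h6 := 𝓕.pow1_inv_supp (left_ne_zero_of_mul hl)
            have h7 := iotaPow_supp 𝓕.inv_supp 𝓕.inv_one (right_ne_zero_of_mul hl)
            simp only [Set.mem_Icc]
            omega
      · intro _
        refine (Set.finite_Icc (p.1 - x) (y - p.2 + (e.1 + e.2.1 + e.2.2 + 1) - m)).subset
          fun j hj => ?_
        have := slice2_supp h hj
        simp only [Prod.fst_sub, Prod.snd_sub] at this
        simp only [Set.mem_Icc]
        omega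
    rw [h1, h2]
  deg := ⟨e.1 + e.2.1 + e.2.2 + 1, fun m p hp => by
    obtain ⟨j, hj⟩ := exists_ne_zero_of_finsum hp
    have := slice2_supp h hj
    omega⟩

theorem slice2_zero (e : ℤ × ℤ × ℤ) (m y : ℤ) :
    𝓕.slice2 Δ e m (0, y) = Δ (e.1, e.2.1 + y, e.2.2 - m) := by
  rw [slice2, finsum_eq_single _ 0]
  · simp [iotaPow_zero]
  · intro j hj
    simp [iotaPow_zero, hj]

theorem conv_apply_zero {G : Type*} [AddCommGroup G] (g : G → R) (S : G → M) :
    conv g S 0 = ∑ᶠ q, g (-q) • S q := by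
  rw [conv, ← finsum_comp_equiv (Equiv.neg G)]
  simp

/-- A series in `z₀`, `z₂` as a series in `z₀`, `z₁`, `z₂`. -/
def ext02 (X : ℤ × ℤ → M) (p : ℤ × ℤ × ℤ) : M := if p.2.1 = 0 then X (p.1, p.2.2) else 0

/-- A series in `z₀`, `z₁` as a series in `z₀`, `z₁`, `z₂`. -/
def ext01 (X : ℤ × ℤ → M) (p : ℤ × ℤ × ℤ) : M := if p.2.2 = 0 then X (p.1, p.2.1) else 0

variable (𝓕) in
/-- The substitution `z₀ ↦ ι z₀` in the first variable. -/
noncomputable def substInv (X : ℤ × ℤ → M) (p : ℤ × ℤ) : M :=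
  ∑ᶠ k : ℤ, iotaPow 𝓕.inv k p.1 • X (k, p.2)

theorem conv_slice1_zero (e : ℤ × ℤ × ℤ) (X : ℤ × ℤ → M) :
    conv (slice1 Δ e 0) X 0 = conv Δ (ext02 X) e := by
  rw [conv, conv, finsum_eq_of_range (g := fun p : ℤ × ℤ => (e.1 + p.1, e.2.1, e.2.2 + p.2))]
  · refine finsum_congr fun p => ?_
    simp only [slice1, ext02, sub_zero, zero_sub, Prod.fst_sub, Prod.snd_sub, sub_self, if_true,
      sub_add_cancel_left]
    rfl
  · rintro ⟨a, b⟩ ⟨c, d⟩ h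
    simpa using h
  · rintro ⟨a, b, c⟩ hx
    have hb : e.2.1 - b = 0 := by
      by_contra hb
      simp [ext02, hb] at hx
    exact ⟨(a - e.1, c - e.2.2), by ext <;> simp; omega⟩

theorem conv_slice2_zero (h : 𝓕.IsDelta Δ) (e : ℤ × ℤ × ℤ) {X : ℤ × ℤ → M} {L : ℤ}
    (hX : ∀ p, X p ≠ 0 → L ≤ p.1 ∧ L ≤ p.2) :
    conv (𝓕.slice2 Δ e 0) X 0 = conv Δ (ext01 (𝓕.substInv X)) e := by
  let T : (ℤ × ℤ) × ℤ → M := fun t => (iotaPow 𝓕.inv t.1.1 t.2 *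
    Δ (e.1 - t.2, e.2.1 - t.1.2, e.2.2)) • X t.1
  have hT : ∀ k n j, T ((k, n), j) ≠ 0 → L ≤ k ∧ L ≤ n ∧ k ≤ j ∧
      -1 ≤ e.1 - j + (e.2.1 - n) + e.2.2 := by
    intro k n j hT
    have h1 : X (k, n) ≠ 0 := by
      rintro h'
      simp [T, h'] at hT
    have h2 := left_ne_zero_of_smul hT
    have h3 := hX _ h1
    have h4 := iotaPow_supp 𝓕.inv_supp 𝓕.inv_one (left_ne_zero_of_mul h2)
    have h5 := h.deg _ (right_ne_zero_of_mul h2)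
    exact ⟨h3.1, h3.2, h4, h5⟩
  have hfin : {t | T t ≠ 0}.Finite := by
    obtain ⟨Z, hZ, hl⟩ := exists_forall_neg_le [L, -(e.1 + e.2.1 + e.2.2 + 1)]
    simp only [List.mem_cons, List.not_mem_nil, or_false, forall_eq_or_imp, forall_eq] at hl
    have hI := Set.finite_Icc (-(3 * Z)) (3 * Z)
    refine ((hI.prod hI).prod hI).subset ?_
    rintro ⟨⟨k, n⟩, j⟩ ht
    have := hT k n j ht
    simp only [Set.mem_prod, Set.mem_Icc]
    omega
  have hfin' : ∀ p : ℤ × ℤ, (fun k : ℤ => iotaPow 𝓕.inv k p.1 • X (k, p.2)).HasFiniteSupport := by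
    intro p
    refine (Set.finite_Icc L p.1).subset fun k hk => ?_
    have h1 := iotaPow_supp 𝓕.inv_supp 𝓕.inv_one (left_ne_zero_of_smul hk)
    have h2 := hX _ (right_ne_zero_of_smul hk)
    exact ⟨h2.1, h1⟩
  have h1 : conv (𝓕.slice2 Δ e 0) X 0 = ∑ᶠ q, ∑ᶠ j, T (q, j) := by
    rw [conv_apply_zero]
    refine finsum_congr fun q => ?_
    rw [slice2, finsum_smul_of_ne_zero]
    · simp [T, sub_eq_add_neg]
    · intro _
      refine (Set.finite_Icc q.1 (-q.2 + (e.1 + e.2.1 + e.2.2 + 1))).subset fun j hj => ?_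
      have := slice2_supp h hj
      simp only [Prod.fst_neg, Prod.snd_neg] at this
      simp only [Set.mem_Icc]
      omega
  have h2 : conv Δ (ext01 (𝓕.substInv X)) e = ∑ᶠ p : ℤ × ℤ, ∑ᶠ k, T ((k, p.2), p.1) := by
    rw [conv, finsum_eq_of_range (g := fun p : ℤ × ℤ => (e.1 - p.1, e.2.1 - p.2, e.2.2))]
    · refine finsum_congr fun p => ?_
      simp only [ext01, Prod.fst_sub, Prod.snd_sub, sub_sub_cancel, sub_self, if_true, substInv]
      rw [smul_finsum_of_ne_zero _ _ fun _ => hfin' p]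
      refine finsum_congr fun k => ?_
      rw [smul_smul, mul_comm]
    · rintro ⟨a, b⟩ ⟨c, d⟩ h
      simpa using h
    · rintro ⟨a, b, c⟩ hx
      have hb : e.2.2 - c = 0 := by
        by_contra hb
        simp [ext01, hb] at hx
      exact ⟨(e.1 - a, e.2.1 - b), by ext <;> simp; omega⟩
  let σ : ((ℤ × ℤ) × ℤ) ≃ ((ℤ × ℤ) × ℤ) :=
    { toFun := fun t => ((t.2, t.1.2), t.1.1)
      invFun := fun t => ((t.2, t.1.2), t.1.1)
      left_inv := fun _ => rfl
      right_inv := fun _ => rfl }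
  have h3 := finsum_finsum_eq (fun (p : ℤ × ℤ) k => T ((k, p.2), p.1))
    (hfin.preimage σ.injective.injOn)
  rw [h1, h2, finsum_finsum_eq _ hfin, h3]
  exact (finsum_comp_equiv σ (f := T)).symm

end FormalGroupLaw

end Slices

section Jacobi

open Function

variable {R : Type*} [CommRing R] {M : Type*} [AddCommGroup M] [Module R M]
variable {𝓕 : FormalGroupLaw R}

namespace FormalGroupLaw

variable {Δ : ℤ × ℤ × ℤ → R}

/-- `Δ` is bounded below in the coordinate `u`. -/
def IsBelow (u : ℤ × ℤ × ℤ → ℤ) (Δ : ℤ × ℤ × ℤ → R) : Prop := ∀ e, Δ e ≠ 0 → -1 ≤ u e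

theorem IsBelow.sub {u : ℤ × ℤ × ℤ → ℤ} {E E' : ℤ × ℤ × ℤ → R} (h : IsBelow u E)
    (h' : IsBelow u E') : IsBelow u (E - E') := by
  intro e he
  by_contra hc
  have h1 : E e = 0 := by
    by_contra h0
    exact hc (h e h0)
  have h2 : E' e = 0 := by
    by_contra h0
    exact hc (h' e h0)
  exact he (by simp [h1, h2])

theorem IsBelow.slice1_fst (h : IsBelow (fun e => e.1) Δ) (e : ℤ × ℤ × ℤ) :
    ∃ B : ℤ, ∀ m p, slice1 Δ e m p ≠ 0 → B ≤ p.1 :=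
  ⟨-1 - e.1, fun m p hp => by have := h _ hp; simp only at this; omega⟩

theorem IsBelow.slice1_snd (h : IsBelow (fun e => e.2.2) Δ) (e : ℤ × ℤ × ℤ) :
    ∃ B : ℤ, ∀ m p, slice1 Δ e m p ≠ 0 → B ≤ p.2 :=
  ⟨-1 - e.2.2, fun m p hp => by have := h _ hp; simp only at this; omega⟩

theorem IsBelow.slice2_fst (h : IsBelow (fun e => e.1) Δ) (e : ℤ × ℤ × ℤ) :
    ∃ B : ℤ, ∀ m p, 𝓕.slice2 Δ e m p ≠ 0 → B ≤ p.1 :=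
  ⟨-1 - e.1, fun m p hp => by
    obtain ⟨j, hj⟩ := exists_ne_zero_of_finsum hp
    have h1 := iotaPow_supp 𝓕.inv_supp 𝓕.inv_one (left_ne_zero_of_mul hj)
    have h2 := h _ (right_ne_zero_of_mul hj)
    simp only at h2
    omega⟩

theorem IsBelow.slice2_snd (h : IsBelow (fun e => e.2.1) Δ) (e : ℤ × ℤ × ℤ) :
    ∃ B : ℤ, ∀ m p, 𝓕.slice2 Δ e m p ≠ 0 → B ≤ p.2 :=
  ⟨-1 - e.2.1, fun m p hp => by
    obtain ⟨j, hj⟩ := exists_ne_zero_of_finsum hp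
    have h2 := h _ (right_ne_zero_of_mul hj)
    simp only at h2
    omega⟩

end FormalGroupLaw

namespace VertexFAlgebra

open FormalGroupLaw

variable {V : Type*} [AddCommGroup V] [Module R V] (A : VertexFAlgebra R 𝓕 V)

/-- The coefficients of `Y(Y(a, z)b, w)c`. -/
def iterate (a b c : V) (k l : ℤ) : V := A.Y (A.Y a b k) c l

theorem isIterLaurent_iterate (a b c : V) : IsIterLaurent (A.iterate a b c) := by
  refine ⟨?_, fun n => A.Y_laurent _ _⟩
  obtain ⟨B, hB⟩ := A.Y_laurent a b
  refine ⟨B, fun n hn => ?_⟩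
  funext l
  simp [iterate, hB n hn]

theorem isIterLaurent_prod (a b c : V) : IsIterLaurent fun n => A.Y a (A.Y b c n) := by
  refine ⟨?_, fun n => A.Y_laurent _ _⟩
  obtain ⟨B, hB⟩ := A.Y_laurent b c
  refine ⟨B, fun n hn => ?_⟩
  simp only [hB n hn, map_zero]

theorem iterate_eq (a b c : V) (k l : ℤ) : A.iterate a b c k l =
    ∑ᶠ q : ℕ × ℤ, ∑ᶠ n : ℤ, (iotaPow 𝓕.inv q.2 (k - q.1) * izwPow 𝓕.F n l q.1) •
      A.iterate b a c q.2 n := by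
  have hfin : (fun q : ℕ × ℤ => iotaPow 𝓕.inv q.2 (k - q.1) •
      A.S q.1 (A.Y b a q.2)).HasFiniteSupport := by
    obtain ⟨B, hB⟩ := A.Y_laurent b a
    refine ((Set.finite_Iic (k - B).toNat).prod (Set.finite_Icc B k)).subset ?_
    rintro ⟨i, j⟩ hij
    have h1 := iotaPow_supp 𝓕.inv_supp 𝓕.inv_one (left_ne_zero_of_smul hij)
    have h2 : B ≤ j := by
      by_contra hc
      exact right_ne_zero_of_smul hij (by simp [hB j (by omega)])
    simp only [Set.mem_prod, Set.mem_Icc, Set.mem_Iic]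
    simp only at h1
    omega
  let L : V →ₗ[R] V := (LinearMap.proj l).comp (A.Y.flip c)
  change L (A.Y a b k) = _
  rw [A.skew, map_finsum L hfin]
  refine finsum_congr fun q => ?_
  rw [map_smul]
  change _ • A.Y (A.S q.1 (A.Y b a q.2)) c l = _
  rw [A.translation, substF, smul_finsum_of_ne_zero]
  · refine finsum_congr fun n => ?_
    rw [smul_smul, iterate]
  · intro _
    obtain ⟨B, hB⟩ := A.Y_laurent (A.Y b a q.2) c
    refine (Set.finite_Icc B (l + q.1)).subset fun n hn => ?_
    have h1 := 𝓕.isUnitFst_F.izwPow_supp (left_ne_zero_of_smul hn)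
    have h2 : B ≤ n := by
      by_contra hc
      exact right_ne_zero_of_smul hn (hB n (by omega))
    exact ⟨h2, h1.2⟩

theorem finsum_izwPow_mul {Δ : ℤ × ℤ × ℤ → R} (h : 𝓕.IsDelta Δ) (hb : IsBelow (fun e => e.1) Δ)
    (e0 e1 e2 n : ℤ) : Δ (e0, e1 - n, e2) =
      ∑ᶠ p : ℤ × ℕ, izwPow 𝓕.F n p.1 p.2 * Δ (e0 - p.2, e1, e2 - p.1) := by
  have h1 := (h.isRel_slice1 (e0, e1, e2)).zpow_swap (hb.slice1_fst _) 0 n 0 0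
  rw [finsum_eq_of_range (g := fun p : ℤ × ℕ => (p.1, (p.2 : ℤ)))] at h1
  · simpa [slice1, sub_eq_add_neg] using h1
  · rintro ⟨a, b⟩ ⟨c, d⟩ h
    simpa using h
  · rintro ⟨a, b⟩ hx
    have := (𝓕.isUnitFst_F.izwPow_supp (left_ne_zero_of_mul hx)).1
    exact ⟨(a, b.toNat), by simpa using this⟩

/-- Skew symmetry turns `z₀` into `ι z₀` in front of a delta distribution. -/
theorem conv_iterate_skew {Δ : ℤ × ℤ × ℤ → R} (h : 𝓕.IsDelta Δ) (hb : IsBelow (fun e => e.1) Δ)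
    (a b c : V) (e : ℤ × ℤ × ℤ) (m : ℤ) :
    ∑ᶠ q : ℤ × ℤ, Δ (e.1 - q.1, e.2.1, e.2.2 - m - q.2) • A.iterate a b c q.1 q.2 =
      conv (𝓕.slice2 Δ e m) (uncurry (A.iterate b a c)) 0 := by
  obtain ⟨B, hB, hK⟩ := (A.isIterLaurent_iterate b a c).exists_bound
  obtain ⟨K, hK⟩ := hK (e.1 + 1)
  let T : ((ℤ × ℤ) × ℤ) × (ℤ × ℕ) → V := fun t =>
    (iotaPow 𝓕.inv t.1.1.1 t.1.2 * (izwPow 𝓕.F t.1.1.2 t.2.1 t.2.2 *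
      Δ (e.1 - t.1.2 - t.2.2, e.2.1, e.2.2 - m - t.2.1))) • A.iterate b a c t.1.1.1 t.1.1.2
  have hT : ∀ k n j s i, T (((k, n), j), (s, i)) ≠ 0 → B ≤ k ∧ k ≤ j ∧ n ≤ s + i ∧
      -1 ≤ e.1 - j - i ∧ K ≤ n ∧ -1 ≤ e.1 - j - i + e.2.1 + (e.2.2 - m - s) := by
    intro k n j s i ht
    have h1 := left_ne_zero_of_smul ht
    have h2 := right_ne_zero_of_smul ht
    have h3 := right_ne_zero_of_mul h1
    have h4 := iotaPow_supp 𝓕.inv_supp 𝓕.inv_one (left_ne_zero_of_mul h1)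
    have h5 := 𝓕.isUnitFst_F.izwPow_supp (left_ne_zero_of_mul h3)
    have h6 := hb _ (right_ne_zero_of_mul h3)
    have h7 := h.deg _ (right_ne_zero_of_mul h3)
    have h8 := hB _ _ h2
    simp only at h4 h5 h6 h7 h8
    exact ⟨h8, h4, h5.2, h6, hK _ _ h2 (by simp only; omega), h7⟩
  have hfin : {t | T t ≠ 0}.Finite := by
    obtain ⟨Z, hZ, hl⟩ := exists_forall_neg_le [B, K, -(e.1 + 1), -(e.1 + e.2.1 + e.2.2 - m + 1)]
    simp only [List.mem_cons, List.not_mem_nil, or_false, forall_eq_or_imp, forall_eq] at hl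
    have hI := Set.finite_Icc (-(5 * Z)) (5 * Z)
    refine (((hI.prod hI).prod hI).prod (hI.prod (Set.finite_Iic (5 * Z).toNat))).subset ?_
    rintro ⟨⟨⟨k, n⟩, j⟩, s, i⟩ ht
    have := hT k n j s i ht
    simp only [Set.mem_prod, Set.mem_Icc, Set.mem_Iic]
    omega
  have h1 : ∑ᶠ q : ℤ × ℤ, Δ (e.1 - q.1, e.2.1, e.2.2 - m - q.2) • A.iterate a b c q.1 q.2 =
      ∑ᶠ t, T t := by
    let σ : ((ℤ × ℤ) × (ℕ × ℤ)) × ℤ ≃ ((ℤ × ℤ) × ℤ) × (ℤ × ℕ) :=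
      { toFun := fun t => (((t.1.2.2, t.2), t.1.1.1 - t.1.2.1), (t.1.1.2, t.1.2.1))
        invFun := fun t => (((t.1.2 + t.2.2, t.2.1), (t.2.2, t.1.1.1)), t.1.1.2)
        left_inv := fun t => by simp
        right_inv := fun t => by simp }
    rw [← finsum_finsum_finsum_eq σ T hfin]
    refine finsum_congr fun p => ?_
    rw [iterate_eq, smul_finsum_of_ne_zero]
    · refine finsum_congr fun q => ?_
      rw [smul_finsum_of_ne_zero]
      · refine finsum_congr fun n => ?_
        simp only [T, σ, Equiv.coe_fn_mk, smul_smul]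
        rw [show e.1 - (p.1 - q.1) - q.1 = e.1 - p.1 by ring]
        congr 1
        ring
      · intro _
        obtain ⟨C, hC⟩ := A.Y_laurent (A.Y b a q.2) c
        refine (Set.finite_Icc C (p.2 + q.1)).subset fun n hn => ?_
        have h1 := 𝓕.isUnitFst_F.izwPow_supp (right_ne_zero_of_mul (left_ne_zero_of_smul hn))
        have h2 : C ≤ n := by
          by_contra hc
          exact right_ne_zero_of_smul hn (hC n (by omega))
        exact ⟨h2, h1.2⟩
    · intro _
      refine ((Set.finite_Iic (p.1 - B).toNat).prod (Set.finite_Icc B p.1)).subset ?_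
      rintro ⟨i, j⟩ hij
      obtain ⟨n, hn⟩ := exists_ne_zero_of_finsum hij
      have h1 := iotaPow_supp 𝓕.inv_supp 𝓕.inv_one (left_ne_zero_of_mul (left_ne_zero_of_smul hn))
      have h2 := hB _ _ (right_ne_zero_of_smul hn)
      simp only [Set.mem_prod, Set.mem_Icc, Set.mem_Iic]
      simp only at h1 h2
      omega
  have h2 : conv (𝓕.slice2 Δ e m) (uncurry (A.iterate b a c)) 0 = ∑ᶠ t, T t := by
    rw [← finsum_finsum_finsum_eq (Equiv.refl _) T hfin, conv_apply_zero]
    refine finsum_congr fun p => ?_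
    have hsup : ∀ j : ℤ, (fun q : ℤ × ℕ => izwPow 𝓕.F p.2 q.1 q.2 *
        Δ (e.1 - j - q.2, e.2.1, e.2.2 - m - q.1)).HasFiniteSupport := by
      intro j
      refine ((Set.finite_Icc (p.2 - (e.1 - j + 1)) (1 + e.1 - j + e.2.1 + e.2.2 - m)).prod
        (Set.finite_Iic (e.1 - j + 1).toNat)).subset ?_
      rintro ⟨s, i⟩ hq
      have h1 := 𝓕.isUnitFst_F.izwPow_supp (left_ne_zero_of_mul hq)
      have h2 := hb _ (right_ne_zero_of_mul hq)
      have h3 := h.deg _ (right_ne_zero_of_mul hq)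
      simp only [Set.mem_prod, Set.mem_Icc, Set.mem_Iic]
      simp only at h1 h2 h3
      omega
    rw [slice2, finsum_smul_of_ne_zero]
    · refine finsum_congr fun j => ?_
      simp only [Prod.fst_neg, Prod.snd_neg, neg_neg, ← sub_eq_add_neg]
      rw [finsum_izwPow_mul h hb, mul_finsum', finsum_smul_of_ne_zero]
      · rfl
      · exact fun _ => (hsup j).subset fun q hq => right_ne_zero_of_mul hq
      · exact hsup j
    · intro _
      refine (Set.finite_Icc p.1 (-p.2 + (e.1 + e.2.1 + e.2.2 + 1) - m)).subset fun j hj => ?_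
      have := slice2_supp h hj
      simp only [Prod.fst_neg, Prod.snd_neg] at this
      simp only [Set.mem_Icc]
      omega
  rw [h1, h2]

theorem exists_bound_mulS2 (a b c : V) {N : ℕ}
    (hN : mulS2 (pow2 𝓕.F N) (A.iterate a b c) =
      mulS2 (pow2 𝓕.F N) (substFProd 𝓕 (fun v => A.Y a v) (A.Y b c))) :
    ∃ L : ℤ, ∀ p, conv (uncurry (pow2 𝓕.F N)) (uncurry (A.iterate a b c)) p ≠ 0 →
      L ≤ p.1 ∧ L ≤ p.2 := by
  obtain ⟨B, hB⟩ := (A.isIterLaurent_iterate a b c).isSemi_fst.exists_bound_conv (.inl rfl)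
    (𝓕.pow2_F_supp (N := N))
  obtain ⟨C, hC⟩ := ((A.isIterLaurent_prod a b c).isSemi_substFProd 𝓕).exists_bound_conv (.inr rfl)
    (𝓕.pow2_F_supp (N := N))
  refine ⟨min B C, fun p hp => ⟨(min_le_left _ _).trans (hB p hp), (min_le_right _ _).trans ?_⟩⟩
  refine hC p fun h => hp ?_
  exact (congrFun (congrFun hN p.1) p.2).trans h

/-- Both terms with `F(z₀, z₂) = z₁` come from a series that is bounded below. -/
theorem exists_ext02 (a b c : V) : ∃ (N L : ℤ) (X : ℤ × ℤ × ℤ → V),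
    (∀ p, X p ≠ 0 → L ≤ p.1 ∧ L ≤ p.2.1 ∧ L ≤ p.2.2) ∧
    (∀ Δ : ℤ × ℤ × ℤ → R, 𝓕.IsDelta Δ → IsBelow (fun e => e.1) Δ → ∀ e0 e1 e2,
      ∑ᶠ q : ℤ × ℤ, Δ (e0 - q.1, e1, e2 - q.2) • A.Y (A.Y a b q.1) c q.2 =
        conv Δ X (e0, e1 + N, e2)) ∧
    ∀ Δ : ℤ × ℤ × ℤ → R, 𝓕.IsDelta Δ → IsBelow (fun e => e.2.2) Δ → ∀ e0 e1 e2,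
      ∑ᶠ q : ℤ × ℤ, Δ (e0, e1 - q.1, e2 - q.2) • A.Y a (A.Y b c q.2) q.1 =
        conv Δ X (e0, e1 + N, e2) := by
  obtain ⟨N, hN⟩ := A.weak_assoc a b c
  obtain ⟨L, hL⟩ := A.exists_bound_mulS2 a b c hN
  have hN' : conv (uncurry (pow2 𝓕.F N)) (uncurry (A.iterate a b c)) = conv (uncurry (pow2 𝓕.F N))
      (uncurry (substFProd 𝓕 (fun v => A.Y a v) (A.Y b c))) :=
    funext fun p => congrFun (congrFun hN p.1) p.2
  refine ⟨N, min L 0, ext02 (conv (uncurry (pow2 𝓕.F N)) (uncurry (A.iterate a b c))), ?_, ?_, ?_⟩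
  · intro p hp
    rw [ext02] at hp
    split_ifs at hp with h
    · have := hL _ hp
      simp only at this
      omega
    · exact absurd rfl hp
  · intro Δ h hb e0 e1 e2
    rw [← conv_slice1_zero, ← (h.isRel_slice1 _).conv_eq (.inl rfl) (hb.slice1_fst _)
      (A.isIterLaurent_iterate a b c).isSemi_fst, conv_apply_zero]
    refine finsum_congr fun q => ?_
    simp [slice1, iterate, uncurry, sub_eq_add_neg]
  · intro Δ h hb e0 e1 e2
    rw [← conv_slice1_zero, hN', ← (h.isRel_slice1 _).conv_eq (.inr rfl) (hb.slice1_snd _)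
      ((A.isIterLaurent_prod a b c).isSemi_substFProd 𝓕),
      (h.isRel_slice1 _).conv_substFProd (hb.slice1_snd _) (A.isIterLaurent_prod a b c)]
    refine finsum_congr fun q => ?_
    have hq : e1 + -q.1 = e1 + N + (-q.1 + -N) := by ring
    simp [slice1, sub_eq_add_neg, hq]

/-- Both terms with `F(z₁, ι z₀) = z₂` come from a series that is bounded below. -/
theorem exists_ext01 (a b c : V) : ∃ (N L : ℤ) (X : ℤ × ℤ × ℤ → V),
    (∀ p, X p ≠ 0 → L ≤ p.1 ∧ L ≤ p.2.1 ∧ L ≤ p.2.2) ∧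
    (∀ Δ : ℤ × ℤ × ℤ → R, 𝓕.IsDelta Δ → IsBelow (fun e => e.1) Δ → ∀ e0 e1 e2,
      ∑ᶠ q : ℤ × ℤ, Δ (e0 - q.1, e1, e2 - q.2) • A.Y (A.Y a b q.1) c q.2 =
        conv Δ X (e0, e1, e2 + N)) ∧
    ∀ Δ : ℤ × ℤ × ℤ → R, 𝓕.IsDelta Δ → IsBelow (fun e => e.2.1) Δ → ∀ e0 e1 e2,
      ∑ᶠ q : ℤ × ℤ, Δ (e0, e1 - q.1, e2 - q.2) • A.Y b (A.Y a c q.1) q.2 =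
        conv Δ X (e0, e1, e2 + N) := by
  obtain ⟨N, hN⟩ := A.weak_assoc b a c
  obtain ⟨L, hL⟩ := A.exists_bound_mulS2 b a c hN
  have hN' : conv (uncurry (pow2 𝓕.F N)) (uncurry (A.iterate b a c)) = conv (uncurry (pow2 𝓕.F N))
      (uncurry (substFProd 𝓕 (fun v => A.Y b v) (A.Y a c))) :=
    funext fun p => congrFun (congrFun hN p.1) p.2
  refine ⟨N, min L 0,
    ext01 (𝓕.substInv (conv (uncurry (pow2 𝓕.F N)) (uncurry (A.iterate b a c)))), ?_, ?_, ?_⟩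
  · intro p hp
    rw [ext01] at hp
    split_ifs at hp with h
    · obtain ⟨k, hk⟩ := exists_ne_zero_of_finsum hp
      have h1 := iotaPow_supp 𝓕.inv_supp 𝓕.inv_one (left_ne_zero_of_smul hk)
      have h2 := hL _ (right_ne_zero_of_smul hk)
      simp only at h1 h2
      omega
    · exact absurd rfl hp
  · intro Δ h hb e0 e1 e2
    rw [← conv_slice2_zero h _ hL, ← (h.isRel_slice2 _).conv_eq (.inl rfl) (hb.slice2_fst _)
      (A.isIterLaurent_iterate b a c).isSemi_fst, ← A.conv_iterate_skew h hb]
    simp [iterate]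
  · intro Δ h hb e0 e1 e2
    rw [← conv_slice2_zero h _ hL, hN', ← (h.isRel_slice2 _).conv_eq (.inr rfl) (hb.slice2_snd _)
      ((A.isIterLaurent_prod b a c).isSemi_substFProd 𝓕),
      (h.isRel_slice2 _).conv_substFProd (hb.slice2_snd _) (A.isIterLaurent_prod b a c),
      ← finsum_comp_equiv (Equiv.prodComm ℤ ℤ)]
    refine finsum_congr fun q => ?_
    have hq : e2 + -q.1 = e2 + N + (-q.1 + -N) := by ring
    simp [slice2_zero, sub_eq_add_neg, hq]

end VertexFAlgebra

theorem conv_comp_sub {G : Type*} [AddCommGroup G] (f : G → R) (X : G → M) (v e : G) :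
    conv f (fun p => X (p - v)) e = conv f X (e - v) :=
  finsum_congr fun p => by rw [sub_right_comm]

namespace FormalGroupLaw

theorem isDelta_E2_sub_E1 : 𝓕.IsDelta (𝓕.E2 - 𝓕.E1) :=
  𝓕.isInv_E2.isDelta 𝓕 𝓕.isInv_E1 (fun e he => (bddBy_cone01.1 𝓕.isInv_E2.bddBy e he).2.2)
    fun e he => (bddBy_cone02.1 𝓕.isInv_E1.bddBy e he).2.2

theorem isDelta_E0_sub_E1 : 𝓕.IsDelta (𝓕.E0 - 𝓕.E1) :=
  𝓕.isInv_E0.isDelta 𝓕 𝓕.isInv_E1 (fun e he => (bddBy_cone12.1 𝓕.isInv_E0.bddBy e he).2.2)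
    fun e he => (bddBy_cone02.1 𝓕.isInv_E1.bddBy e he).2.2

theorem isDelta_E0_sub_E2 : 𝓕.IsDelta (𝓕.E0 - 𝓕.E2) :=
  𝓕.isInv_E0.isDelta 𝓕 𝓕.isInv_E2 (fun e he => (bddBy_cone12.1 𝓕.isInv_E0.bddBy e he).2.2)
    fun e he => (bddBy_cone01.1 𝓕.isInv_E2.bddBy e he).2.2

theorem isBelow_E2_sub_E1 : IsBelow (fun e => e.1) (𝓕.E2 - 𝓕.E1) :=
  .sub (fun e he => (bddBy_cone01.1 𝓕.isInv_E2.bddBy e he).1)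
    fun e he => (bddBy_cone02.1 𝓕.isInv_E1.bddBy e he).1

theorem isBelow_E0_sub_E1 : IsBelow (fun e => e.2.2) (𝓕.E0 - 𝓕.E1) :=
  .sub (fun e he => (bddBy_cone12.1 𝓕.isInv_E0.bddBy e he).2.1)
    fun e he => (bddBy_cone02.1 𝓕.isInv_E1.bddBy e he).2.1

theorem isBelow_E0_sub_E2 : IsBelow (fun e => e.2.1) (𝓕.E0 - 𝓕.E2) :=
  .sub (fun e he => (bddBy_cone12.1 𝓕.isInv_E0.bddBy e he).1)
    fun e he => (bddBy_cone01.1 𝓕.isInv_E2.bddBy e he).2.1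

theorem finite_conv_sub {u u' : ℤ × ℤ × ℤ →+ (Fin 3 → ℤ)} {E E' : ℤ × ℤ × ℤ → R}
    (h : 𝓕.IsInv u E) (h' : 𝓕.IsInv u' E') {X : ℤ × ℤ × ℤ → M} {L L' : ℤ} (hX : BddBy u L X)
    (hX' : BddBy u' L' X) (e : ℤ × ℤ × ℤ) :
    (fun p => (E - E') p • X (e - p)).HasFiniteSupport := by
  have := (h.bddBy.finite_conv h.isCone.inj hX e).union (h'.bddBy.finite_conv h'.isCone.inj hX' e)
  refine this.subset fun p hp => ?_
  by_contra hc
  simp only [Set.mem_union, mem_support, not_or, not_not] at hc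
  refine hp ?_
  simp only [Pi.sub_apply, sub_smul, hc.1, hc.2, sub_zero]

theorem bddBy_of_le {X : ℤ × ℤ × ℤ → M} {L : ℤ}
    (hX : ∀ e, X e ≠ 0 → L ≤ e.1 ∧ L ≤ e.2.1 ∧ L ≤ e.2.2) :
    ∃ K, BddBy cone01 K X ∧ BddBy cone02 K X ∧ BddBy cone12 K X := by
  refine ⟨min L (3 * L), bddBy_cone01.2 fun e he => ?_, bddBy_cone02.2 fun e he => ?_,
    bddBy_cone12.2 fun e he => ?_⟩ <;>
  · have := hX e he
    omega

theorem jacobi_of_conv_eq {X Q : ℤ × ℤ × ℤ → M} {L K : ℤ} (v w : ℤ × ℤ × ℤ)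
    (hX : ∀ e, X e ≠ 0 → L ≤ e.1 ∧ L ≤ e.2.1 ∧ L ≤ e.2.2)
    (hQ : ∀ e, Q e ≠ 0 → K ≤ e.1 ∧ K ≤ e.2.1 ∧ K ≤ e.2.2)
    (h : ∀ e, conv (𝓕.E2 - 𝓕.E1) X (e + v) = conv (𝓕.E2 - 𝓕.E1) Q (e + w)) (e : ℤ × ℤ × ℤ) :
    conv (𝓕.E2 - 𝓕.E1) X (e + v) =
      conv (𝓕.E0 - 𝓕.E1) X (e + v) - conv (𝓕.E0 - 𝓕.E2) Q (e + w) := by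
  obtain ⟨K₁, hX₁, hX₂, hX₃⟩ := bddBy_of_le hX
  set X' : ℤ × ℤ × ℤ → M := fun p => X (p - w) with hX'
  set Q' : ℤ × ℤ × ℤ → M := fun p => Q (p - v) with hQ'
  obtain ⟨K₂, hX'₁, hX'₂, hX'₃⟩ := bddBy_of_le (X := X')
    (L := L + min w.1 (min w.2.1 w.2.2)) fun e he => by
      have := hX _ he
      simp only [Prod.fst_sub, Prod.snd_sub] at this
      omega
  obtain ⟨K₃, hQ'₁, hQ'₂, hQ'₃⟩ := bddBy_of_le (X := Q')
    (L := K + min v.1 (min v.2.1 v.2.2)) fun e he => by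
      have := hQ _ he
      simp only [Prod.fst_sub, Prod.snd_sub] at this
      omega
  have hΘ : ∀ e, (Q' - X') e ≠ 0 → min (L + min w.1 (min w.2.1 w.2.2))
      (K + min v.1 (min v.2.1 v.2.2)) ≤ e.1 ∧ min (L + min w.1 (min w.2.1 w.2.2))
      (K + min v.1 (min v.2.1 v.2.2)) ≤ e.2.1 ∧ min (L + min w.1 (min w.2.1 w.2.2))
      (K + min v.1 (min v.2.1 v.2.2)) ≤ e.2.2 := by
    intro e he
    by_cases h1 : Q' e = 0
    · have h2 : X' e ≠ 0 := fun h2 => he (by simp [h1, h2])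
      have := hX _ h2
      simp only [Prod.fst_sub, Prod.snd_sub] at this
      omega
    · have := hQ _ h1
      simp only [Prod.fst_sub, Prod.snd_sub] at this
      omega
  have h21 : conv (𝓕.E2 - 𝓕.E1) (Q' - X') = 0 := by
    funext e
    rw [conv_sub_right_apply (finite_conv_sub 𝓕.isInv_E2 𝓕.isInv_E1 hQ'₁ hQ'₂ e)
      (finite_conv_sub 𝓕.isInv_E2 𝓕.isInv_E1 hX'₁ hX'₂ e), hX', hQ', conv_comp_sub, conv_comp_sub]
    have := h (e - v - w)
    rw [show e - v - w + v = e - w by abel, show e - v - w + w = e - v by abel] at this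
    rw [this, sub_self, Pi.zero_apply]
  have h02 := congrFun (𝓕.conv_E0_sub_E2_eq_zero hΘ h21) (e + v + w)
  rw [conv_sub_right_apply (finite_conv_sub 𝓕.isInv_E0 𝓕.isInv_E2 hQ'₃ hQ'₁ _)
    (finite_conv_sub 𝓕.isInv_E0 𝓕.isInv_E2 hX'₃ hX'₁ _), hX', hQ', conv_comp_sub, conv_comp_sub,
    Pi.zero_apply, sub_eq_zero, add_sub_cancel_right, add_right_comm, add_sub_cancel_right] at h02
  rw [h02, ← sub_sub_sub_cancel_right 𝓕.E0 𝓕.E2 𝓕.E1, conv_sub_left_apply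
    (finite_conv_sub 𝓕.isInv_E0 𝓕.isInv_E1 hX₃ hX₂ _)
    (finite_conv_sub 𝓕.isInv_E2 𝓕.isInv_E1 hX₁ hX₂ _), sub_sub_cancel]

end FormalGroupLaw

end Jacobi

/-- the `F`-Jacobi identity for a vertex `F`-algebra, as an identity of
bilateral series in `V⟦z0^{±1}, z1^{±1}, z2^{±1}⟧` (coefficient of `z0^e0 z1^e1 z2^e2`,
applied to an arbitrary state `c`):
`i_{z1,z0} z2⁻¹δ_F(F(z1,ιz0)/z2)·Y(Y(a,z0)b,z2)c`
`= i_{z1,z2} z0⁻¹δ_F(F(z1,ιz2)/z0)·Y(a,z1)Y(b,z2)c`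
`- i_{z2,z1} z0⁻¹δ_F(F(z1,ιz2)/z0)·Y(b,z2)Y(a,z1)c`. -/
theorem vertexF_jacobi_identity (R : Type*) [CommRing R] (𝓕 : FormalGroupLaw R)
    (V : Type*) [AddCommGroup V] [Module R V] (A : VertexFAlgebra R 𝓕 V)
    (a b : V) : ∀ (c : V) (e0 e1 e2 : ℤ),
    (∑ᶠ p : ℤ × ℤ, (∑ᶠ m : ℤ, 𝓕.delta (e2 - p.2) m * izwPow 𝓕.Fzi m e1 (e0 - p.1))
        • A.Y (A.Y a b p.1) c p.2)
    = (∑ᶠ p : ℤ × ℤ, (∑ᶠ m : ℤ, 𝓕.delta e0 m * izwPow 𝓕.Fzi m (e1 - p.1) (e2 - p.2))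
        • A.Y a (A.Y b c p.2) p.1)
    - ∑ᶠ p : ℤ × ℤ, (∑ᶠ m : ℤ, 𝓕.delta e0 m * iwzPowNeg 𝓕.Fzi m (e1 - p.1) (e2 - p.2))
        • A.Y b (A.Y a c p.1) p.2 := by
  intro c e0 e1 e2
  obtain ⟨N, L, X, hX, h0, h1⟩ := A.exists_ext02 a b c
  obtain ⟨K, L', Q, hQ, h0', h2⟩ := A.exists_ext01 a b c
  have hA : ∀ p : ℤ × ℤ, (∑ᶠ m : ℤ, 𝓕.delta (e2 - p.2) m * izwPow 𝓕.Fzi m e1 (e0 - p.1)) =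
      (𝓕.E2 - 𝓕.E1) (e0 - p.1, e1, e2 - p.2) := fun p => 𝓕.delta_izw_swap _ _ _
  have hB : ∀ p : ℤ × ℤ,
      (∑ᶠ m : ℤ, 𝓕.delta e0 m * izwPow 𝓕.Fzi m (e1 - p.1) (e2 - p.2)) =
        (𝓕.E0 - 𝓕.E1) (e0, e1 - p.1, e2 - p.2) := fun p => 𝓕.delta_izw _ _ _
  have hC : ∀ p : ℤ × ℤ,
      (∑ᶠ m : ℤ, 𝓕.delta e0 m * iwzPowNeg 𝓕.Fzi m (e1 - p.1) (e2 - p.2)) =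
        (𝓕.E0 - 𝓕.E2) (e0, e1 - p.1, e2 - p.2) := fun p => 𝓕.delta_iwz _ _ _
  simp only [hA, hB, hC]
  have hXQ : ∀ e, conv (𝓕.E2 - 𝓕.E1) X (e + (0, N, 0)) = conv (𝓕.E2 - 𝓕.E1) Q (e + (0, 0, K)) := by
    rintro ⟨x, y, z⟩
    have h3 := h0 _ 𝓕.isDelta_E2_sub_E1 𝓕.isBelow_E2_sub_E1 x y z
    rw [h0' _ 𝓕.isDelta_E2_sub_E1 𝓕.isBelow_E2_sub_E1] at h3
    simpa using h3.symm
  have key := 𝓕.jacobi_of_conv_eq (0, N, 0) (0, 0, K) hX hQ hXQ (e0, e1, e2)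
  simp only [Prod.mk_add_mk, add_zero] at key
  rw [h0 _ 𝓕.isDelta_E2_sub_E1 𝓕.isBelow_E2_sub_E1, h1 _ 𝓕.isDelta_E0_sub_E1 𝓕.isBelow_E0_sub_E1,
    h2 _ 𝓕.isDelta_E0_sub_E2 𝓕.isBelow_E0_sub_E2, key]
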